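/- arXiv:1407.4720 — 3 statements merged into one kernel-verified Lean document; each statement's English description precedes it below -/
import Mathlib

section
/- For all but finitely many pairs of integers (k,n) with 1 < k < n, the following holds: if A is a set of n positive integers with d_k(A) ≥ C(n-1,k), then A is a k-anti-pencil. Formally: the set of pairs (k,n) with 1 < k < n for which there exists a set A of n positive integers with d_k(A) ≥ C(n-1,k) that is not a k-anti-pencil is finite. -/
/-- `B` is an `s`-divisor of `A` if `∑ B` divides `s · ∑ A`. -/
def IsSDivisor (s : ℕ) (A B : Finset ℕ) : Prop :=
  B.sum id ∣ s * A.sum id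

/-- `d^s_k(A)`: the number of `k`-element subsets of `A` that are `s`-divisors of `A`. -/
def dsk (s k : ℕ) (A : Finset ℕ) : ℕ :=
  ((A.powersetCard k).filter (fun B => B.sum id ∣ s * A.sum id)).card

/-- `A` is a `(k,s)`-anti-pencil if the `k`-element subsets of `A` that are `s`-divisors
of `A` are exactly the `k`-element subsets of `A \ {max A}`. -/
def IsAntiPencil (s k : ℕ) (A : Finset ℕ) : Prop :=
  ∃ h : A.Nonempty,
    (A.powersetCard k).filter (fun B => B.sum id ∣ s * A.sum id)
      = (A.erase (A.max' h)).powersetCard k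

section

open Finset

/-- Extension counting. -/
lemma ext_count (U : Finset ℕ) (r : ℕ) (F : Finset (Finset ℕ)) (hF : F ⊆ U.powersetCard (r+1))
    (t : ℝ) (ht : ∀ D ∈ U.powersetCard r, ((#{y ∈ U \ D | insert y D ∈ F} : ℕ) : ℝ) ≤ t)
    (hr : r ≤ #U) :
    (#F : ℝ) * ((#U : ℝ) - r) ≤ t * ((#U).choose (r+1) : ℝ) := by
  have ht0 : 0 ≤ t := by
    obtain ⟨D, hD⟩ := powersetCard_nonempty.2 hr
    exact le_trans (Nat.cast_nonneg _) (ht D hD)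
  have h1 : #F * (r+1) ≤ #(U.powersetCard r) * ⌊t⌋₊ := by
    apply card_mul_le_card_mul (fun (B D : Finset ℕ) => D ⊆ B)
    · intro B hB
      have hB' := mem_powersetCard.1 (hF hB)
      calc r + 1 = #(B.powersetCard r) := by rw [card_powersetCard, hB'.2]; simp
        _ ≤ _ := by
          apply card_le_card
          intro D hD
          have := mem_powersetCard.1 hD
          simp only [bipartiteAbove, mem_filter, mem_powersetCard]
          exact ⟨⟨this.1.trans hB'.1, this.2⟩, this.1⟩
    · intro D hD
      have hD' := mem_powersetCard.1 hD
      calc _ ≤ #({y ∈ U \ D | insert y D ∈ F}.image (fun y => insert y D)) := by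
            apply card_le_card
            intro B hB
            simp only [bipartiteBelow, mem_filter] at hB
            have hB' := mem_powersetCard.1 (hF hB.1)
            have hc : #(B \ D) = 1 := by
              rw [card_sdiff_of_subset hB.2]; omega
            obtain ⟨y, hy⟩ := card_eq_one.1 hc
            have hyB : y ∈ B \ D := by rw [hy]; simp
            have he : insert y D = B := by
              rw [← sdiff_union_of_subset hB.2, hy]; rfl
            simp only [mem_image, mem_filter, mem_sdiff] at hyB ⊢
            exact ⟨y, ⟨⟨hB'.1 hyB.1, hyB.2⟩, he ▸ hB.1⟩, he⟩
        _ ≤ _ := card_image_le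
        _ ≤ _ := Nat.le_floor (ht D hD)
  rw [card_powersetCard] at h1
  have h2 : (#F : ℝ) * (r+1) ≤ ((#U).choose r : ℝ) * t := by
    calc (#F : ℝ) * (r+1) ≤ ((#U).choose r : ℝ) * ⌊t⌋₊ := by exact_mod_cast h1
      _ ≤ _ := by gcongr; exact Nat.floor_le ht0
  have h3 := Nat.choose_succ_right_eq (#U) r
  have h4 : ((#U).choose (r+1) : ℝ) * (r+1) = (#U).choose r * ((#U : ℝ) - r) := by
    rw [← Nat.cast_sub hr]; exact_mod_cast h3
  have h5 : (0:ℝ) ≤ (#U : ℝ) - r := by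
    rw [← Nat.cast_sub hr]; positivity
  have h6 : (0:ℝ) < r + 1 := by positivity
  have : (#F : ℝ) * ((#U : ℝ) - r) * (r+1) ≤ t * ((#U).choose (r+1) : ℝ) * (r+1) := by
    calc _ = ((#F : ℝ) * (r+1)) * ((#U : ℝ) - r) := by ring
      _ ≤ (((#U).choose r : ℝ) * t) * ((#U : ℝ) - r) := by gcongr
      _ = t * (((#U).choose r : ℝ) * ((#U : ℝ) - r)) := by ring
      _ = _ := by rw [← h4]; ring
  exact le_of_mul_le_mul_right this h6

/-- Counting divisors in a range of quotients. -/
lemma count_div (Y : Finset ℕ) (σ S : ℕ) (hS : 0 < S) (lo hi : ℝ) (hlo : 0 ≤ lo) (hhi : lo ≤ hi + 1)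
    (h : ∀ y ∈ Y, σ + y ∣ S ∧ lo * ((σ + y : ℕ) : ℝ) ≤ S ∧ (S : ℝ) ≤ hi * ((σ + y : ℕ) : ℝ)) :
    (#Y : ℝ) ≤ hi - lo + 1 := by
  rcases Y.eq_empty_or_nonempty with rfl | ⟨y0, hy0⟩
  · simp; linarith
  have key : ∀ y ∈ Y, lo ≤ ((S / (σ + y) : ℕ) : ℝ) ∧ ((S / (σ + y) : ℕ) : ℝ) ≤ hi := by
    intro y hy
    obtain ⟨h1, h2, h3⟩ := h y hy
    have hp : 0 < σ + y := Nat.pos_of_dvd_of_pos h1 hS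
    have hp' : (0:ℝ) < ((σ + y : ℕ) : ℝ) := by exact_mod_cast hp
    rw [Nat.cast_div h1 hp'.ne']
    exact ⟨(le_div_iff₀ hp').2 h2, (div_le_iff₀ hp').2 h3⟩
  have hhi0 : 0 ≤ hi := le_trans (Nat.cast_nonneg _) (key y0 hy0).2
  have hc : #Y ≤ #(Finset.Icc ⌈lo⌉₊ ⌊hi⌋₊) := by
    apply card_le_card_of_injOn (fun y => S / (σ + y))
    · intro y hy
      have := key y hy
      simp only [coe_Icc, Set.mem_Icc]
      exact ⟨Nat.ceil_le.2 this.1, Nat.le_floor this.2⟩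
    · intro y hy z hz hyz
      have hy1 := (h y hy).1
      have hz1 := (h z hz).1
      simp only at hyz
      have e1 := Nat.div_mul_cancel hy1
      have e2 := Nat.div_mul_cancel hz1
      rw [← hyz] at e2
      have hq : 0 < S / (σ + y) := by
        rcases Nat.eq_zero_or_pos (S / (σ + y)) with h0 | h0
        · rw [h0] at e1; omega
        · exact h0
      have := Nat.eq_of_mul_eq_mul_left hq (e1.trans e2.symm)
      omega
  rw [Nat.card_Icc] at hc
  have hle : ⌈lo⌉₊ ≤ ⌊hi⌋₊ := by
    have := key y0 hy0
    exact (Nat.ceil_le.2 this.1).trans (Nat.le_floor this.2)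
  have hc' : #Y + ⌈lo⌉₊ ≤ ⌊hi⌋₊ + 1 := by omega
  have hc'' : (#Y : ℝ) + ⌈lo⌉₊ ≤ ⌊hi⌋₊ + 1 := by exact_mod_cast hc'
  have := Nat.le_ceil lo
  have := Nat.floor_le hhi0
  linarith

/-- Divisor star counting: sets `insert x D`. -/
lemma star_count (U : Finset ℕ) (x S r : ℕ) (hr : r ≤ #U)
    (t : ℝ) (ht : ∀ D ∈ U.powersetCard r,
      ((#{y ∈ U | (x + ∑ d ∈ D, d) + y ∣ S} : ℕ) : ℝ) ≤ t) :
    (#{D ∈ U.powersetCard (r+1) | x + ∑ d ∈ D, d ∣ S} : ℝ) * ((#U : ℝ) - r)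
      ≤ t * ((#U).choose (r+1) : ℝ) := by
  apply ext_count U r _ (filter_subset _ _) t _ hr
  intro D hD
  refine le_trans ?_ (ht D hD)
  norm_cast
  apply card_le_card
  intro y hy
  simp only [mem_filter, mem_sdiff] at hy ⊢
  obtain ⟨⟨hyU, hyD⟩, -, h2⟩ := hy
  rw [sum_insert hyD] at h2
  refine ⟨hyU, ?_⟩
  convert h2 using 1; ring

/-- Lower bound on the number of nondivisors. -/
lemma nondiv_lower (A T : Finset ℕ) (V : ℕ → Finset ℕ) (S r : ℕ) (hT : T ⊆ A)
    (hV : ∀ x ∈ T, V x ⊆ A) (hxV : ∀ x ∈ T, x ∉ V x)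
    (hd : ∀ x ∈ T, ∀ x' ∈ T, x ≠ x' → x ∉ V x' ∨ x' ∉ V x) :
    ∑ x ∈ T, #{D ∈ (V x).powersetCard r | ¬ (x + ∑ d ∈ D, d ∣ S)}
      ≤ #{B ∈ A.powersetCard (r+1) | ¬ (∑ b ∈ B, b ∣ S)} := by
  rw [← card_sigma]
  apply card_le_card_of_injOn (fun p : (_ : ℕ) × Finset ℕ => insert p.1 p.2)
  · rintro ⟨x, D⟩ hp
    simp only [coe_sigma, Set.mem_sigma_iff, mem_coe, mem_filter, mem_powersetCard] at hp ⊢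
    obtain ⟨hx, ⟨hD, hc⟩, hn⟩ := hp
    have hxD : x ∉ D := fun h => hxV x hx (hD h)
    refine ⟨⟨insert_subset (hT hx) (hD.trans (hV x hx)), ?_⟩, ?_⟩
    · rw [card_insert_of_notMem hxD, hc]
    · rwa [sum_insert hxD]
  · rintro ⟨x, D⟩ hp ⟨x', D'⟩ hp' he
    simp only [coe_sigma, Set.mem_sigma_iff, mem_coe, mem_filter, mem_powersetCard] at hp hp' he
    obtain ⟨hx, ⟨hD, hc⟩, hn⟩ := hp
    obtain ⟨hx', ⟨hD', hc'⟩, hn'⟩ := hp'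
    have hxD : x ∉ D := fun h => hxV x hx (hD h)
    have hxD' : x' ∉ D' := fun h => hxV x' hx' (hD' h)
    by_cases hxx : x = x'
    · subst hxx
      have : D = D' := by
        rw [← erase_insert hxD, he, erase_insert hxD']
      rw [this]
    · exfalso
      have a1 : x ∈ insert x' D' := by rw [← he]; simp
      have a2 : x' ∈ insert x D := by rw [he]; simp
      have b1 : x ∈ D' := by
        rcases mem_insert.1 a1 with h | h
        · exact absurd h hxx
        · exact h
      have b2 : x' ∈ D := by
        rcases mem_insert.1 a2 with h | h
        · exact absurd h.symm hxx
        · exact h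
      rcases hd x hx x' hx' hxx with h | h
      · exact h (hD' b1)
      · exact h (hD b2)

/-- Top `j` elements. -/
lemma exists_top (j : ℕ) (A : Finset ℕ) (h : j ≤ #A) :
    ∃ T ⊆ A, #T = j ∧ ∀ x ∈ T, ∀ y ∈ A \ T, y < x := by
  induction j generalizing A with
  | zero => exact ⟨∅, by simp, by simp, by simp⟩
  | succ j ih =>
    have hne : A.Nonempty := card_pos.1 (by omega)
    have hm := max'_mem A hne
    obtain ⟨T, hT, hc, hx⟩ := ih (A.erase (A.max' hne)) (by rw [card_erase_of_mem hm]; omega)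
    have hnm : A.max' hne ∉ T := fun h => by simpa using hT h
    refine ⟨insert (A.max' hne) T, insert_subset hm (hT.trans (erase_subset _ _)), ?_, ?_⟩
    · rw [card_insert_of_notMem hnm, hc]
    · intro x hx' y hy
      simp only [mem_sdiff, mem_insert, not_or] at hy hx'
      rcases hx' with rfl | hx'
      · exact lt_of_le_of_ne (le_max' _ _ hy.1) hy.2.1
      · exact hx x hx' y (by simp [hy])

lemma sum_cmp (P Q : Finset ℕ) (hc : #P ≤ #Q) (h : ∀ p ∈ P, ∀ q ∈ Q, p ≤ q) :
    ∑ p ∈ P, p ≤ ∑ q ∈ Q, q := by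
  rcases Q.eq_empty_or_nonempty with rfl | hne
  · have : P = ∅ := by simpa using hc
    simp [this]
  have hm := min'_mem Q hne
  calc ∑ p ∈ P, p ≤ #P • (Q.min' hne) := sum_le_card_nsmul _ _ _ (fun p hp => h p hp _ hm)
    _ ≤ #Q • (Q.min' hne) := by simp only [smul_eq_mul]; gcongr
    _ ≤ _ := card_nsmul_le_sum _ _ _ (fun q hq => min'_le _ _ hq)


lemma div_lt_of_nondiv (A : Finset ℕ) (S k : ℕ) (hk : 1 ≤ k) (hA : 1 ≤ #A)
    (h : (#A - 1).choose (k-1) < #{B ∈ A.powersetCard k | ¬ (∑ b ∈ B, b ∣ S)}) :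
    #{B ∈ A.powersetCard k | ∑ b ∈ B, b ∣ S} < (#A - 1).choose k := by
  have h1 := card_filter_add_card_filter_not (s := A.powersetCard k) (fun B => ∑ b ∈ B, b ∣ S)
  rw [card_powersetCard] at h1
  obtain ⟨m, hm⟩ : ∃ m, #A = m + 1 := ⟨#A - 1, by omega⟩
  obtain ⟨j, rfl⟩ : ∃ j, k = j + 1 := ⟨k - 1, by omega⟩
  rw [hm] at h h1 ⊢
  simp only [Nat.add_sub_cancel] at h ⊢
  have := Nat.choose_succ_succ m j
  simp only [Nat.succ_eq_add_one] at this
  omega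

lemma nondiv_frac (U : Finset ℕ) (x S r : ℕ) (hr : r ≤ #U) (t q : ℝ)
    (ht : ∀ D ∈ U.powersetCard r, ((#{y ∈ U | (x + ∑ d ∈ D, d) + y ∣ S} : ℕ) : ℝ) ≤ t)
    (hq : t ≤ q * ((#U : ℝ) - r)) (hpos : 0 < (#U : ℝ) - r) :
    (1 - q) * ((#U).choose (r+1) : ℝ) ≤
      #{D ∈ U.powersetCard (r+1) | ¬ (x + ∑ d ∈ D, d ∣ S)} := by
  have h1 := star_count U x S r hr t ht
  have h2 := card_filter_add_card_filter_not (s := U.powersetCard (r+1))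
    (fun D => x + ∑ d ∈ D, d ∣ S)
  rw [card_powersetCard] at h2
  have h3 : ((#{D ∈ U.powersetCard (r+1) | x + ∑ d ∈ D, d ∣ S} : ℕ) : ℝ) +
    (#{D ∈ U.powersetCard (r+1) | ¬ (x + ∑ d ∈ D, d ∣ S)} : ℕ) = ((#U).choose (r+1) : ℕ) := by
    exact_mod_cast h2
  have h4 : (#{D ∈ U.powersetCard (r+1) | x + ∑ d ∈ D, d ∣ S} : ℝ)
      ≤ q * ((#U).choose (r+1) : ℝ) := by
    apply le_of_mul_le_mul_right _ hpos
    calc _ ≤ _ := h1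
      _ ≤ (q * ((#U : ℝ) - r)) * ((#U).choose (r+1) : ℝ) := by gcongr
      _ = _ := by ring
  linarith

lemma simple_t (U : Finset ℕ) (σ S n : ℕ) (hS : 0 < S) (h : 8 * S ≤ n * σ) :
    ((#{y ∈ U | σ + y ∣ S} : ℕ) : ℝ) ≤ (n : ℝ) / 8 := by
  have h' : (8 * S : ℝ) ≤ n * σ := by exact_mod_cast h
  have := count_div {y ∈ U | σ + y ∣ S} σ S hS 1 ((n:ℝ)/8) (by norm_num) (by
      have : (0:ℝ) ≤ n := by positivity
      linarith) (by
    intro y hy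
    simp only [mem_filter] at hy
    refine ⟨hy.2, ?_, ?_⟩
    · rw [one_mul]; exact_mod_cast Nat.le_of_dvd hS hy.2
    · push_cast
      have : (0:ℝ) ≤ (n:ℝ) * y := by positivity
      linarith)
  linarith

lemma case_one (A : Finset ℕ) (n S r x₁ x₂ : ℕ) (hn : #A = n) (hS : 0 < S)
    (hk : 2 * (r + 2) ≤ n) (h1 : x₁ ∈ A) (h2 : x₂ ∈ A) (h12 : x₁ ≠ x₂)
    (hx1 : 8 * S ≤ n * x₁) (hx2 : 8 * S ≤ n * x₂) :
    #{B ∈ A.powersetCard (r+2) | ∑ b ∈ B, b ∣ S} < (n - 1).choose (r+2) := by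
  subst hn
  apply div_lt_of_nondiv A S (r+2) (by omega) (by omega)
  have hc1 : #(A.erase x₁) = #A - 1 := card_erase_of_mem h1
  have hc2 : #((A.erase x₁).erase x₂) = #A - 2 := by
    rw [card_erase_of_mem (mem_erase.2 ⟨h12.symm, h2⟩), hc1]; omega
  have hk' : 2 * ((r:ℝ) + 2) ≤ #A := by exact_mod_cast hk
  have r1 : ((#(A.erase x₁) : ℕ) : ℝ) = #A - 1 := by
    rw [hc1, Nat.cast_sub (by omega)]; simp
  have r2 : ((#((A.erase x₁).erase x₂) : ℕ) : ℝ) = #A - 2 := by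
    rw [hc2, Nat.cast_sub (by omega)]; simp
  have f1 := nondiv_frac (A.erase x₁) x₁ S r (by omega) ((#A : ℝ) / 8) (1/4)
    (fun D _ => simple_t _ _ S _ hS (hx1.trans (by gcongr; omega))) (by rw [r1]; linarith)
    (by rw [r1]; linarith)
  have f2 := nondiv_frac ((A.erase x₁).erase x₂) x₂ S r (by omega) ((#A : ℝ) / 8) (1/4)
    (fun D _ => simple_t _ _ S _ hS (hx2.trans (by gcongr; omega))) (by rw [r2]; linarith)
    (by rw [r2]; linarith)
  have g := nondiv_lower A {x₁, x₂} (fun x => if x = x₁ then A.erase x₁ else (A.erase x₁).erase x₂)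
    S (r+1) (by intro x hx; simp at hx; rcases hx with rfl | rfl <;> assumption)
    (by intro x _; split_ifs
        · exact erase_subset _ _
        · exact (erase_subset _ _).trans (erase_subset _ _))
    (by intro x hx; simp at hx; rcases hx with rfl | rfl
        · simp
        · simp [h12.symm])
    (by intro x hx x' hx' hne
        simp at hx hx'
        rcases hx with rfl | rfl <;> rcases hx' with rfl | rfl
        · exact absurd rfl hne
        · left; rw [if_neg hne.symm]; simp
        · right; rw [if_neg hne]; simp
        · exact absurd rfl hne)
  rw [sum_pair h12] at g
  simp only [if_true, h12.symm, if_false] at g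
  have g' : ((#{D ∈ (A.erase x₁).powersetCard (r+1) | ¬ (x₁ + ∑ d ∈ D, d ∣ S)} : ℕ) : ℝ) +
    (#{D ∈ ((A.erase x₁).erase x₂).powersetCard (r+1) | ¬ (x₂ + ∑ d ∈ D, d ∣ S)} : ℕ) ≤
      (#{B ∈ A.powersetCard (r+1+1) | ¬ (∑ b ∈ B, b ∣ S)} : ℕ) := by exact_mod_cast g
  rw [hc1] at f1
  rw [hc2] at f2
  obtain ⟨m, hm⟩ : ∃ m, #A = m + 2 := ⟨#A - 2, by omega⟩
  have e := Nat.choose_mul_succ_eq m (r+1)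
  have e1 : #A - 1 = m + 1 := by omega
  have e2 : #A - 2 = m := by omega
  rw [e1] at f1 ⊢
  rw [e2] at f2
  have e' : (m.choose (r+1) : ℝ) * (m+1) = ((m+1).choose (r+1) : ℝ) * (m + 1 - (r+1)) := by
    have : m + 1 - (r+1) = m - r := by omega
    have e3 : (m:ℝ) + 1 - (r + 1) = ((m - r : ℕ) : ℝ) := by
      rw [Nat.cast_sub (by omega)]; ring
    rw [e3, ← this]
    exact_mod_cast e
  have hm' : (#A : ℝ) = m + 2 := by exact_mod_cast hm
  have hpos : (0:ℝ) < ((m+1).choose (r+1) : ℝ) := by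
    exact_mod_cast Nat.choose_pos (by omega)
  have half : ((m+1).choose (r+1) : ℝ) ≤ 2 * (m.choose (r+1) : ℝ) := by
    have hm0 : (0:ℝ) < m + 1 := by positivity
    apply le_of_mul_le_mul_right _ hm0
    nlinarith
  have fin : (((m+1).choose (r+1) : ℕ) : ℝ) <
      (#{B ∈ A.powersetCard (r+1+1) | ¬ (∑ b ∈ B, b ∣ S)} : ℕ) := by
    linarith
  simpa using (by exact_mod_cast fin : (m+1).choose (r+1) < _)

lemma cheb (A : Finset ℕ) (k : ℕ) (f : ℕ → ℝ) (hf : ∀ a, 0 ≤ f a) (hk : 2 ≤ k) (hkn : k ≤ #A) :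
    ∑ B ∈ A.powersetCard k, (∑ b ∈ B, f b - k * (∑ a ∈ A, f a) / #A) ^ 2
      ≤ (#A).choose k * (k / #A) * ∑ a ∈ A, f a ^ 2 := by
  obtain ⟨m, hm⟩ : ∃ m, #A = m + 2 := ⟨#A - 2, by omega⟩
  obtain ⟨j, rfl⟩ : ∃ j, k = j + 2 := ⟨k - 2, by omega⟩
  set F := ∑ a ∈ A, f a with hF
  set Q := ∑ a ∈ A, f a ^ 2 with hQ
  have ind : ∀ B ∈ A.powersetCard (j+2), ∑ b ∈ B, f b = ∑ a ∈ A, if a ∈ B then f a else 0 := by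
    intro B hB
    rw [← sum_filter]
    apply sum_congr _ (fun _ _ => rfl)
    ext a
    simp only [mem_filter]
    exact ⟨fun h => ⟨(mem_powersetCard.1 hB).1 h, h⟩, fun h => h.2⟩
  have cnt1 : ∀ a ∈ A, (#{B ∈ A.powersetCard (j+2) | a ∈ B} : ℕ) = (m+1).choose (j+1) := by
    intro a ha
    have := card_filter_powersetCard_subset {a} A (j+2) (by simpa using ha) (by simp)
    simp only [singleton_subset_iff, card_singleton, hm] at this
    simpa using this
  have cnt2 : ∀ a ∈ A, ∀ b ∈ A, a ≠ b →
      (#{B ∈ A.powersetCard (j+2) | a ∈ B ∧ b ∈ B} : ℕ) = m.choose j := by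
    intro a ha b hb hab
    have := card_filter_powersetCard_subset {a, b} A (j+2)
      (by intro x hx; simp at hx; rcases hx with rfl | rfl <;> assumption)
      (by rw [card_pair hab]; omega)
    rw [card_pair hab, hm] at this
    simp only [insert_subset_iff, singleton_subset_iff] at this
    simpa using this
  have s1 : ∑ B ∈ A.powersetCard (j+2), ∑ b ∈ B, f b = F * (m+1).choose (j+1) := by
    rw [sum_congr rfl ind, sum_comm, hF, sum_mul]
    apply sum_congr rfl
    intro a ha
    rw [← sum_filter, sum_const, cnt1 a ha, nsmul_eq_mul, mul_comm]
  have s2 : ∑ B ∈ A.powersetCard (j+2), (∑ b ∈ B, f b)^2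
      ≤ F^2 * m.choose j + Q * (m+1).choose (j+1) := by
    have : ∑ B ∈ A.powersetCard (j+2), (∑ b ∈ B, f b)^2 =
        ∑ a ∈ A, ∑ b ∈ A, (#{B ∈ A.powersetCard (j+2) | a ∈ B ∧ b ∈ B} : ℕ) * (f a * f b) := by
      have e : ∀ B ∈ A.powersetCard (j+2), (∑ b ∈ B, f b)^2 =
          ∑ a ∈ A, ∑ b ∈ A, if a ∈ B ∧ b ∈ B then f a * f b else 0 := by
        intro B hB
        rw [ind B hB, sq, sum_mul_sum]
        apply sum_congr rfl; intro a _
        apply sum_congr rfl; intro b _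
        by_cases h1 : a ∈ B <;> by_cases h2 : b ∈ B <;> simp [h1, h2]
      rw [sum_congr rfl e, sum_comm]
      apply sum_congr rfl; intro a _
      rw [sum_comm]
      apply sum_congr rfl; intro b _
      rw [← sum_filter, sum_const, nsmul_eq_mul]
    rw [this]
    have e2 : F^2 * m.choose j + Q * (m+1).choose (j+1) =
        ∑ a ∈ A, ∑ b ∈ A, ((m.choose j : ℝ) * (f a * f b) +
          if a = b then ((m+1).choose (j+1) : ℝ) * (f a * f b) else 0) := by
      simp_rw [sum_add_distrib]
      congr 1
      · simp_rw [← mul_sum]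
        rw [← sum_mul, ← hF]; ring
      · rw [hQ, sum_mul]
        apply sum_congr rfl; intro a ha
        rw [sum_ite_eq, if_pos ha]; ring
    rw [e2]
    apply sum_le_sum; intro a ha
    apply sum_le_sum; intro b hb
    have hab : 0 ≤ f a * f b := mul_nonneg (hf a) (hf b)
    by_cases h : a = b
    · subst h
      simp only [and_self, if_true]
      rw [cnt1 a ha]
      have : (0:ℝ) ≤ (m.choose j : ℝ) * (f a * f a) := by positivity
      linarith
    · rw [cnt2 a ha b hb h, if_neg h, add_zero]
  have hn : (#A : ℝ) = m + 2 := by exact_mod_cast hm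
  have hkn' : (j:ℝ) + 2 ≤ m + 2 := by rw [hm] at hkn; exact_mod_cast hkn
  rw [hm]
  push_cast
  set C := (((m+2).choose (j+2) : ℕ) : ℝ) with hC
  have c1 : (((m+1).choose (j+1) : ℕ) : ℝ) = C * ((j+2)/(m+2)) := by
    have := Nat.add_one_mul_choose_eq (m+1) (j+1)
    have h' : ((m:ℝ)+1+1) * ((m+1).choose (j+1) : ℕ) = C * (j+1+1) := by
      rw [hC]; exact_mod_cast this
    field_simp
    linarith
  have c2 : ((m.choose j : ℕ) : ℝ) ≤ C * ((j+2)/(m+2))^2 := by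
    have := Nat.add_one_mul_choose_eq m j
    have h' : ((m:ℝ)+1) * (m.choose j : ℕ) = (C * ((j+2)/(m+2))) * (j+1) := by
      rw [← c1]; exact_mod_cast this
    have : ((m.choose j : ℕ) : ℝ) = (C * ((j+2)/(m+2))) * ((j+1)/(m+1)) := by
      have : (0:ℝ) < m + 1 := by positivity
      rw [mul_div_assoc', eq_div_iff this.ne']; linarith
    rw [this, sq, ← mul_assoc]
    have h0 : (0:ℝ) ≤ C * ((j+2)/(m+2)) := by positivity
    apply mul_le_mul_of_nonneg_left _ h0
    rw [div_le_div_iff₀ (by positivity) (by positivity)]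
    nlinarith
  have ex : ∑ B ∈ A.powersetCard (j+2), (∑ b ∈ B, f b - (j+2) * F / (m+2)) ^ 2 =
      ∑ B ∈ A.powersetCard (j+2), (∑ b ∈ B, f b)^2
       - 2 * ((j+2) * F / (m+2)) * ∑ B ∈ A.powersetCard (j+2), ∑ b ∈ B, f b
       + C * ((j+2) * F / (m+2))^2 := by
    clear_value F
    generalize ((j:ℝ)+2) * F / (m+2) = μ
    rw [mul_sum, ← sum_sub_distrib]
    have : C * μ^2 = ∑ B ∈ A.powersetCard (j+2), μ^2 := by
      rw [sum_const, card_powersetCard, hm, nsmul_eq_mul]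
    rw [this, ← sum_add_distrib]
    apply sum_congr rfl; intro B _; ring
  rw [ex, s1, c1]
  rw [c1] at s2
  have : F^2 * m.choose j ≤ F^2 * (C * ((j+2)/(m+2))^2) := by gcongr
  have e3 : (j+2) * F / (m+2) = F * ((j+2)/(m+2) : ℝ) := by ring
  rw [e3]
  nlinarith

lemma case_two_a (A A' : Finset ℕ) (n S k : ℕ) (hn : #A = n) (hS : 0 < S) (hA' : A' ⊆ A)
    (hk3 : 300 ≤ k) (hk : 2 * k ≤ n) (h1 : S < 2 * ∑ a ∈ A', a) (h2 : ∀ a ∈ A', n * a ≤ 8 * S) :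
    #{B ∈ A.powersetCard k | ∑ b ∈ B, b ∣ S} < (n - 1).choose k := by
  subst hn
  have hSr : (0:ℝ) < S := by exact_mod_cast hS
  have hkr : (300:ℝ) ≤ k := by exact_mod_cast hk3
  have hknr : 2 * (k:ℝ) ≤ #A := by exact_mod_cast hk
  set C := (((#A).choose k : ℕ) : ℝ) with hC
  have hCpos : 0 < C := by rw [hC]; exact_mod_cast Nat.choose_pos (by omega)
  set bad := {B ∈ A.powersetCard k | #A * ∑ b ∈ B, b < 8 * S} with hbad
  set F := {B ∈ A.powersetCard k | ∑ b ∈ B, b ∣ S ∧ 8 * S ≤ #A * ∑ b ∈ B, b} with hF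
  have hsub : #{B ∈ A.powersetCard k | ∑ b ∈ B, b ∣ S} ≤ #bad + #F := by
    refine le_trans (card_le_card ?_) (card_union_le _ _)
    intro B hB
    simp only [hbad, hF, mem_union, mem_filter] at hB ⊢
    by_cases h : #A * ∑ b ∈ B, b < 8 * S
    · exact Or.inl ⟨hB.1, h⟩
    · exact Or.inr ⟨hB.1, hB.2, by omega⟩
  have hFle : (#F : ℝ) ≤ C / 4 := by
    obtain ⟨r, rfl⟩ : ∃ r, k = r + 1 := ⟨k - 1, by omega⟩
    have := ext_count A r F (filter_subset _ _) ((#A : ℝ)/8) (by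
      intro D hD
      have hc := count_div {y ∈ A \ D | insert y D ∈ F} (∑ d ∈ D, d) S hS 1 ((#A:ℝ)/8)
        (by norm_num) (by linarith) (by
          intro y hy
          simp only [mem_filter, mem_sdiff, hF] at hy
          obtain ⟨⟨hyA, hyD⟩, -, h3, h4⟩ := hy
          rw [sum_insert hyD, add_comm] at h3 h4
          refine ⟨h3, ?_, ?_⟩
          · rw [one_mul]; exact_mod_cast Nat.le_of_dvd hS h3
          · have : (8 * S : ℝ) ≤ #A * ((∑ d ∈ D, d + y : ℕ) : ℝ) := by exact_mod_cast h4
            linarith)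
      linarith) (by omega)
    push_cast at hknr
    have hp : (0:ℝ) < (#A : ℝ) - r := by linarith
    apply le_of_mul_le_mul_right _ hp
    calc _ ≤ _ := this
      _ ≤ _ := by
        rw [← hC]
        have hh : (#A : ℝ) / 2 ≤ (#A : ℝ) - r := by linarith
        calc (#A : ℝ) / 8 * C = C / 4 * ((#A : ℝ) / 2) := by ring
          _ ≤ C / 4 * ((#A : ℝ) - r) := mul_le_mul_of_nonneg_left hh (by linarith)
  have hbadle : (#bad : ℝ) < C / 4 := by
    set f : ℕ → ℝ := fun a => if a ∈ A' then (a:ℝ) else 0 with hf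
    have ch := cheb A k f (by intro a; simp only [hf]; split_ifs <;> positivity) (by omega) (by omega)
    have hFs : ∑ a ∈ A, f a = ((∑ a ∈ A', a : ℕ) : ℝ) := by
      rw [Nat.cast_sum, hf, ← sum_filter]
      apply sum_congr _ (fun _ _ => rfl)
      ext a; simp only [mem_filter]; exact ⟨fun h => h.2, fun h => ⟨hA' h, h⟩⟩
    set G := ((∑ a ∈ A', a : ℕ) : ℝ) with hG
    have hGS : (S:ℝ) < 2 * G := by rw [hG]; exact_mod_cast h1
    have hnp : (0:ℝ) < #A := by linarith
    have hQ : ∑ a ∈ A, f a ^ 2 ≤ (8 * S / #A) * G := by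
      rw [← hFs, mul_sum]
      apply sum_le_sum
      intro a ha
      simp only [hf]
      split_ifs with h
      · have : (#A : ℝ) * a ≤ 8 * S := by exact_mod_cast h2 a h
        rw [sq]
        apply mul_le_mul_of_nonneg_right _ (by positivity)
        rw [le_div_iff₀ hnp]; linarith
      · simp
    rw [hFs] at ch
    set μ := (k:ℝ) * G / #A with hμ
    have hμS : 150 * S / #A ≤ μ := by
      rw [hμ]; exact div_le_div_of_nonneg_right (by nlinarith) hnp.le
    have low : (#bad : ℝ) * (μ^2/4) ≤ ∑ B ∈ A.powersetCard k, (∑ b ∈ B, f b - μ) ^ 2 := by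
      calc (#bad : ℝ) * (μ^2/4) = ∑ B ∈ bad, μ^2/4 := by rw [sum_const, nsmul_eq_mul]
        _ ≤ ∑ B ∈ bad, (∑ b ∈ B, f b - μ) ^ 2 := by
          apply sum_le_sum
          intro B hB
          simp only [hbad, mem_filter] at hB
          have hb : (#A : ℝ) * ((∑ b ∈ B, b : ℕ) : ℝ) < 8 * S := by exact_mod_cast hB.2
          have hle : ∑ b ∈ B, f b ≤ ((∑ b ∈ B, b : ℕ) : ℝ) := by
            rw [Nat.cast_sum]
            apply sum_le_sum
            intro b _
            simp only [hf]; split_ifs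
            · exact le_rfl
            · positivity
          have h8 : ((∑ b ∈ B, b : ℕ) : ℝ) < 8 * S / #A := by
            rw [lt_div_iff₀ hnp]; linarith
          have hp : 0 < (S:ℝ) / #A := by positivity
          have e1 : 8 * (S:ℝ) / #A = 8 * (S / #A) := by ring
          have e2 : 150 * (S:ℝ) / #A = 150 * (S / #A) := by ring
          have : μ / 2 ≤ μ - ∑ b ∈ B, f b := by linarith
          have h0 : 0 ≤ μ / 2 := by linarith
          nlinarith
        _ ≤ _ := by
          apply sum_le_sum_of_subset_of_nonneg (filter_subset _ _)
          intros; positivity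
    have up : (#bad : ℝ) * (μ^2/4) ≤ C * (k / #A) * ((8 * S / #A) * G) :=
      low.trans (ch.trans (by gcongr))
    have hGp : 0 < G := by linarith
    have hμp : 0 < μ := lt_of_lt_of_le (by positivity) hμS
    have lt : C * (k / #A) * ((8 * S / #A) * G) < (C / 4) * (μ^2/4) := by
      rw [hμ]
      have e1 : C * (k / #A) * ((8 * S / #A) * G) = (C * k * G / (#A)^2) * (8 * S) := by
        field_simp
      have e2 : (C / 4) * (((k:ℝ) * G / #A)^2/4) = (C * k * G / (#A)^2) * (k * G / 16) := by
        field_simp; norm_num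
      rw [e1, e2]
      apply mul_lt_mul_of_pos_left _ (by positivity)
      nlinarith
    exact lt_of_mul_lt_mul_right (up.trans_lt lt) (by positivity)
  obtain ⟨m, hm⟩ : ∃ m, #A = m + 1 := ⟨#A - 1, by omega⟩
  have e := Nat.choose_mul_succ_eq m k
  have hm' : (#A : ℝ) = m + 1 := by exact_mod_cast hm
  have e' : (m.choose k : ℝ) * (m+1) = C * (m + 1 - k) := by
    have e3 : (m:ℝ) + 1 - k = ((m + 1 - k : ℕ) : ℝ) := by
      rw [Nat.cast_sub (by omega)]; push_cast; ring
    rw [e3, hC, hm]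
    exact_mod_cast e
  have half : C / 2 ≤ (m.choose k : ℝ) := by
    have hm0 : (0:ℝ) < m + 1 := by positivity
    apply le_of_mul_le_mul_right _ hm0
    nlinarith
  have e4 : #A - 1 = m := by omega
  rw [e4]
  have hsub' : ((#{B ∈ A.powersetCard k | ∑ b ∈ B, b ∣ S} : ℕ) : ℝ) ≤ #bad + #F := by
    exact_mod_cast hsub
  have : ((#{B ∈ A.powersetCard k | ∑ b ∈ B, b ∣ S} : ℕ) : ℝ) < (m.choose k : ℝ) := by linarith
  exact_mod_cast this

lemma refined_t (U : Finset ℕ) (x σ S n : ℕ) (hS : 0 < S) (hx : 0 < x) (hn : 100000 ≤ n) (hU : #U ≤ n)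
    (hσ : x ≤ σ) (hy : ∀ y ∈ U, y < x)
    (hw : (S:ℝ) / 2 - 80 * S / n ≤ ((∑ y ∈ U, y : ℕ) : ℝ)) :
    ((#{y ∈ U | σ + y ∣ S} : ℕ) : ℝ) ≤ 4 / 5 * (n:ℝ) + 1 := by
  have hSr : (0:ℝ) < S := by exact_mod_cast hS
  have hxr : (0:ℝ) < x := by exact_mod_cast hx
  have hnr : (100000:ℝ) ≤ n := by exact_mod_cast hn
  have hσr : (x:ℝ) ≤ σ := by exact_mod_cast hσ
  have hσp : (0:ℝ) < σ := by linarith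
  have hUr : (#U : ℝ) ≤ n := by exact_mod_cast hU
  by_cases hc : 5 / 8 * (S:ℝ) ≤ n * x
  · have := count_div {y ∈ U | σ + y ∣ S} σ S hS (S / (σ + x)) (S / σ) (by positivity) (by
        have : (S:ℝ) / (σ + x) ≤ S / σ := by gcongr; linarith
        linarith) (by
      intro y hy'
      simp only [mem_filter] at hy'
      have hyx : (y:ℝ) ≤ x := by exact_mod_cast (hy y hy'.1).le
      refine ⟨hy'.2, ?_, ?_⟩
      · push_cast
        rw [div_mul_eq_mul_div, div_le_iff₀ (by positivity)]
        gcongr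
      · push_cast
        rw [div_mul_eq_mul_div, le_div_iff₀ (by positivity)]
        gcongr
        have : (0:ℝ) ≤ y := by positivity
        linarith)
    have h2 : (S:ℝ) / σ - S / (σ + x) ≤ S / (2 * x) := by
      rw [div_sub_div _ _ (by positivity) (by positivity), div_le_div_iff₀ (by positivity) (by positivity)]
      have : 0 ≤ S * ((σ:ℝ)^2 + σ * x - 2 * x^2) := by
        apply mul_nonneg hSr.le; nlinarith
      nlinarith
    have h3 : (S:ℝ) / (2 * x) ≤ 4 / 5 * n := by
      rw [div_le_iff₀ (by positivity)]; nlinarith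
    linarith
  · push Not at hc
    set Lw := {y ∈ U | 2 * y < x} with hLw
    set Hi := {y ∈ U | ¬ 2 * y < x} with hHi
    have hsplit : #{y ∈ U | σ + y ∣ S} ≤ #Lw + #{y ∈ Hi | σ + y ∣ S} := by
      refine le_trans (card_le_card ?_) (card_union_le _ _)
      intro y hy'
      simp only [hLw, hHi, mem_union, mem_filter] at hy' ⊢
      by_cases h : 2 * y < x
      · exact Or.inl ⟨hy'.1, h⟩
      · exact Or.inr ⟨⟨hy'.1, h⟩, hy'.2⟩
    have hsplit' : ((#{y ∈ U | σ + y ∣ S} : ℕ) : ℝ) ≤ #Lw + #{y ∈ Hi | σ + y ∣ S} := by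
      exact_mod_cast hsplit
    -- weights
    have hsum : ((∑ y ∈ U, y : ℕ) : ℝ) ≤ n * x - #Lw * x / 2 := by
      have e : ∑ y ∈ U, y = ∑ y ∈ Lw, y + ∑ y ∈ Hi, y := (sum_filter_add_sum_filter_not _ _ _).symm
      have ec : #Lw + #Hi = #U := card_filter_add_card_filter_not _
      have ec' : (#Lw : ℝ) + #Hi = #U := by exact_mod_cast ec
      have l1 : ((∑ y ∈ Lw, y : ℕ) : ℝ) ≤ #Lw * (x/2) := by
        rw [Nat.cast_sum, ← nsmul_eq_mul]
        apply sum_le_card_nsmul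
        intro y hy'
        have h : 2 * y < x := (mem_filter.1 hy').2
        have : (2 * y : ℝ) < x := by exact_mod_cast h
        linarith
      have l2 : ((∑ y ∈ Hi, y : ℕ) : ℝ) ≤ #Hi * x := by
        rw [Nat.cast_sum, ← nsmul_eq_mul]
        apply sum_le_card_nsmul
        intro y hy'
        exact_mod_cast (hy y (mem_filter.1 hy').1).le
      rw [e]; push_cast at l1 l2 ⊢
      nlinarith
    have hnp : (0:ℝ) < n := by linarith
    have hsmall : 80 * (S:ℝ) / n ≤ S / 1000 := by
      rw [div_le_div_iff₀ hnp (by norm_num)]; nlinarith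
    have hnx : (S:ℝ) / 2 - S / 1000 ≤ n * x := by
      have : (0:ℝ) ≤ #Lw * x / 2 := by positivity
      linarith
    have hL : (#Lw : ℝ) ≤ 41 / 100 * n := by
      apply le_of_mul_le_mul_right _ hxr
      nlinarith
    have hH := count_div {y ∈ Hi | σ + y ∣ S} σ S hS (S / (σ + x)) (S / (σ + x / 2)) (by positivity) (by
        have : (S:ℝ) / (σ + x) ≤ S / (σ + x/2) := by gcongr; linarith
        linarith) (by
      intro y hy'
      simp only [mem_filter, hHi] at hy'
      have hyx : (y:ℝ) ≤ x := by exact_mod_cast (hy y hy'.1.1).le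
      have h2 : x ≤ 2 * y := by omega
      have h2' : (x:ℝ) ≤ 2 * y := by exact_mod_cast h2
      refine ⟨hy'.2, ?_, ?_⟩
      · push_cast
        rw [div_mul_eq_mul_div, div_le_iff₀ (by positivity)]
        gcongr
      · push_cast
        rw [div_mul_eq_mul_div, le_div_iff₀ (by positivity)]
        gcongr
        linarith)
    have h2 : (S:ℝ) / (σ + x/2) - S / (σ + x) ≤ S / (6 * x) := by
      rw [div_sub_div _ _ (by positivity) (by positivity), div_le_div_iff₀ (by positivity) (by positivity)]
      have : 0 ≤ S * (((σ:ℝ) + x / 2) * (σ + x) - 3 * x^2) := by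
        apply mul_nonneg hSr.le; nlinarith
      nlinarith
    have h3 : (S:ℝ) / (6 * x) ≤ 35 / 100 * n := by
      rw [div_le_iff₀ (by positivity)]; nlinarith
    linarith

lemma choose_loss (m r j : ℕ) (h : j ≤ m) :
    m.choose (r+1) ≤ (m - j).choose (r+1) + j * (m-1).choose r := by
  induction j with
  | zero => simp
  | succ j ih =>
    have := ih (by omega)
    have e : m - j = (m - (j+1)) + 1 := by omega
    rw [e, Nat.choose_succ_succ] at this
    simp only [Nat.succ_eq_add_one] at this
    have h2 : (m - (j+1)).choose r ≤ (m-1).choose r := Nat.choose_le_choose r (by omega)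
    rw [add_mul, one_mul]
    omega

lemma case_two_b (A A' : Finset ℕ) (n S r : ℕ) (hn : #A = n) (hS : 0 < S) (hA' : A' ⊆ A)
    (hcA : #A' = n - 1) (hr : r < 300) (hN : 100000 ≤ n)
    (h1 : S < 2 * ∑ a ∈ A', a) (h2 : ∀ a ∈ A', n * a ≤ 8 * S) :
    #{B ∈ A.powersetCard (r+2) | ∑ b ∈ B, b ∣ S} < (n - 1).choose (r+2) := by
  subst hn
  apply div_lt_of_nondiv A S (r+2) (by omega) (by omega)
  obtain ⟨T, hT, hTc, htop⟩ := exists_top 10 A' (by omega)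
  set U := A' \ T with hU
  have hUc : #U = #A - 11 := by rw [hU, card_sdiff_of_subset hT]; omega
  have hnr : (100000:ℝ) ≤ #A := by exact_mod_cast hN
  have hrr : (r:ℝ) < 300 := by exact_mod_cast hr
  have hUr : ((#U : ℕ) : ℝ) = #A - 11 := by rw [hUc, Nat.cast_sub (by omega)]; simp
  have hw : (S:ℝ) / 2 - 80 * S / #A ≤ ((∑ y ∈ U, y : ℕ) : ℝ) := by
    have e : ∑ a ∈ A', a = ∑ y ∈ U, y + ∑ y ∈ T, y := (sum_sdiff hT).symm
    have hTle : ((∑ y ∈ T, y : ℕ) : ℝ) ≤ 10 * (8 * S / #A) := by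
      have : ((∑ y ∈ T, y : ℕ) : ℝ) ≤ #T • (8 * (S:ℝ) / #A) := by
        rw [Nat.cast_sum]
        apply sum_le_card_nsmul
        intro y hy
        rw [le_div_iff₀ (by linarith)]
        have : (#A:ℝ) * y ≤ 8 * S := by exact_mod_cast h2 y (hT hy)
        linarith
      rw [hTc] at this
      simpa using this
    have h1' : (S:ℝ) < 2 * ((∑ a ∈ A', a : ℕ) : ℝ) := by exact_mod_cast h1
    rw [e] at h1'
    rw [Nat.cast_add] at h1'
    have : 80 * (S:ℝ) / #A = 10 * (8 * S / #A) := by ring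
    linarith
  have hUne : U.Nonempty := card_pos.1 (by omega)
  have each : ∀ x ∈ T, (1 - 85/100) * ((#U).choose (r+1) : ℝ) ≤
      #{D ∈ U.powersetCard (r+1) | ¬ (x + ∑ d ∈ D, d ∣ S)} := by
    intro x hx
    have hx0 : 0 < x := by
      obtain ⟨y, hy⟩ := hUne
      have := htop x hx y hy
      omega
    apply nondiv_frac U x S r (by omega) (4/5 * (#A : ℝ) + 1) (85/100)
    · intro D _
      exact refined_t U x _ S (#A) hS hx0 hN (by omega) (by omega) (htop x hx) hw
    · rw [hUr]; linarith
    · rw [hUr]; linarith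
  have g := nondiv_lower A T (fun _ => U) S (r+1) (hT.trans hA')
    (fun _ _ => sdiff_subset.trans hA') (fun x hx => by simp [hU, hx])
    (fun x hx x' _ _ => Or.inl (by simp [hU, hx]))
  have g' : (10:ℝ) * ((1 - 85/100) * ((#U).choose (r+1) : ℝ)) ≤
      (#{B ∈ A.powersetCard (r+1+1) | ¬ (∑ b ∈ B, b ∣ S)} : ℕ) := by
    calc _ = ∑ x ∈ T, ((1 - 85/100) * ((#U).choose (r+1) : ℝ)) := by
          rw [sum_const, hTc]; simp
      _ ≤ ∑ x ∈ T, ((#{D ∈ U.powersetCard (r+1) | ¬ (x + ∑ d ∈ D, d ∣ S)} : ℕ) : ℝ) :=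
          sum_le_sum each
      _ ≤ _ := by exact_mod_cast g
  obtain ⟨m, hm⟩ : ∃ m, #A = m + 2 := ⟨#A - 2, by omega⟩
  have hm' : (#A : ℝ) = m + 2 := by exact_mod_cast hm
  have e1 : #A - 1 = m + 1 := by omega
  have e2 : #U = m + 1 - 10 := by omega
  have l := choose_loss (m+1) r 10 (by omega)
  rw [← e2] at l
  simp only [Nat.add_sub_cancel] at l
  have l' : ((m+1).choose (r+1) : ℝ) ≤ (#U).choose (r+1) + 10 * (m.choose r : ℝ) := by
    exact_mod_cast l
  have c := Nat.add_one_mul_choose_eq m r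
  have c' : ((m:ℝ)+1) * (m.choose r : ℝ) = ((m+1).choose (r+1) : ℝ) * (r+1) := by exact_mod_cast c
  have hpos : (0:ℝ) < ((m+1).choose (r+1) : ℝ) := by
    exact_mod_cast Nat.choose_pos (by omega)
  have c3 : (m.choose r : ℝ) ≤ ((m+1).choose (r+1) : ℝ) / 100 := by
    have hm0 : (0:ℝ) < m + 1 := by positivity
    apply le_of_mul_le_mul_left _ hm0
    rw [c']
    nlinarith
  rw [e1]
  have fin : (((m+1).choose (r+1) : ℕ) : ℝ) <
      (#{B ∈ A.powersetCard (r+1+1) | ¬ (∑ b ∈ B, b ∣ S)} : ℕ) := by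
    linarith
  simpa using (by exact_mod_cast fin : (m+1).choose (r+1) < _)

lemma small_k (A : Finset ℕ) (n S k M : ℕ) (hn : #A = n) (hSe : ∑ a ∈ A, a = S)
    (hk2 : 2 ≤ k) (hk : 2 * k ≤ n) (hN : 100000 ≤ n) (hM : M ∈ A) (hMS : 2 * M < S)
    (hmax : ∀ a ∈ A, a ≤ M) :
    #{B ∈ A.powersetCard k | ∑ b ∈ B, b ∣ S} < (n - 1).choose k := by
  have hS : 0 < S := by omega
  obtain ⟨r, rfl⟩ : ∃ r, k = r + 2 := ⟨k - 2, by omega⟩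
  by_cases h : ∃ x ∈ A.erase M, 8 * S ≤ n * x
  · obtain ⟨x, hx, hx8⟩ := h
    have hxA := mem_of_mem_erase hx
    exact case_one A n S r M x hn hS hk hM hxA (ne_of_mem_erase hx).symm
      (hx8.trans (by gcongr; exact hmax x hxA)) hx8
  · push Not at h
    have hs : ∑ a ∈ A.erase M, a + M = S := by rw [sum_erase_add _ _ hM, hSe]
    have hc : #(A.erase M) = n - 1 := by rw [card_erase_of_mem hM, hn]
    by_cases hk3 : 300 ≤ r + 2
    · exact case_two_a A (A.erase M) n S (r+2) hn hS (erase_subset _ _) hk3 hk (by omega)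
        (fun a ha => (h a ha).le)
    · exact case_two_b A (A.erase M) n S r hn hS (erase_subset _ _) hc (by omega) hN (by omega)
        (fun a ha => (h a ha).le)

lemma ekr_finset (X : Finset ℕ) (r : ℕ) (F : Finset (Finset ℕ)) (hF : F ⊆ X.powersetCard r)
    (hI : ∀ B ∈ F, ∀ C ∈ F, ¬ Disjoint B C) (hr : 2 * r ≤ #X) :
    #F ≤ (#X - 1).choose (r - 1) := by
  set g : Fin (#X) → ℕ := fun i => (X.equivFin.symm i : ℕ) with hg
  have ginj : Function.Injective g := fun i j h => X.equivFin.symm.injective (Subtype.ext h)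
  have gsurj : ∀ x ∈ X, ∃ i, g i = x := fun x hx => ⟨X.equivFin ⟨x, hx⟩, by simp [hg]⟩
  set P : Finset ℕ → Finset (Fin (#X)) := fun B => B.preimage g ginj.injOn with hP
  have himg : ∀ B ∈ F, (P B).image g = B := by
    intro B hB
    ext x
    simp only [hP, mem_image, mem_preimage]
    constructor
    · rintro ⟨i, hi, rfl⟩; exact hi
    · intro hx
      obtain ⟨i, rfl⟩ := gsurj x ((mem_powersetCard.1 (hF hB)).1 hx)
      exact ⟨i, hx, rfl⟩
  have hcard : #(F.image P) = #F := by
    apply card_image_of_injOn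
    intro B hB C hC h
    rw [← himg B hB, ← himg C hC]
    exact congrArg (fun Z => Finset.image g Z) h
  rw [← hcard]
  apply erdos_ko_rado
  · intro b hb c hc hd
    simp only [coe_image, Set.mem_image, mem_coe] at hb hc
    obtain ⟨B, hB, rfl⟩ := hb
    obtain ⟨C, hC, rfl⟩ := hc
    apply hI B hB C hC
    rw [← himg B hB, ← himg C hC]
    exact (disjoint_image ginj).2 hd
  · intro b hb
    simp only [coe_image, Set.mem_image, mem_coe] at hb
    obtain ⟨B, hB, rfl⟩ := hb
    rw [← card_image_of_injective (P B) ginj, himg B hB]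
    exact (mem_powersetCard.1 (hF hB)).2
  · omega

lemma level_inter (A L D D' : Finset ℕ) (S c j m : ℕ) (hS : ∑ a ∈ A, a = S) (hc : 2 * c < #A)
    (hjc : j ≤ c) (hL : L ⊆ A) (hLj : #L = j) (hlt : ∀ x ∈ L, ∀ y ∈ A \ L, x < y)
    (hm : m ∈ A) (hmL : m ∉ L) (hm0 : 0 < m)
    (hD : D ⊆ A \ insert m L) (hD' : D' ⊆ A \ insert m L) (hDc : #D = c - j) (hDc' : #D' = c - j)
    (h1 : S ≤ 2 * (∑ d ∈ D, d + ∑ x ∈ L, x)) (h2 : S ≤ 2 * (∑ d ∈ D', d + ∑ x ∈ L, x)) :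
    ¬ Disjoint D D' := by
  intro hdis
  set R := ((A \ insert m L) \ (D ∪ D')) with hR
  have hDD : D ∪ D' ⊆ A \ insert m L := union_subset hD hD'
  have hins : insert m L ⊆ A := insert_subset hm hL
  have s1 : ∑ a ∈ A, a = ∑ a ∈ A \ insert m L, a + ∑ a ∈ insert m L, a := (sum_sdiff hins).symm
  have s2 : ∑ a ∈ A \ insert m L, a = ∑ a ∈ R, a + ∑ a ∈ D ∪ D', a := (sum_sdiff hDD).symm
  rw [sum_union hdis] at s2
  rw [sum_insert hmL] at s1
  have c1 : #(A \ insert m L) = #A - (j+1) := by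
    rw [card_sdiff_of_subset hins, card_insert_of_notMem hmL, hLj]
  have c2 : #R = #A - (j+1) - (c - j + (c - j)) := by
    rw [hR, card_sdiff_of_subset hDD, c1, card_union_of_disjoint hdis, hDc, hDc']
  have hle := sum_cmp L R (by omega) (by
    intro x hx y hy
    simp only [hR, mem_sdiff, mem_insert, not_or] at hy
    exact (hlt x hx y (by simp [hy.1])).le)
  omega

lemma level (A : Finset ℕ) (S c : ℕ) (hpos : ∀ a ∈ A, 0 < a) (hS : ∑ a ∈ A, a = S)
    (hc : 2 * c < #A)
    (h : (#A - 1).choose (c-1) ≤ #{D ∈ A.powersetCard c | S ≤ 2 * ∑ d ∈ D, d})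
    (j : ℕ) (hj : j + 1 ≤ c) :
    ∃ L ⊆ A, #L = j ∧ (∀ x ∈ L, ∀ y ∈ A \ L, x < y) ∧
      (#A - 1 - j).choose (c - 1 - j) ≤
        #{D ∈ (A \ L).powersetCard (c - j) | S ≤ 2 * (∑ d ∈ D, d + ∑ x ∈ L, x)} := by
  induction j with
  | zero => exact ⟨∅, by simp, by simp, by simp, by simpa using h⟩
  | succ j ih =>
    obtain ⟨L, hL, hLj, hlt, hcard⟩ := ih (by omega)
    have hne : (A \ L).Nonempty := card_pos.1 (by rw [card_sdiff_of_subset hL]; omega)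
    set m := (A \ L).min' hne with hmdef
    have hm := min'_mem (A \ L) hne
    rw [← hmdef] at hm
    have hmA : m ∈ A := (mem_sdiff.1 hm).1
    have hmL : m ∉ L := (mem_sdiff.1 hm).2
    have hins : insert m L ⊆ A := insert_subset hmA hL
    have c1 : #(A \ insert m L) = #A - (j+1) := by
      rw [card_sdiff_of_subset hins, card_insert_of_notMem hmL, hLj]
    refine ⟨insert m L, hins, by rw [card_insert_of_notMem hmL, hLj], ?_, ?_⟩
    · intro x hx y hy
      simp only [mem_sdiff, mem_insert, not_or] at hx hy
      rcases hx with rfl | hx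
      · exact lt_of_le_of_ne (min'_le _ _ (by simp [hy])) (Ne.symm hy.2.1)
      · exact hlt x hx y (by simp [hy])
    set Fam := {D ∈ (A \ L).powersetCard (c - j) | S ≤ 2 * (∑ d ∈ D, d + ∑ x ∈ L, x)} with hFam
    have hsplit := card_filter_add_card_filter_not (s := Fam) (fun D => m ∈ D)
    have avoid : #{D ∈ Fam | ¬ m ∈ D} ≤ (#A - (j+1) - 1).choose (c - j - 1) := by
      rw [← c1]
      apply ekr_finset
      · intro D hD
        simp only [hFam, mem_filter, mem_powersetCard] at hD ⊢
        refine ⟨?_, hD.1.1.2⟩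
        intro x hx
        have h1 := mem_sdiff.1 (hD.1.1.1 hx)
        simp only [mem_sdiff, mem_insert, not_or]
        exact ⟨h1.1, fun h => hD.2 (h ▸ hx), h1.2⟩
      · have sub : ∀ D ∈ {D ∈ Fam | ¬ m ∈ D}, D ⊆ A \ insert m L := by
          intro D hD x hx
          simp only [hFam, mem_filter, mem_powersetCard] at hD
          have h1 := mem_sdiff.1 (hD.1.1.1 hx)
          simp only [mem_sdiff, mem_insert, not_or]
          exact ⟨h1.1, fun h => hD.2 (h ▸ hx), h1.2⟩
        intro D hD D' hD'
        have s1 := sub D hD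
        have s2 := sub D' hD'
        simp only [hFam, mem_filter, mem_powersetCard] at hD hD'
        exact level_inter A L D D' S c j m hS hc (by omega) hL hLj hlt hmA hmL (hpos m hmA) s1 s2
          hD.1.1.2 hD'.1.1.2 hD.1.2 hD'.1.2
      · rw [c1]; omega
    have contain : #{D ∈ Fam | m ∈ D} ≤ #{D ∈ (A \ insert m L).powersetCard (c - (j+1)) |
        S ≤ 2 * (∑ d ∈ D, d + ∑ x ∈ insert m L, x)} := by
      apply card_le_card_of_injOn (fun D => D.erase m)
      · intro D hD
        simp only [hFam, mem_coe, mem_filter, mem_powersetCard] at hD ⊢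
        refine ⟨⟨?_, ?_⟩, ?_⟩
        · intro x hx
          have hx' := mem_erase.1 hx
          have h1 := mem_sdiff.1 (hD.1.1.1 hx'.2)
          simp only [mem_sdiff, mem_insert, not_or]
          exact ⟨h1.1, hx'.1, h1.2⟩
        · rw [card_erase_of_mem hD.2, hD.1.1.2]; omega
        · have e := sum_erase_add D (fun x => x) hD.2
          rw [sum_insert hmL]
          have := hD.1.2
          omega
      · intro D hD D' hD' he
        simp only [mem_coe, mem_filter] at hD hD'
        simp only at he
        rw [← insert_erase hD.2, he, insert_erase hD'.2]
    have pas : (#A - 1 - j).choose (c - 1 - j) =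
        (#A - 1 - (j+1)).choose (c - 1 - (j+1)) + (#A - (j+1) - 1).choose (c - j - 1) := by
      have e1 : #A - 1 - j = (#A - 1 - (j+1)) + 1 := by omega
      have e2 : c - 1 - j = (c - 1 - (j+1)) + 1 := by omega
      have e3 : c - j - 1 = (c - 1 - (j+1)) + 1 := by omega
      have e4 : #A - (j+1) - 1 = #A - 1 - (j+1) := by omega
      rw [e4, e3, e1, e2, Nat.choose_succ_succ]
    omega

lemma dvd_two (A B : Finset ℕ) (S : ℕ) (hpos : ∀ a ∈ A, 0 < a) (hS : ∑ a ∈ A, a = S)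
    (hB : B ⊆ A) (hc : #B < #A) (h : ∑ b ∈ B, b ∣ S) : 2 * ∑ b ∈ B, b ≤ S := by
  have hlt : ∑ b ∈ B, b < S := by
    rw [← hS]
    obtain ⟨x, hx, hxB⟩ := exists_mem_notMem_of_card_lt_card hc
    exact sum_lt_sum_of_subset hB hx hxB (hpos x hx) (fun _ _ _ => Nat.zero_le _)
  obtain ⟨q, hq⟩ := h
  have : 2 ≤ q := by
    by_contra hq2
    have : q = 0 ∨ q = 1 := by omega
    rcases this with rfl | rfl <;> simp at hq <;> omega
  rw [hq, mul_comm]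
  gcongr

lemma all_div_contra (Y : Finset ℕ) (S k : ℕ) (hS : 0 < S) (hk : 5 ≤ k) (hkY : k < #Y)
    (hk2 : #Y ≤ 2 * k) (hw : S < 2 * ∑ y ∈ Y, y)
    (h : ∀ B ⊆ Y, #B = k → ∑ b ∈ B, b ∣ S) : False := by
  obtain ⟨T, hT, hTk, htop⟩ := exists_top k Y hkY.le
  obtain ⟨y, hy⟩ : (Y \ T).Nonempty := card_pos.1 (by rw [card_sdiff_of_subset hT]; omega)
  have hyY := (mem_sdiff.1 hy).1
  have hyT := (mem_sdiff.1 hy).2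
  obtain ⟨m, hm⟩ := h T hT hTk
  set w := ∑ b ∈ T, b with hwdef
  have hw0 : 0 < w := by
    rcases Nat.eq_zero_or_pos w with h0 | h0
    · rw [h0] at hm; omega
    · exact h0
  have each : ∀ t ∈ T, w ≤ t * (m + 1) := by
    intro t ht
    have hyt := htop t ht y hy
    have hyn : y ∉ T.erase t := fun hh => hyT (mem_of_mem_erase hh)
    obtain ⟨q, hq⟩ := h (insert y (T.erase t))
      (insert_subset hyY ((erase_subset _ _).trans hT))
      (by rw [card_insert_of_notMem hyn, card_erase_of_mem ht]; omega)
    rw [sum_insert hyn] at hq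
    have e := sum_erase_add T (fun x => x) ht
    rw [← hwdef] at e
    set v := ∑ x ∈ T.erase t, x
    have hqm : m + 1 ≤ q := by
      by_contra hlt
      have : q ≤ m := by omega
      have h1 : (y + v) * q ≤ (y + v) * m := by gcongr
      have hm0 : 0 < m := by
        rcases Nat.eq_zero_or_pos m with h0 | h0
        · rw [h0] at hm; omega
        · exact h0
      have h2 : (y + v) * m < w * m := by
        apply Nat.mul_lt_mul_of_pos_right _ hm0
        omega
      omega
    have h3 : (y + v) * (m+1) ≤ w * m := by
      rw [← hm, hq]; gcongr
    have h4 : w * (m + 1) = v * (m+1) + t * (m+1) := by rw [← e]; ring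
    have h5 : (y + v) * (m+1) = y * (m+1) + v * (m+1) := by ring
    have h6 : w * (m+1) = w * m + w := by ring
    have : 0 ≤ y * (m+1) := Nat.zero_le _
    omega
  have hsum : k * w ≤ w * (m+1) := by
    calc k * w = #T • w := by rw [hTk]; rfl
      _ ≤ ∑ t ∈ T, t * (m+1) := card_nsmul_le_sum _ _ _ each
      _ = w * (m+1) := by rw [← sum_mul]
  have hkm : k ≤ m + 1 := by
    rw [mul_comm] at hsum
    exact Nat.le_of_mul_le_mul_left hsum hw0
  have hYT : ∑ x ∈ Y \ T, x ≤ w := sum_cmp _ _ (by rw [card_sdiff_of_subset hT]; omega)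
    (fun p hp q hq => (htop q hq p hp).le)
  have hYs : ∑ x ∈ Y, x = ∑ x ∈ Y \ T, x + w := (sum_sdiff hT).symm
  have : w * 4 ≤ w * m := by gcongr; omega
  omega

lemma large_k (A : Finset ℕ) (n S k M : ℕ) (hpos : ∀ a ∈ A, 0 < a) (hn : #A = n)
    (hSe : ∑ a ∈ A, a = S)
    (hkn : k < n) (hk : n < 2 * k) (hN : 20 ≤ n) (hM : M ∈ A) (hMS : 2 * M < S)
    (hmax : ∀ a ∈ A, a ≤ M) :
    #{B ∈ A.powersetCard k | ∑ b ∈ B, b ∣ S} < (n - 1).choose k := by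
  by_contra hcon
  push Not at hcon
  set c := n - k with hc
  set Gc := {D ∈ A.powersetCard c | S ≤ 2 * ∑ d ∈ D, d} with hGc
  set Gk := {B ∈ A.powersetCard k | 2 * ∑ b ∈ B, b ≤ S} with hGk
  have hsym : (n-1).choose k = (n-1).choose (c-1) := by
    rw [← Nat.choose_symm (by omega : k ≤ n - 1)]; congr 1; omega
  have hDG : {B ∈ A.powersetCard k | ∑ b ∈ B, b ∣ S} ⊆ Gk := by
    intro B hB
    simp only [hGk, mem_filter, mem_powersetCard] at hB ⊢
    exact ⟨hB.1, dvd_two A B S hpos hSe hB.1.1 (by omega) hB.2⟩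
  have hGG : #Gk ≤ #Gc := by
    apply card_le_card_of_injOn (fun B => A \ B)
    · intro B hB
      simp only [hGk, hGc, mem_coe, mem_filter, mem_powersetCard] at hB ⊢
      refine ⟨⟨sdiff_subset, by rw [card_sdiff_of_subset hB.1.1]; omega⟩, ?_⟩
      have := sum_sdiff (f := fun x : ℕ => x) hB.1.1
      omega
    · intro B hB B' hB' he
      simp only [hGk, mem_coe, mem_filter, mem_powersetCard] at hB hB'
      simp only at he
      rw [← Finset.sdiff_sdiff_eq_self hB.1.1, he, Finset.sdiff_sdiff_eq_self hB'.1.1]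
  have hGcle : #Gc ≤ (n-1).choose (c-1) := by
    rw [← hn]
    apply ekr_finset A c Gc (filter_subset _ _) _ (by omega)
    intro D hD D' hD' hdis
    simp only [hGc, mem_filter, mem_powersetCard] at hD hD'
    have hu := union_subset hD.1.1 hD'.1.1
    have hcu : #(D ∪ D') < #A := by rw [card_union_of_disjoint hdis]; omega
    obtain ⟨x, hx, hxB⟩ := exists_mem_notMem_of_card_lt_card hcu
    have := sum_lt_sum_of_subset (f := fun x : ℕ => x) hu hx hxB (hpos x hx)
      (fun _ _ _ => Nat.zero_le _)
    rw [sum_union hdis, hSe] at this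
    omega
  have heq := eq_of_subset_of_card_le hDG (by omega)
  have hle : (#A - 1).choose (c-1) ≤ #Gc := by
    rw [hn, ← hsym]; exact hcon.trans ((card_le_card hDG).trans hGG)
  obtain ⟨L, hL, hLc, hlt, hcard⟩ := level A S c hpos hSe (by omega) hle (c-1) (by omega)
  have e0 : c - 1 - (c - 1) = 0 := by omega
  have e1 : c - (c - 1) = 1 := by omega
  rw [e0, e1, Nat.choose_zero_right] at hcard
  obtain ⟨D, hD⟩ := card_pos.1 hcard
  simp only [mem_filter, mem_powersetCard] at hD
  obtain ⟨⟨hDA, hD1⟩, hDS⟩ := hD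
  obtain ⟨x, rfl⟩ := card_eq_one.1 hD1
  have hxA : x ∈ A := (mem_sdiff.1 (hDA (by simp))).1
  have hxM := hmax x hxA
  rw [sum_singleton] at hDS
  have hML : S ≤ 2 * (M + ∑ x ∈ L, x) := by omega
  have hYc : #(A.erase M) = n - 1 := by rw [card_erase_of_mem hM, hn]
  have hYs : ∑ a ∈ A.erase M, a + M = S := by
    rw [← hSe]; exact sum_erase_add A (fun x => x) hM
  have hc2 : 2 ≤ c := by
    by_contra hc2
    have : #L = 0 := by omega
    rw [card_eq_zero] at this
    subst this
    simp at hML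
    omega
  apply all_div_contra (A.erase M) S k (by omega) (by omega) (by omega) (by omega) (by omega)
  intro B hB hBk
  have hBA : B ⊆ A := hB.trans (erase_subset _ _)
  have hBG : B ∈ Gk := by
    simp only [hGk, mem_filter, mem_powersetCard]
    refine ⟨⟨hBA, hBk⟩, ?_⟩
    set C := (A.erase M) \ B with hC
    have hCs : ∑ x ∈ C, x + ∑ b ∈ B, b = ∑ a ∈ A.erase M, a := sum_sdiff hB
    have hCc : #C = c - 1 := by rw [hC, card_sdiff_of_subset hB]; omega
    have hCA : C ⊆ A := sdiff_subset.trans (erase_subset _ _)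
    have hcc : #(L \ C) ≤ #(C \ L) := by
      have h1 := card_sdiff_add_card_inter L C
      have h2 := card_sdiff_add_card_inter C L
      rw [inter_comm] at h2
      omega
    have hcmp := sum_cmp (L \ C) (C \ L) hcc (by
      intro p hp q hq
      simp only [mem_sdiff] at hp hq
      exact (hlt p hp.1 q (by simp [hq.2, hCA hq.1])).le)
    have i1 := sum_inter_add_sum_sdiff L C (fun x => x)
    have i2 := sum_inter_add_sum_sdiff C L (fun x => x)
    rw [inter_comm] at i2
    omega
  rw [← heq] at hBG
  exact (mem_filter.1 hBG).2

end

/-- **Theorem 3 (s = 1 case).** For all but finitely many pairs `(k, n)` with `1 < k < n`,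
any set `A` of `n` positive integers with `d_k(A) ≥ C(n-1, k)` is a `k`-anti-pencil. -/
theorem zbarsky_s1_case :
    {p : ℕ × ℕ | 1 < p.1 ∧ p.1 < p.2 ∧
      ∃ A : Finset ℕ, (∀ a ∈ A, 0 < a) ∧ A.card = p.2 ∧
        (p.2 - 1).choose p.1 ≤ dsk 1 p.1 A ∧ ¬ IsAntiPencil 1 p.1 A}.Finite := by
  apply Set.Finite.subset ((Set.finite_Iio 100000).prod (Set.finite_Iio 100000))
  rintro ⟨k, n⟩ ⟨hk, hkn, A, hpos, hn, hd, hnot⟩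
  simp only at hk hkn hn hd hnot
  simp only [Set.mem_prod, Set.mem_Iio]
  by_contra hbig
  have hN : 100000 ≤ n := by omega
  apply hnot
  have hne : A.Nonempty := Finset.card_pos.1 (by omega)
  simp only [dsk, one_mul, id] at hd
  refine ⟨hne, ?_⟩
  simp only [one_mul, id]
  set M := A.max' hne with hMd
  have hM : M ∈ A := Finset.max'_mem A hne
  have hmax : ∀ a ∈ A, a ≤ M := fun a ha => Finset.le_max' A a ha
  obtain ⟨S, hS⟩ : ∃ S, ∑ a ∈ A, a = S := ⟨_, rfl⟩
  rw [hS] at hd ⊢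
  have hMS : S ≤ 2 * M := by
    by_contra hlt
    push Not at hlt
    rcases le_or_gt (2 * k) n with h | h
    · have := small_k A n S k M hn hS hk h hN hM hlt hmax
      omega
    · have := large_k A n S k M hpos hn hS hkn h (by omega) hM hlt hmax
      omega
  apply Finset.eq_of_subset_of_card_le
  · intro B hB
    simp only [Finset.mem_filter, Finset.mem_powersetCard] at hB ⊢
    obtain ⟨⟨hBA, hBk⟩, hdv⟩ := hB
    refine ⟨?_, hBk⟩
    have h2 := dvd_two A B S hpos hS hBA (by omega) hdv
    intro x hx
    refine Finset.mem_erase.2 ⟨?_, hBA hx⟩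
    rintro rfl
    have e := Finset.sum_erase_add B (fun x => x) hx
    have hp : 0 < ∑ b ∈ B.erase M, b := by
      apply Finset.sum_pos (fun b hb => hpos b (hBA (Finset.mem_of_mem_erase hb)))
      apply Finset.card_pos.1
      rw [Finset.card_erase_of_mem hx]; omega
    omega
  · rw [Finset.card_powersetCard, Finset.card_erase_of_mem hM, hn]
    exact hd
end

section
/- Fix a positive integer s ≥ 1. For all but finitely many pairs of integers (k,n) with 1 < k < n-1 (the number of exceptional pairs depending on s), the following holds: if A is a set of n positive integers with d^s_k(A) ≥ C(n-1,k), then A is a (k,s)-anti-pencil. Formally: for each fixed s, the set of pairs (k,n) with 1 < k < n-1 for which there exists a set A of n positive integers with d^s_k(A) ≥ C(n-1,k) that is not a (k,s)-anti-pencil is finite. -/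
section Helpers
open Finset

lemma pack_down (E : Finset ℕ) (w : ℕ → ℝ) (hinj : Set.InjOn w E) (j : ℕ)
    (F : Finset (Finset ℕ)) (hF : F ⊆ E.powersetCard (j+1)) (V : Finset ℝ)
    (hV : ∀ R ∈ F, ∑ x ∈ R, w x ∈ V) : F.card * (j+1) ≤ E.card.choose j * V.card := by
  rw [← Finset.card_powersetCard j E]
  refine Finset.card_mul_le_card_mul (fun R P => P ⊆ R) ?_ ?_
  · intro R hR
    have h1 := Finset.mem_powersetCard.1 (hF hR)
    have : Finset.powersetCard j R ⊆ Finset.bipartiteAbove (fun R P => P ⊆ R) (E.powersetCard j) R := by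
      intro P hP
      have h2 := Finset.mem_powersetCard.1 hP
      simp only [Finset.mem_bipartiteAbove, Finset.mem_powersetCard]
      exact ⟨⟨h2.1.trans h1.1, h2.2⟩, h2.1⟩
    have h3 := Finset.card_le_card this
    rw [Finset.card_powersetCard, h1.2, Nat.choose_succ_self_right] at h3
    exact h3
  · intro P hP
    have hP2 := Finset.mem_powersetCard.1 hP
    refine Finset.card_le_card_of_injOn (fun R => ∑ x ∈ R, w x) ?_ ?_
    · intro R hR
      exact hV R (Finset.mem_bipartiteBelow _ |>.1 hR).1
    · intro R hR R' hR' heq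
      obtain ⟨a1, a2⟩ := (Finset.mem_bipartiteBelow _).1 hR
      obtain ⟨b1, b2⟩ := (Finset.mem_bipartiteBelow _).1 hR'
      have a3 := Finset.mem_powersetCard.1 (hF a1)
      have b3 := Finset.mem_powersetCard.1 (hF b1)
      obtain ⟨x, hx⟩ := Finset.card_eq_one.1 (show (R \ P).card = 1 by
        rw [Finset.card_sdiff_of_subset a2]; omega)
      obtain ⟨y, hy⟩ := Finset.card_eq_one.1 (show (R' \ P).card = 1 by
        rw [Finset.card_sdiff_of_subset b2]; omega)
      have e1 := Finset.sum_sdiff (f := w) a2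
      have e2 := Finset.sum_sdiff (f := w) b2
      rw [hx, Finset.sum_singleton] at e1
      rw [hy, Finset.sum_singleton] at e2
      simp only at heq
      have hxR : x ∈ R \ P := by rw [hx]; simp
      have hyR : y ∈ R' \ P := by rw [hy]; simp
      have hxy : x = y := hinj (a3.1 (Finset.mem_sdiff.1 hxR).1) (b3.1 (Finset.mem_sdiff.1 hyR).1)
        (by linarith)
      rw [← Finset.sdiff_union_of_subset a2, ← Finset.sdiff_union_of_subset b2, hx, hy, hxy]

lemma pack_up (E : Finset ℕ) (w : ℕ → ℝ) (hinj : Set.InjOn w E) (j : ℕ)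
    (F : Finset (Finset ℕ)) (hF : F ⊆ E.powersetCard j) (V : Finset ℝ)
    (hV : ∀ R ∈ F, ∑ x ∈ R, w x ∈ V) :
    F.card * (E.card - j) ≤ E.card.choose (j+1) * V.card := by
  rw [← Finset.card_powersetCard (j+1) E]
  refine Finset.card_mul_le_card_mul (fun R P => R ⊆ P) ?_ ?_
  · intro R hR
    have h1 := Finset.mem_powersetCard.1 (hF hR)
    have h2 : (E \ R).card = E.card - j := by rw [Finset.card_sdiff_of_subset h1.1, h1.2]
    rw [← h2]
    refine Finset.card_le_card_of_injOn (fun x => insert x R) ?_ ?_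
    · intro x hx
      have hx := Finset.mem_sdiff.1 hx
      simp only [Finset.coe_bipartiteAbove, Set.mem_ofPred_eq, Finset.mem_powersetCard]
      refine ⟨⟨Finset.insert_subset hx.1 h1.1, ?_⟩, Finset.subset_insert _ _⟩
      rw [Finset.card_insert_of_notMem hx.2, h1.2]
    · intro x hx y hy hxy
      have hx := Finset.mem_sdiff.1 hx
      have : x ∈ insert y R := by
        have : x ∈ insert x R := Finset.mem_insert_self _ _
        simp only at hxy
        rwa [hxy] at this
      rcases Finset.mem_insert.1 this with h | h
      · exact h
      · exact absurd h hx.2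
  · intro P hP
    have hP2 := Finset.mem_powersetCard.1 hP
    refine Finset.card_le_card_of_injOn (fun R => ∑ x ∈ R, w x) ?_ ?_
    · intro R hR
      exact hV R (Finset.mem_bipartiteBelow _ |>.1 hR).1
    · intro R hR R' hR' heq
      obtain ⟨a1, a2⟩ := (Finset.mem_bipartiteBelow _).1 hR
      obtain ⟨b1, b2⟩ := (Finset.mem_bipartiteBelow _).1 hR'
      have a3 := Finset.mem_powersetCard.1 (hF a1)
      have b3 := Finset.mem_powersetCard.1 (hF b1)
      obtain ⟨x, hx⟩ := Finset.card_eq_one.1 (show (P \ R).card = 1 by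
        rw [Finset.card_sdiff_of_subset a2]; omega)
      obtain ⟨y, hy⟩ := Finset.card_eq_one.1 (show (P \ R').card = 1 by
        rw [Finset.card_sdiff_of_subset b2]; omega)
      have e1 := Finset.sum_sdiff (f := w) a2
      have e2 := Finset.sum_sdiff (f := w) b2
      rw [hx, Finset.sum_singleton] at e1
      rw [hy, Finset.sum_singleton] at e2
      simp only at heq
      have hxR : x ∈ P \ R := by rw [hx]; simp
      have hyR : y ∈ P \ R' := by rw [hy]; simp
      have hxy : x = y := hinj (hP2.1 (Finset.mem_sdiff.1 hxR).1) (hP2.1 (Finset.mem_sdiff.1 hyR).1)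
        (by linarith)
      rw [← Finset.sdiff_sdiff_eq_self a2, ← Finset.sdiff_sdiff_eq_self b2, hx, hy, hxy]

/-- value set -/
lemma value_set (s : ℝ) (hs : 0 ≤ s) (d : ℝ) (hd : 0 < d) (t : ℝ) : ∃ V : Finset ℝ, (V.card : ℝ) ≤ s / d ∧
    ∀ v : ℝ, (∃ m : ℕ, 0 < m ∧ v + t = s / m) → d ≤ v + t → v ∈ V := by
  refine ⟨(Finset.Icc 1 ⌊s / d⌋₊).image (fun m : ℕ => s / m - t), ?_, ?_⟩
  · refine le_trans (Nat.cast_le.2 Finset.card_image_le) ?_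
    rw [Nat.card_Icc, Nat.add_sub_cancel]
    exact Nat.floor_le (by positivity)
  · rintro v ⟨m, hm, hv⟩ hdv
    rw [Finset.mem_image]
    refine ⟨m, ?_, by linarith⟩
    rw [Finset.mem_Icc]
    refine ⟨hm, Nat.le_floor ?_⟩
    have hm' : (0:ℝ) < m := by exact_mod_cast hm
    rw [hv, le_div_iff₀ hm'] at hdv
    rw [le_div_iff₀ hd]; linarith

lemma good_down (E : Finset ℕ) (w : ℕ → ℝ) (hinj : Set.InjOn w E) (j : ℕ)
    (F : Finset (Finset ℕ)) (hF : F ⊆ E.powersetCard (j+1)) (s : ℝ) (hs : 0 ≤ s) (d : ℝ) (hd : 0 < d)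
    (t : ℝ)
    (hV : ∀ R ∈ F, ∃ m : ℕ, 0 < m ∧ ∑ x ∈ R, w x + t = s / m)
    (hV2 : ∀ R ∈ F, d ≤ ∑ x ∈ R, w x + t) :
    (F.card : ℝ) * (j+1) ≤ E.card.choose j * (s / d) := by
  obtain ⟨V, h1, h2⟩ := value_set s hs d hd t
  have h3 := pack_down E w hinj j F hF V (fun R hR => h2 _ (hV R hR) (hV2 R hR))
  have h4 : ((F.card * (j+1) : ℕ) : ℝ) ≤ ((E.card.choose j * V.card : ℕ) : ℝ) := by exact_mod_cast h3
  push_cast at h4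
  exact h4.trans (by gcongr)

lemma good_up (E : Finset ℕ) (w : ℕ → ℝ) (hinj : Set.InjOn w E) (j : ℕ) (hj : j ≤ E.card)
    (F : Finset (Finset ℕ)) (hF : F ⊆ E.powersetCard j) (s : ℝ) (hs : 0 ≤ s) (d : ℝ) (hd : 0 < d)
    (t : ℝ)
    (hV : ∀ R ∈ F, ∃ m : ℕ, 0 < m ∧ ∑ x ∈ R, w x + t = s / m)
    (hV2 : ∀ R ∈ F, d ≤ ∑ x ∈ R, w x + t) :
    (F.card : ℝ) * (E.card - j) ≤ E.card.choose (j+1) * (s / d) := by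
  obtain ⟨V, h1, h2⟩ := value_set s hs d hd t
  have h3 := pack_up E w hinj j F hF V (fun R hR => h2 _ (hV R hR) (hV2 R hR))
  have h4 : ((F.card * (E.card - j) : ℕ) : ℝ) ≤ ((E.card.choose (j+1) * V.card : ℕ) : ℝ) := by exact_mod_cast h3
  push_cast [hj] at h4
  exact h4.trans (by gcongr)

lemma count_mem (E : Finset ℕ) (j x : ℕ) (hx : x ∈ E) :
    ((E.powersetCard (j+1)).filter (fun B => x ∈ B)).card = (E.card - 1).choose j := by
  have h := Finset.powersetCard_succ_insert (Finset.notMem_erase x E) j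
  rw [Finset.insert_erase hx] at h
  rw [← Finset.card_erase_of_mem hx, ← Finset.card_powersetCard j (E.erase x), h, Finset.filter_union]
  have h1 : (powersetCard (j+1) (E.erase x)).filter (fun B => x ∈ B) = ∅ := by
    apply Finset.filter_false_of_mem
    intro B hB hxB
    exact Finset.notMem_erase x E ((Finset.mem_powersetCard.1 hB).1 hxB)
  have h2 : ((powersetCard j (E.erase x)).image (insert x)).filter (fun B => x ∈ B) = (powersetCard j (E.erase x)).image (insert x) := by
    apply Finset.filter_true_of_mem
    intro B hB
    obtain ⟨C, -, rfl⟩ := Finset.mem_image.1 hB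
    exact Finset.mem_insert_self _ _
  rw [h1, h2, Finset.empty_union, Finset.card_image_of_injOn]
  intro B hB C hC hBC
  have hB' : x ∉ B := fun h => Finset.notMem_erase x E ((Finset.mem_powersetCard.1 hB).1 h)
  have hC' : x ∉ C := fun h => Finset.notMem_erase x E ((Finset.mem_powersetCard.1 hC).1 h)
  rw [← Finset.erase_insert hB', ← Finset.erase_insert hC']
  exact congrArg (fun Z => Z.erase x) hBC

lemma count_mem2 (E : Finset ℕ) (j x y : ℕ) (hx : x ∈ E) (hy : y ∈ E) (hxy : x ≠ y) :
    ((E.powersetCard (j+2)).filter (fun B => x ∈ B ∧ y ∈ B)).card = (E.card - 2).choose j := by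
  have hy' : y ∈ E.erase x := Finset.mem_erase.2 ⟨hxy.symm, hy⟩
  have h := count_mem (E.erase x) j y hy'
  rw [Finset.card_erase_of_mem hx] at h
  rw [show E.card - 2 = E.card - 1 - 1 by omega, ← h]
  symm
  apply Finset.card_bij (fun B _ => insert x B)
  · intro B hB
    simp only [Finset.mem_filter, Finset.mem_powersetCard] at hB ⊢
    have hxB : x ∉ B := fun h => Finset.notMem_erase x E (hB.1.1 h)
    refine ⟨⟨Finset.insert_subset hx (hB.1.1.trans (Finset.erase_subset _ _)), ?_⟩, Finset.mem_insert_self _ _, Finset.mem_insert_of_mem hB.2⟩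
    rw [Finset.card_insert_of_notMem hxB]; omega
  · intro B hB C hC hBC
    simp only [Finset.mem_filter, Finset.mem_powersetCard] at hB hC
    have hB' : x ∉ B := fun h => Finset.notMem_erase x E (hB.1.1 h)
    have hC' : x ∉ C := fun h => Finset.notMem_erase x E (hC.1.1 h)
    rw [← Finset.erase_insert hB', ← Finset.erase_insert hC', hBC]
  · intro B hB
    simp only [Finset.mem_filter, Finset.mem_powersetCard] at hB
    refine ⟨B.erase x, ?_, Finset.insert_erase hB.2.1⟩
    simp only [Finset.mem_filter, Finset.mem_powersetCard]
    refine ⟨⟨Finset.erase_subset_erase _ hB.1.1, ?_⟩, Finset.mem_erase.2 ⟨hxy.symm, hB.2.2⟩⟩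
    rw [Finset.card_erase_of_mem hB.2.1]; omega

lemma first_moment (E : Finset ℕ) (w : ℕ → ℝ) (j : ℕ) :
    ∑ B ∈ E.powersetCard (j+1), ∑ x ∈ B, w x = (E.card - 1).choose j * ∑ x ∈ E, w x := by
  have h1 : ∀ B ∈ E.powersetCard (j+1), ∑ x ∈ B, w x = ∑ x ∈ E, if x ∈ B then w x else 0 := by
    intro B hB
    rw [← Finset.sum_filter]
    congr 1
    ext x; simp only [Finset.mem_filter]
    exact ⟨fun h => ⟨(Finset.mem_powersetCard.1 hB).1 h, h⟩, fun h => h.2⟩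
  rw [Finset.sum_congr rfl h1, Finset.sum_comm, Finset.mul_sum]
  refine Finset.sum_congr rfl (fun x hx => ?_)
  rw [← Finset.sum_filter, Finset.sum_const, count_mem E j x hx, nsmul_eq_mul]

lemma second_moment (E : Finset ℕ) (v : ℕ → ℝ) (j : ℕ) (hE : 2 ≤ E.card) (h0 : ∑ x ∈ E, v x = 0) :
    ∑ B ∈ E.powersetCard (j+2), (∑ x ∈ B, v x)^2 = (E.card - 2).choose (j+1) * ∑ x ∈ E, (v x)^2 := by
  have h1 : ∀ B ∈ E.powersetCard (j+2), (∑ x ∈ B, v x)^2 =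
      ∑ x ∈ E, ∑ y ∈ E, if x ∈ B ∧ y ∈ B then v x * v y else 0 := by
    intro B hB
    have hBE : E.filter (fun x => x ∈ B) = B := by
      ext x; simp only [Finset.mem_filter]
      exact ⟨fun h => h.2, fun h => ⟨(Finset.mem_powersetCard.1 hB).1 h, h⟩⟩
    rw [sq, Finset.sum_mul_sum]
    conv_lhs => rw [← hBE]
    rw [Finset.sum_filter]
    refine Finset.sum_congr rfl (fun x hx => ?_)
    split_ifs with h
    · rw [Finset.sum_filter]; simp [h]
    · simp [h]
  rw [Finset.sum_congr rfl h1, Finset.sum_comm]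
  have h2 : ∀ x ∈ E, ∑ B ∈ E.powersetCard (j+2), ∑ y ∈ E, (if x ∈ B ∧ y ∈ B then v x * v y else 0)
      = (E.card - 2).choose (j+1) * (v x)^2 := by
    intro x hx
    rw [Finset.sum_comm]
    have h3 : ∀ y ∈ E, ∑ B ∈ E.powersetCard (j+2), (if x ∈ B ∧ y ∈ B then v x * v y else 0)
        = (E.card - 2).choose j * (v x * v y) + if x = y then (E.card - 2).choose (j+1) * (v x)^2 else 0 := by
      intro y hy
      rw [← Finset.sum_filter, Finset.sum_const, nsmul_eq_mul]
      split_ifs with hxy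
      · subst hxy
        simp only [and_self]
        rw [count_mem E (j+1) x hx]
        have : E.card - 1 = (E.card - 2) + 1 := by omega
        rw [this, Nat.choose_succ_succ]; push_cast; ring
      · rw [count_mem2 E j x y hx hy hxy, add_zero]
    rw [Finset.sum_congr rfl h3, Finset.sum_add_distrib, ← Finset.mul_sum, ← Finset.mul_sum, h0]
    simp [hx]
  rw [Finset.sum_congr rfl h2, Finset.mul_sum]

lemma frac_le (s m : ℕ) (hm : 0 < m) (v : ℝ) (hv : v = s / m) (h1 : v < 1) :
    v ≤ (s : ℝ) / (s + 1) := by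
  have hm' : (0:ℝ) < m := by exact_mod_cast hm
  rw [hv, div_lt_one hm'] at h1
  have h2 : s + 1 ≤ m := by exact_mod_cast h1
  have h3 : (s : ℝ) + 1 ≤ m := by exact_mod_cast h2
  rw [hv]
  gcongr

lemma large_count (E : Finset ℕ) (w : ℕ → ℝ) (j : ℕ) (U d : ℝ) (hd : 0 ≤ d)
    (hU : ∀ B ∈ E.powersetCard (j+1), ∑ x ∈ B, w x ≤ U) :
    (E.card - 1).choose j * ∑ x ∈ E, w x ≤
      ((E.powersetCard (j+1)).filter (fun B => d ≤ ∑ x ∈ B, w x)).card * U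
        + d * E.card.choose (j+1) := by
  rw [← first_moment, ← Finset.sum_filter_add_sum_filter_not (E.powersetCard (j+1)) (fun B => d ≤ ∑ x ∈ B, w x)]
  refine add_le_add ?_ ?_
  · rw [← nsmul_eq_mul]
    exact Finset.sum_le_card_nsmul _ _ _ (fun B hB => hU B (Finset.mem_filter.1 hB).1)
  · rw [← Finset.card_powersetCard (j+1) E, mul_comm]
    refine le_trans (Finset.sum_le_card_nsmul _ _ d (fun B hB => (not_le.1 (Finset.mem_filter.1 hB).2).le)) ?_
    rw [nsmul_eq_mul]
    gcongr
    exact Finset.filter_subset _ _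

lemma card_split (P H : Finset (Finset ℕ)) (hH : H ⊆ P) (f : Finset ℕ → ℝ) (d : ℝ) :
    (H.card : ℝ) + (P.filter (fun B => d ≤ f B)).card ≤ P.card + (H.filter (fun B => d ≤ f B)).card := by
  have h1 := Finset.card_filter_add_card_filter_not (s := H) (fun B => d ≤ f B)
  have h2 := Finset.card_filter_add_card_filter_not (s := P) (fun B => d ≤ f B)
  have h3 : (H.filter (fun B => ¬ d ≤ f B)).card ≤ (P.filter (fun B => ¬ d ≤ f B)).card :=
    Finset.card_le_card (Finset.filter_subset_filter _ hH)
  have : H.card + (P.filter (fun B => d ≤ f B)).card ≤ P.card + (H.filter (fun B => d ≤ f B)).card := by omega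
  exact_mod_cast this

/-- Good sets through the large element with weight at least `d`. -/
lemma through_bound (s : ℕ) (E : Finset ℕ) (w : ℕ → ℝ) (hinj : Set.InjOn w E)
    (hpos : ∀ x ∈ E, 0 < w x) (x0 : ℝ) (hx0 : 0 < x0) (hsum : ∑ x ∈ E, w x + x0 = 1) (j : ℕ)
    (hj : j + 3 ≤ E.card) (F : Finset (Finset ℕ)) (hF : F ⊆ E.powersetCard (j+1)) (d : ℝ) (hd : 0 < d)
    (hV : ∀ R ∈ F, ∃ m : ℕ, 0 < m ∧ ∑ x ∈ R, w x + x0 = s / m)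
    (hV2 : ∀ R ∈ F, d ≤ ∑ x ∈ R, w x + x0) :
    (F.card : ℝ) * E.card ≤ (s + 1) * (s / d) * E.card.choose (j+2) := by
  have h1 : ∀ R ∈ F, 1 / ((s:ℝ) + 1) ≤ ∑ y ∈ E, if y ∉ R then w y else 0 := by
    intro R hR
    have hRE := Finset.mem_powersetCard.1 (hF hR)
    have e1 : ∑ y ∈ E, (if y ∉ R then w y else 0) = ∑ y ∈ E \ R, w y := by
      rw [← Finset.sum_filter]; congr 1; ext y; simp
    have e2 := Finset.sum_sdiff (f := w) hRE.1
    have e3 : 0 < ∑ y ∈ E \ R, w y := by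
      apply Finset.sum_pos (fun y hy => hpos y (Finset.mem_sdiff.1 hy).1)
      rw [← Finset.card_pos, Finset.card_sdiff_of_subset hRE.1]; omega
    obtain ⟨m, hm, hv⟩ := hV R hR
    have e4 := frac_le s m hm _ hv (by linarith)
    have e5 : 1 / ((s:ℝ) + 1) = 1 - s / (s + 1) := by field_simp; ring
    rw [e1, e5]; linarith
  have h2 : (F.card : ℝ) * (1 / ((s:ℝ) + 1)) ≤ ∑ y ∈ E, w y * (F.filter (fun R => y ∉ R)).card := by
    rw [← nsmul_eq_mul]
    refine (Finset.card_nsmul_le_sum F _ _ h1).trans ?_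
    rw [Finset.sum_comm]
    refine le_of_eq (Finset.sum_congr rfl (fun y hy => ?_))
    rw [← Finset.sum_filter, Finset.sum_const, nsmul_eq_mul, mul_comm]
  have hN : (0:ℝ) < E.card := by exact_mod_cast (by omega : 0 < E.card)
  have h3 : ∀ y ∈ E, ((F.filter (fun R => y ∉ R)).card : ℝ) ≤ E.card.choose (j+2) * (s / d) / E.card := by
    intro y hy
    have hc := Finset.card_erase_of_mem hy
    have := good_up (E.erase y) w (hinj.mono (by simp)) (j+1) (by omega)
      (F.filter (fun R => y ∉ R)) (by
        intro R hR
        obtain ⟨r1, r2⟩ := Finset.mem_filter.1 hR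
        have := Finset.mem_powersetCard.1 (hF r1)
        exact Finset.mem_powersetCard.2 ⟨Finset.subset_erase.2 ⟨this.1, r2⟩, this.2⟩) s (by positivity) d hd x0
      (fun R hR => hV R (Finset.mem_filter.1 hR).1) (fun R hR => hV2 R (Finset.mem_filter.1 hR).1)
    obtain ⟨M, hM⟩ : ∃ M, E.card = M + 1 := ⟨E.card - 1, by omega⟩
    rw [hc, hM] at this
    rw [hM]
    have hch := Nat.choose_mul_succ_eq M (j+2)
    have hch' : (M.choose (j+2) : ℝ) * (M+1) = (M+1).choose (j+2) * (M + 1 - (j+2)) := by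
      have : ((M.choose (j+2) * (M+1) : ℕ) : ℝ) = (((M+1).choose (j+2) * (M + 1 - (j+2)) : ℕ) : ℝ) := by rw [hch]
      rw [Nat.cast_mul, Nat.cast_mul, Nat.cast_sub (by omega)] at this
      push_cast at this; exact this
    simp only [Nat.add_sub_cancel] at this
    push_cast at this ⊢
    rw [le_div_iff₀ (by positivity)]
    have hpos' : (0:ℝ) < M + 1 - (j + 2) := by
      have : ((j + 3 : ℕ) : ℝ) ≤ ((M + 1 : ℕ) : ℝ) := by exact_mod_cast (by omega)
      push_cast at this; linarith
    refine le_of_mul_le_mul_right ?_ hpos'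
    calc _ = (((F.filter (fun R => y ∉ R)).card : ℝ) * (M - (j+1))) * (M+1) := by ring
      _ ≤ (M.choose (j + 1 + 1) * (s / d)) * (M + 1) := by gcongr
      _ = (M.choose (j + 2) * (M + 1)) * (s/d) := by ring
      _ = _ := by rw [hch']; ring
  have h4 : (F.card : ℝ) * (1 / ((s:ℝ) + 1)) ≤ E.card.choose (j+2) * (s / d) / E.card := by
    refine h2.trans ((Finset.sum_le_sum (fun y hy => mul_le_mul_of_nonneg_left (h3 y hy) (hpos y hy).le)).trans ?_)
    rw [← Finset.sum_mul]
    refine mul_le_of_le_one_left (by positivity) (by linarith)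
  rw [le_div_iff₀ hN] at h4
  have hs1 : (0:ℝ) < s + 1 := by positivity
  calc (F.card : ℝ) * E.card = (F.card * (1 / ((s:ℝ) + 1)) * E.card) * (s + 1) := by field_simp
    _ ≤ (E.card.choose (j+2) * (s / d)) * (s + 1) := by gcongr
    _ = _ := by ring

/-- Chebyshev. -/
lemma cheb_s1 (E : Finset ℕ) (w : ℕ → ℝ) (hpos : ∀ x ∈ E, 0 < w x) (d : ℝ) (hd : 0 < d)
    (hwd : ∀ x ∈ E, w x ≤ d) (hs1 : ∑ x ∈ E, w x ≤ 1) (j : ℕ) (hj : j + 3 ≤ E.card)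
    (F : Finset (Finset ℕ)) (hF : F ⊆ E.powersetCard (j+2))
    (hV : ∀ R ∈ F, ∑ x ∈ R, w x ≤ d) (a : ℝ) (ha : 0 ≤ a)
    (hmu : a + d ≤ (j+2) * (∑ x ∈ E, w x) / E.card) :
    (F.card : ℝ) * a^2 ≤ d * E.card.choose (j+3) := by
  have hN : (0:ℝ) < E.card := by exact_mod_cast (by omega : 0 < E.card)
  set σ := ∑ x ∈ E, w x with hσ
  have hσ0 : 0 ≤ σ := Finset.sum_nonneg (fun x hx => (hpos x hx).le)
  have h0 : ∑ x ∈ E, (w x - σ / E.card) = 0 := by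
    rw [Finset.sum_sub_distrib, Finset.sum_const, nsmul_eq_mul, ← hσ]; field_simp; ring
  have h2 := second_moment E (fun x => w x - σ / E.card) j (by omega) h0
  have hQ : ∑ x ∈ E, (w x - σ / E.card)^2 ≤ d := by
    have e : ∑ x ∈ E, (w x - σ / E.card)^2 = ∑ x ∈ E, (w x)^2 - σ^2 / E.card := by
      have : ∀ x ∈ E, (w x - σ / E.card)^2 = (w x)^2 - 2 * (σ / E.card) * w x + (σ / E.card)^2 := by
        intro x _; ring
      rw [Finset.sum_congr rfl this, Finset.sum_add_distrib, Finset.sum_sub_distrib, ← Finset.mul_sum,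
        Finset.sum_const, nsmul_eq_mul, ← hσ]
      field_simp; ring
    have e2 : ∑ x ∈ E, (w x)^2 ≤ ∑ x ∈ E, d * w x := by
      refine Finset.sum_le_sum (fun x hx => ?_)
      rw [sq]; exact mul_le_mul_of_nonneg_right (hwd x hx) (hpos x hx).le
    rw [← Finset.mul_sum, ← hσ] at e2
    have e3 : 0 ≤ σ^2 / E.card := by positivity
    rw [e]; nlinarith
  have h3 : (F.card : ℝ) * a^2 ≤ ∑ B ∈ E.powersetCard (j+2), (∑ x ∈ B, (w x - σ / E.card))^2 := by
    refine le_trans ?_ (Finset.sum_le_sum_of_subset_of_nonneg hF (fun _ _ _ => sq_nonneg _))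
    rw [← nsmul_eq_mul]
    refine Finset.card_nsmul_le_sum F _ _ (fun R hR => ?_)
    have hc := (Finset.mem_powersetCard.1 (hF hR)).2
    rw [Finset.sum_sub_distrib, Finset.sum_const, hc, nsmul_eq_mul]
    have h5 := hV R hR
    push_cast
    rw [mul_div_assoc] at hmu
    nlinarith
  have h6 : ((E.card - 2).choose (j+1) : ℝ) ≤ E.card.choose (j+3) := by
    obtain ⟨M, hM⟩ : ∃ M, E.card = M + 2 := ⟨E.card - 2, by omega⟩
    rw [hM, Nat.add_sub_cancel]
    have : M.choose (j+1) ≤ (M+2).choose (j+3) := by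
      rw [Nat.choose_succ_succ (M+1) (j+2), Nat.choose_succ_succ M (j+1)]; omega
    exact_mod_cast this
  rw [h2] at h3
  refine h3.trans ?_
  rw [mul_comm]
  have : 0 ≤ ∑ x ∈ E, (w x - σ / E.card)^2 := Finset.sum_nonneg (fun _ _ => sq_nonneg _)
  gcongr

set_option maxHeartbeats 1000000 in
lemma regimeH (s : ℕ) (hs : 1 ≤ s) (c : ℝ) (hc : 0 < c) (hc1 : c ≤ 1) : ∃ N0 : ℕ,
    ∀ (E : Finset ℕ) (w : ℕ → ℝ) (x0 : ℝ) (j : ℕ), Set.InjOn w E → (∀ x ∈ E, 0 < w x) →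
    (∀ x ∈ E, w x < x0) → 0 < x0 → ∑ x ∈ E, w x + x0 = 1 → x0 ≤ (s:ℝ) / (s + 1) →
    j + 4 ≤ E.card → N0 ≤ E.card → c * E.card ≤ j + 3 →
    ∀ G H : Finset (Finset ℕ), G ⊆ E.powersetCard (j+2) → H ⊆ E.powersetCard (j+3) →
    (∀ R ∈ G, ∃ m : ℕ, 0 < m ∧ ∑ x ∈ R, w x + x0 = s / m) →
    (∀ R ∈ H, ∃ m : ℕ, 0 < m ∧ ∑ x ∈ R, w x = s / m) →
    (G.card : ℝ) + H.card < E.card.choose (j+3) := by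
  have hs' : (1:ℝ) ≤ s := by exact_mod_cast hs
  set d : ℝ := c^3 / (256 * (s + 1)) with hd
  have hdpos : 0 < d := by positivity
  obtain ⟨N0, hN0⟩ := exists_nat_gt (4 * (s+1) / c * (s / (d * c) + (s + 1) * (s / d)))
  refine ⟨N0, ?_⟩
  intro E w x0 j hinj hpos hlt hx0 hsum hx0s hj hN hk G H hG hH hGv hHv
  set N := E.card with hNdef
  have hNpos : (0:ℝ) < N := by exact_mod_cast (by omega : 0 < N)
  set X : ℝ := (N.choose (j+3) : ℝ) with hX
  have hXpos : 0 < X := by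
    rw [hX]; exact_mod_cast Nat.choose_pos (by omega)
  set σ := ∑ x ∈ E, w x with hσ
  have hσ1 : 1 / ((s:ℝ) + 1) ≤ σ := by
    have e5 : 1 / ((s:ℝ) + 1) = 1 - s / (s + 1) := by field_simp; ring
    rw [e5]; linarith
  -- first count
  set T := (E.powersetCard (j+3)).filter (fun B => d ≤ ∑ x ∈ B, w x) with hT
  have hT1 : (c / (s + 1) - d) * X ≤ T.card := by
    have h := large_count E w (j+2) 1 d hdpos.le (by
      intro B hB
      have := Finset.sum_le_sum_of_subset_of_nonneg (Finset.mem_powersetCard.1 hB).1 (f := w)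
        (fun x hx _ => (hpos x hx).le)
      linarith)
    obtain ⟨M, hM⟩ : ∃ M, N = M + 1 := ⟨N - 1, by omega⟩
    have hch := Nat.add_one_mul_choose_eq M (j+2)
    have hch' : (N:ℝ) * (N-1).choose (j+2) = X * (j+3) := by
      have : (((M+1) * M.choose (j+2) : ℕ) : ℝ) = (((M+1).choose (j+2+1) * (j+2+1) : ℕ) : ℝ) := by rw [hch]
      rw [hX, hM, Nat.add_sub_cancel]
      push_cast at this ⊢
      rw [this]; ring
    have h1 : c * X ≤ (N-1).choose (j+2) := by
      refine le_of_mul_le_mul_left ?_ hNpos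
      rw [hch']; nlinarith
    have h2 : c * X * (1 / (s+1)) ≤ (N-1).choose (j+2) * σ := by gcongr
    rw [mul_one] at h
    have h3 : (N-1).choose (j+2) * σ ≤ T.card + d * X := h
    have : c * X * (1 / (s+1)) = c / (s+1) * X := by ring
    linarith
  have hHsplit := card_split _ H hH (fun B => ∑ x ∈ B, w x) d
  rw [Finset.card_powersetCard] at hHsplit
  set HT := H.filter (fun B => d ≤ ∑ x ∈ B, w x) with hHT
  have hHT1 : (HT.card : ℝ) * N ≤ s / (d * c) * X := by
    have h := good_up E w hinj (j+3) (by omega) HT ((Finset.filter_subset _ _).trans hH) s (by positivity)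
      d hdpos 0 (fun R hR => by
        obtain ⟨m, h1, h2⟩ := hHv R (Finset.mem_filter.1 hR).1
        exact ⟨m, h1, by rw [add_zero, h2]⟩) (fun R hR => by
        rw [add_zero]; exact (Finset.mem_filter.1 hR).2)
    have hch := Nat.choose_succ_right_eq N (j+3)
    have hch' : (N.choose (j+3+1) : ℝ) * (j+4) = X * (N - (j+3)) := by
      have : ((N.choose (j+3+1) * (j+3+1) : ℕ) : ℝ) = ((N.choose (j+3) * (N - (j+3)) : ℕ):ℝ) := by rw [hch]
      rw [Nat.cast_mul, Nat.cast_mul, Nat.cast_sub (by omega)] at this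
      push_cast at this
      rw [← this]; ring
    have hp : (0:ℝ) < N - (j+3) := by
      have : ((j + 4 : ℕ) : ℝ) ≤ N := by exact_mod_cast hj
      push_cast at this; linarith
    have h1 : (HT.card : ℝ) * (j+4) ≤ X * (s / d) := by
      refine le_of_mul_le_mul_right ?_ hp
      calc _ = (HT.card * ((N:ℝ) - (j+3))) * (j+4) := by ring
        _ ≤ (N.choose (j+3+1) * (s / d)) * (j+4) := by
            push_cast at h
            exact mul_le_mul_of_nonneg_right h (by positivity)
        _ = (N.choose (j+3+1) * (j+4)) * (s / d) := by ring
        _ = _ := by rw [hch']; ring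
    refine le_of_mul_le_mul_left ?_ hc
    calc c * (HT.card * N) = HT.card * (c * N) := by ring
      _ ≤ HT.card * (j+4) := by gcongr; linarith
      _ ≤ X * (s / d) := h1
      _ = _ := by field_simp
  set G1 := G.filter (fun R => d ≤ ∑ x ∈ R, w x + x0) with hG1
  set G2 := G.filter (fun R => ¬ d ≤ ∑ x ∈ R, w x + x0) with hG2
  have hGs : (G.card : ℝ) = G1.card + G2.card := by
    have := Finset.card_filter_add_card_filter_not (s := G) (fun R => d ≤ ∑ x ∈ R, w x + x0)
    exact_mod_cast this.symm
  have hG1b : (G1.card : ℝ) * N ≤ (s+1) * (s / d) * X :=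
    through_bound s E w hinj hpos x0 hx0 hsum (j+1) (by omega) G1 ((Finset.filter_subset _ _).trans hG) d hdpos
      (fun R hR => hGv R (Finset.mem_filter.1 hR).1) (fun R hR => (Finset.mem_filter.1 hR).2)
  have hdc : d ≤ c / (256 * (s+1)) := by
    rw [hd]; gcongr
    nlinarith [sq_nonneg c]
  have hG2b : (G2.card : ℝ) ≤ c / (4 * (s+1)) * X := by
    rcases G2.eq_empty_or_nonempty with h | ⟨R, hR⟩
    · rw [h]; simp only [Finset.card_empty, Nat.cast_zero]; positivity
    · have hx0d : x0 < d := by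
        have h1 := not_le.1 (Finset.mem_filter.1 hR).2
        have h2 : 0 ≤ ∑ x ∈ R, w x := Finset.sum_nonneg (fun x hx =>
          (hpos x ((Finset.mem_powersetCard.1 (hG (Finset.mem_filter.1 hR).1)).1 hx)).le)
        linarith
      have hd8 : d ≤ c / 16 := by
        refine hdc.trans ?_
        gcongr
        nlinarith
      have hch := cheb_s1 E w hpos d hdpos (fun x hx => ((hlt x hx).trans hx0d).le) (by linarith) j (by omega) G2
        ((Finset.filter_subset _ _).trans hG) (fun R hR => by
          have h1 := not_le.1 (Finset.mem_filter.1 hR).2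
          linarith) (c / 8) (by positivity) (by
          rw [le_div_iff₀ hNpos]
          have h1 : (1:ℝ)/2 ≤ σ := by linarith
          have h2 : (c / 2) * N ≤ j + 2 := by
            have : (0:ℝ) ≤ j := by positivity
            linarith
          have h3 : (c / 8 + d) * N ≤ (c/4) * N := by gcongr; linarith
          nlinarith)
      have : (G2.card : ℝ) * (c/8)^2 ≤ (c / (4 * (s+1)) * X) * (c/8)^2 := by
        refine hch.trans (le_of_eq ?_)
        change d * X = _
        rw [hd]; field_simp; norm_num
      exact le_of_mul_le_mul_right this (by positivity)
  have hN0' : 4 * (s+1) / c * (s / (d * c) + (s + 1) * (s / d)) < (N:ℝ) :=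
    hN0.trans_le (by exact_mod_cast hN)
  have hfin : (s / (d * c) + (s + 1) * (s / d)) < c / (4 * (s+1)) * (N:ℝ) := by
    have : (s / (d * c) + (s + 1) * (s / d)) = c / (4 * (s+1)) * (4 * (s+1) / c * (s / (d * c) + (s + 1) * (s / d))) := by
      field_simp
    rw [this]; gcongr
  have hA : (HT.card : ℝ) + G1.card < c / (4 * (s+1)) * X := by
    refine lt_of_mul_lt_mul_right ?_ hNpos.le
    calc ((HT.card : ℝ) + G1.card) * N ≤ (s / (d * c) + (s + 1) * (s / d)) * X := by linarith
      _ < c / (4 * (s+1)) * (N:ℝ) * X := by gcongr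
      _ = _ := by ring
  have hB : d * X ≤ c / (256 * (s+1)) * X := by gcongr
  have e1 : c / (256 * (s+1)) * X = (c / (s+1) * X) / 256 := by field_simp
  have e2 : c / (4 * (s+1)) * X = (c / (s+1) * X) / 4 := by field_simp
  have e3 : 0 < c / (s+1) * X := by positivity
  have hHsplit' : (H.card : ℝ) + T.card ≤ X + HT.card := hHsplit
  rw [hGs]
  rw [sub_mul] at hT1
  linarith

lemma good_down' (E : Finset ℕ) (w : ℕ → ℝ) (hinj : Set.InjOn w E) (j : ℕ) (hj : j ≤ E.card)
    (F : Finset (Finset ℕ)) (hF : F ⊆ E.powersetCard (j+1)) (s : ℝ) (hs : 0 ≤ s) (d : ℝ) (hd : 0 < d)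
    (t : ℝ)
    (hV : ∀ R ∈ F, ∃ m : ℕ, 0 < m ∧ ∑ x ∈ R, w x + t = s / m)
    (hV2 : ∀ R ∈ F, d ≤ ∑ x ∈ R, w x + t) :
    (F.card : ℝ) * (E.card - j) ≤ E.card.choose (j+1) * (s / d) := by
  have h := good_down E w hinj j F hF s hs d hd t hV hV2
  have hch := Nat.choose_succ_right_eq E.card j
  have hch' : (E.card.choose (j+1) : ℝ) * (j+1) = E.card.choose j * (E.card - j) := by
    have : ((E.card.choose (j+1) * (j+1) : ℕ) : ℝ) = ((E.card.choose j * (E.card - j) : ℕ):ℝ) := by rw [hch]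
    rw [Nat.cast_mul, Nat.cast_mul, Nat.cast_sub hj] at this
    push_cast at this
    exact this
  have hp : (0:ℝ) < j + 1 := by positivity
  have hp2 : (0:ℝ) ≤ E.card - j := by
    have : (j:ℝ) ≤ E.card := by exact_mod_cast hj
    linarith
  refine le_of_mul_le_mul_right ?_ hp
  calc _ = ((F.card:ℝ) * (j+1)) * (E.card - j) := by ring
    _ ≤ (E.card.choose j * (s / d)) * (E.card - j) := mul_le_mul_of_nonneg_right h hp2
    _ = (E.card.choose j * (E.card - j)) * (s / d) := by ring
    _ = _ := by rw [← hch']; ring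

lemma two_big (s : ℕ) (hs : 1 ≤ s) (E : Finset ℕ) (w : ℕ → ℝ) (x0 : ℝ) (j : ℕ) (hinj : Set.InjOn w E)
    (hpos : ∀ x ∈ E, 0 < w x) (hlt : ∀ x ∈ E, w x < x0)
    (hj : 2 * (j + 2) ≤ E.card) (y : ℕ) (hy : y ∈ E) (hyb : 16 * (s:ℝ) / E.card ≤ w y)
    (G H : Finset (Finset ℕ)) (hG : G ⊆ E.powersetCard (j+1)) (hH : H ⊆ E.powersetCard (j+2))
    (hGv : ∀ R ∈ G, ∃ m : ℕ, 0 < m ∧ ∑ x ∈ R, w x + x0 = s / m)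
    (hHv : ∀ R ∈ H, ∃ m : ℕ, 0 < m ∧ ∑ x ∈ R, w x = s / m) :
    (G.card : ℝ) + H.card < E.card.choose (j+2) := by
  have hs' : (1:ℝ) ≤ s := by exact_mod_cast hs
  obtain ⟨M, hM⟩ : ∃ M, E.card = M + 1 := ⟨E.card - 1, by omega⟩
  have hd : 0 < 16 * (s:ℝ) / E.card := by
    have : (0:ℝ) < E.card := by rw [hM]; positivity
    positivity
  have hsd : (s:ℝ) / (16 * (s:ℝ) / E.card) = (M + 1) / 16 := by
    rw [hM]; push_cast; field_simp
  have hsumnn : ∀ R ⊆ E, 0 ≤ ∑ x ∈ R, w x := fun R hR => Finset.sum_nonneg (fun x hx => (hpos x (hR hx)).le)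
  have hjM : 2 * ((j:ℝ) + 2) ≤ M + 1 := by
    rw [hM] at hj; exact_mod_cast hj
  -- G
  have g1 := good_down' E w hinj j (by omega) G hG s (by positivity) _ hd x0 hGv (fun R hR => by
    have h1 := hsumnn R (Finset.mem_powersetCard.1 (hG hR)).1
    have h2 := hlt y hy
    linarith)
  rw [hsd, hM] at g1
  push_cast at g1
  have g2 : (G.card : ℝ) ≤ (M+1).choose (j+1) / 8 := by
    have h1 : (G.card : ℝ) * ((M+1)/2) ≤ G.card * (M + 1 - j) := by gcongr; linarith
    have h2 : (0:ℝ) < (M+1)/2 := by positivity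
    refine le_of_mul_le_mul_right ?_ h2
    linarith
  have g3 : ((M+1).choose (j+1) : ℝ) ≤ 2 * M.choose (j+1) := by
    have := Nat.choose_mul_succ_eq M (j+1)
    have h : ((M.choose (j+1) * (M+1) : ℕ):ℝ) = (((M+1).choose (j+1) * (M + 1 - (j+1)) : ℕ):ℝ) := by rw [this]
    rw [Nat.cast_mul, Nat.cast_mul, Nat.cast_sub (by omega)] at h
    push_cast at h
    have h2 : (0:ℝ) < (M+1)/2 := by positivity
    have h1 : ((M+1).choose (j+1) : ℝ) * ((M+1)/2) ≤ (M+1).choose (j+1) * (M + 1 - (j + 1)) := by gcongr; linarith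
    refine le_of_mul_le_mul_right ?_ h2
    linarith
  -- H not containing y
  have hce := Finset.card_erase_of_mem hy
  rw [hM, Nat.add_sub_cancel] at hce
  have hsplit := Finset.card_filter_add_card_filter_not (s := H) (fun B => y ∈ B)
  have h1 : (H.filter (fun B => ¬ y ∈ B)).card ≤ M.choose (j+2) := by
    rw [← hce, ← Finset.card_powersetCard]
    refine Finset.card_le_card (fun B hB => ?_)
    obtain ⟨b1, b2⟩ := Finset.mem_filter.1 hB
    have := Finset.mem_powersetCard.1 (hH b1)
    exact Finset.mem_powersetCard.2 ⟨Finset.subset_erase.2 ⟨this.1, b2⟩, this.2⟩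
  set F := (H.filter (fun B => y ∈ B)).image (fun B => B.erase y) with hF
  have hFc : F.card = (H.filter (fun B => y ∈ B)).card := by
    apply Finset.card_image_of_injOn
    intro B hB C hC hBC
    have hB := (Finset.mem_filter.1 hB).2
    have hC := (Finset.mem_filter.1 hC).2
    rw [← Finset.insert_erase hB, ← Finset.insert_erase hC]
    exact congrArg (insert y) hBC
  have hFp : ∀ R ∈ F, ∃ B ∈ H, y ∈ B ∧ R = B.erase y := by
    intro R hR
    obtain ⟨B, hB, rfl⟩ := Finset.mem_image.1 hR
    exact ⟨B, (Finset.mem_filter.1 hB).1, (Finset.mem_filter.1 hB).2, rfl⟩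
  have f1 := good_down' (E.erase y) w (hinj.mono (by simp)) j (by omega) F (by
      intro R hR
      obtain ⟨B, b1, b2, rfl⟩ := hFp R hR
      have := Finset.mem_powersetCard.1 (hH b1)
      refine Finset.mem_powersetCard.2 ⟨Finset.erase_subset_erase _ this.1, ?_⟩
      rw [Finset.card_erase_of_mem b2, this.2]; rfl) s (by positivity) _ hd (w y) (by
      intro R hR
      obtain ⟨B, b1, b2, rfl⟩ := hFp R hR
      rw [Finset.sum_erase_add _ _ b2]
      exact hHv B b1) (by
      intro R hR
      obtain ⟨B, b1, b2, rfl⟩ := hFp R hR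
      have := Finset.mem_powersetCard.1 (hH b1)
      have := hsumnn (B.erase y) ((Finset.erase_subset _ _).trans this.1)
      linarith)
  rw [hsd, hce, hFc] at f1
  have hMpos : (0:ℝ) < M := by
    have : (0:ℝ) ≤ j := by positivity
    linarith
  have f2 : ((H.filter (fun B => y ∈ B)).card : ℝ) ≤ M.choose (j+1) / 4 := by
    have a1 : ((H.filter (fun B => y ∈ B)).card : ℝ) * (M/2) ≤ (H.filter (fun B => y ∈ B)).card * (M - j) := by
      gcongr; linarith
    refine le_of_mul_le_mul_right ?_ (by positivity : (0:ℝ) < M/2)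
    have a2 : (M.choose (j+1) : ℝ) * ((M+1)/16) ≤ M.choose (j+1) * (M / 8) := by
      refine mul_le_mul_of_nonneg_left ?_ (by positivity)
      have : (0:ℝ) ≤ j := by positivity
      linarith
    linarith
  have hc0 : (0:ℝ) < M.choose (j+1) := by exact_mod_cast Nat.choose_pos (by omega)
  rw [hM, Nat.choose_succ_succ]
  have hs2 : (H.card : ℝ) = (H.filter (fun B => y ∈ B)).card + (H.filter (fun B => ¬ y ∈ B)).card := by
    exact_mod_cast hsplit.symm
  have h1' : ((H.filter (fun B => ¬ y ∈ B)).card : ℝ) ≤ M.choose (j+2) := by exact_mod_cast h1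
  push_cast
  have : (M.choose (j+1).succ : ℝ) = M.choose (j+2) := rfl
  rw [hs2]
  linarith

lemma mid_k (s : ℕ) (hs : 1 ≤ s) (E : Finset ℕ) (w : ℕ → ℝ) (j : ℕ) (hinj : Set.InjOn w E)
    (hσ1 : 1 / ((s:ℝ) + 1) ≤ ∑ x ∈ E, w x)
    (hj : 256 * (s:ℝ) * (s + 1) * (j + 2) ≤ E.card) (hw : ∀ x ∈ E, w x ≤ 16 * (s:ℝ) / E.card)
    (hjK : 256 * (s:ℝ)^2 * (s + 1)^2 ≤ j + 2)
    (G H : Finset (Finset ℕ)) (hG : G ⊆ E.powersetCard (j+1)) (hH : H ⊆ E.powersetCard (j+2))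
    (hHv : ∀ R ∈ H, ∃ m : ℕ, 0 < m ∧ ∑ x ∈ R, w x = s / m) :
    (G.card : ℝ) + H.card < E.card.choose (j+2) := by
  have hs' : (1:ℝ) ≤ s := by exact_mod_cast hs
  set N := E.card with hN
  set q : ℝ := (s:ℝ) * (s+1) with hq
  have hq2 : 2 ≤ q := by rw [hq]; nlinarith
  have hj' : 256 * q * (j+2) ≤ N := by rw [hq]; linarith
  have hjK' : 256 * q^2 ≤ j + 2 := by rw [hq]; linarith
  have hjN : 512 * ((j:ℝ)+2) ≤ N := by nlinarith
  have hjN' : 512 * (j+2) ≤ N := by exact_mod_cast hjN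
  have hNpos : (0:ℝ) < N := by
    have : (0:ℝ) ≤ j := by positivity
    linarith
  set X : ℝ := (N.choose (j+2) : ℝ) with hX
  have hXpos : 0 < X := by
    rw [hX]; exact_mod_cast Nat.choose_pos (by omega)
  set d : ℝ := (j+2) / (2 * (s+1) * N) with hd
  have hdpos : 0 < d := by positivity
  set T := (E.powersetCard (j+2)).filter (fun B => d ≤ ∑ x ∈ B, w x) with hT
  have hT1 : X / (32 * q) ≤ T.card := by
    have h := large_count E w (j+1) ((j+2) * (16 * (s:ℝ) / N)) d hdpos.le (by
      intro B hB
      have hB := Finset.mem_powersetCard.1 hB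
      have := Finset.sum_le_card_nsmul B w _ (fun x hx => hw x (hB.1 hx))
      rw [hB.2, nsmul_eq_mul] at this
      have e : (((j + 2 : ℕ)) : ℝ) = j + 2 := by push_cast; ring
      rw [e] at this
      exact this)
    obtain ⟨M, hM⟩ : ∃ M, N = M + 1 := ⟨N - 1, by omega⟩
    have hch := Nat.add_one_mul_choose_eq M (j+1)
    have hch' : (N:ℝ) * (N-1).choose (j+1) = X * (j+2) := by
      have : (((M+1) * M.choose (j+1) : ℕ) : ℝ) = (((M+1).choose (j+1+1) * (j+1+1) : ℕ) : ℝ) := by rw [hch]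
      rw [hX, hM, Nat.add_sub_cancel]
      push_cast at this ⊢
      rw [this]; ring
    have h1 : ((N-1).choose (j+1) : ℝ) = X * (j+2) / N := by
      rw [eq_div_iff hNpos.ne', ← hch']; ring
    have h2 : X * (j+2) / N * (1 / (s+1)) ≤ T.card * ((j+2) * (16 * (s:ℝ) / N)) + d * X := by
      refine le_trans ?_ h
      change _ ≤ ((N-1).choose (j+1) : ℝ) * _
      rw [h1]; gcongr
    rw [hd] at h2
    have h3 : (0:ℝ) < (j+2) * (16 * (s:ℝ) / N) := by positivity
    refine le_of_mul_le_mul_right ?_ h3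
    have h4 : X / (32 * q) * ((j+2) * (16 * (s:ℝ) / N)) = X * (j+2) / N * (1 / (s+1)) - (j+2) / (2 * (s+1) * N) * X := by
      rw [hq]; field_simp; ring
    linarith
  have hHsplit := card_split _ H hH (fun B => ∑ x ∈ B, w x) d
  rw [Finset.card_powersetCard] at hHsplit
  set HT := H.filter (fun B => d ≤ ∑ x ∈ B, w x) with hHT
  have hHT1 : (HT.card : ℝ) ≤ X / (64 * q) := by
    have h := good_down' E w hinj (j+1) (by omega) HT ((Finset.filter_subset _ _).trans hH) s (by positivity)
      d hdpos 0 (fun R hR => by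
        obtain ⟨m, h1, h2⟩ := hHv R (Finset.mem_filter.1 hR).1
        exact ⟨m, h1, by rw [add_zero, h2]⟩) (fun R hR => by
        rw [add_zero]; exact (Finset.mem_filter.1 hR).2)
    have h1 : (HT.card : ℝ) * (N/2) ≤ HT.card * (N - ((j+1 : ℕ):ℝ)) := by
      gcongr; push_cast; linarith
    have h2 : (HT.card : ℝ) * (N/2) ≤ X * (s / d) := h1.trans h
    have h3 : (s:ℝ) / d = 2 * q * N / (j+2) := by rw [hd, hq]; field_simp
    have h4 : 2 * q * N / (j+2) ≤ N / (128 * q) := by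
      rw [div_le_div_iff₀ (by positivity) (by positivity)]
      nlinarith
    have h5 : (HT.card : ℝ) * (N/2) ≤ X * (N / (128 * q)) := by
      refine h2.trans ?_
      rw [h3]; gcongr
    refine le_of_mul_le_mul_right (h5.trans (le_of_eq ?_)) (by positivity : (0:ℝ) < N/2)
    field_simp; norm_num
  have hGc : (G.card : ℝ) ≤ X / (128 * q) := by
    have h1 : (G.card : ℝ) ≤ N.choose (j+1) := by
      have := Finset.card_le_card hG
      rw [Finset.card_powersetCard] at this
      exact_mod_cast this
    refine h1.trans ?_
    have hch := Nat.choose_succ_right_eq N (j+1)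
    have hch' : X * (j+2) = N.choose (j+1) * (N - (j+1)) := by
      have : ((N.choose (j+1+1) * (j+1+1) : ℕ) : ℝ) = ((N.choose (j+1) * (N - (j+1)) : ℕ):ℝ) := by rw [hch]
      rw [Nat.cast_mul, Nat.cast_mul, Nat.cast_sub (by omega)] at this
      push_cast at this
      rw [← this]; ring
    rw [le_div_iff₀ (by positivity)]
    have h2 : (0:ℝ) < j + 2 := by positivity
    refine le_of_mul_le_mul_right ?_ h2
    rw [hch', mul_assoc]
    gcongr
    nlinarith
  have hHsplit' : (H.card : ℝ) + T.card ≤ X + HT.card := hHsplit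
  have e1 : X / (32 * q) = X / q / 32 := by field_simp
  have e2 : X / (64 * q) = X / q / 64 := by field_simp
  have e3 : X / (128 * q) = X / q / 128 := by field_simp
  have e4 : 0 < X / q := by positivity
  linarith

lemma curve_arith (a1 a2 a3 b1 b2 b3 : ℕ) (L P Q θ : ℝ) (hθ : 0 < θ) (hQ : 0 < Q)
    (e1 : (1:ℝ) / a1 - 1 / b1 = θ) (e2 : (1:ℝ) / a2 - 1 / b2 = θ) (e3 : (1:ℝ) / a3 - 1 / b3 = θ)
    (ha1 : Q ≤ a1) (ha2 : Q ≤ a2) (ha3 : Q ≤ a3) (hb1 : (b1:ℝ) ≤ P) (hb2 : (b2:ℝ) ≤ P) (hb3 : (b3:ℝ) ≤ P)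
    (pb1 : 0 < b1) (pb2 : 0 < b2) (pb3 : 0 < b3)
    (h12 : a1 ≠ a2) (h13 : a1 ≠ a3) (h23 : a2 ≠ a3)
    (l12 : |(a2:ℝ) - a1| ≤ L) (l13 : |(a3:ℝ) - a1| ≤ L) (l23 : |(a3:ℝ) - a2| ≤ L) :
    1 ≤ L^3 * θ * (P / Q)^3 := by
  have pa1 : (0:ℝ) < a1 := hQ.trans_le ha1
  have pa2 : (0:ℝ) < a2 := hQ.trans_le ha2
  have pa3 : (0:ℝ) < a3 := hQ.trans_le ha3
  have qb1 : (0:ℝ) < b1 := by exact_mod_cast pb1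
  have qb2 : (0:ℝ) < b2 := by exact_mod_cast pb2
  have qb3 : (0:ℝ) < b3 := by exact_mod_cast pb3
  set D : ℤ := ((b3:ℤ) - b2) * (a2 - a1) - (b2 - b1) * (a3 - a2) with hD
  have key : ((D : ℤ) : ℝ) = ((a2:ℝ) - a1) * (a3 - a1) * (a3 - a2) * θ * (b1 / a1 * (b2 / a2) * (b3 / a3)) := by
    have f : ∀ a b : ℝ, 0 < a → 0 < b → 1 / a - 1 / b = θ → b - a = θ * a * b := by
      intro a b ha hb h
      rw [← h]; field_simp
    have f1 := f _ _ pa1 qb1 e1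
    have f2 := f _ _ pa2 qb2 e2
    have f3 := f _ _ pa3 qb3 e3
    have g : ∀ a b a' b' : ℝ, 0 < a → 0 < a' → b - a = θ * a * b → b' - a' = θ * a' * b' →
        b' - b = (a' - a) * (b / a) * (b' / a') := by
      intro a b a' b' ha ha' h h'
      field_simp
      linear_combination (-(a'*b')) * h + (a * b) * h'
    have g12 := g _ _ _ _ pa1 pa2 f1 f2
    have g23 := g _ _ _ _ pa2 pa3 f2 f3
    have g13 := g _ _ _ _ pa1 pa3 f1 f3
    have r1 : (b1:ℝ) / a1 = 1 + θ * b1 := by field_simp; linarith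
    have r3 : (b3:ℝ) / a3 = 1 + θ * b3 := by field_simp; linarith
    have r : (b3:ℝ) / a3 - b1 / a1 = θ * ((a3 - a1) * (b1 / a1) * (b3 / a3)) := by
      rw [← g13, r1, r3]; ring
    rw [hD]; push_cast
    rw [g12, g23]
    linear_combination ((a2:ℝ) - a1) * (a3 - a2) * (b2 / a2) * r
  have hDne : D ≠ 0 := by
    intro h0
    have : ((D : ℤ) : ℝ) ≠ 0 := by
      rw [key]
      have n12 : ((a2:ℝ) - a1) ≠ 0 := sub_ne_zero.2 (by exact_mod_cast h12.symm)
      have n13 : ((a3:ℝ) - a1) ≠ 0 := sub_ne_zero.2 (by exact_mod_cast h13.symm)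
      have n23 : ((a3:ℝ) - a2) ≠ 0 := sub_ne_zero.2 (by exact_mod_cast h23.symm)
      positivity
    apply this; rw [h0]; simp
  have hD1 : (1:ℝ) ≤ |((D:ℤ):ℝ)| := by
    have := Int.one_le_abs hDne
    exact_mod_cast this
  refine hD1.trans ?_
  rw [key]
  have hb : ∀ a b : ℝ, 0 < b → b ≤ P → Q ≤ a → b / a ≤ P / Q := by
    intro a b h0 h1 h2
    have : 0 ≤ P := h0.le.trans h1
    gcongr
  have k1 := hb _ _ qb1 hb1 ha1
  have k2 := hb _ _ qb2 hb2 ha2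
  have k3 := hb _ _ qb3 hb3 ha3
  have hL : 0 ≤ L := (abs_nonneg _).trans l12
  have hPQ : 0 ≤ P / Q := le_trans (by positivity) k1
  rw [abs_mul, abs_mul, abs_mul, abs_mul, abs_of_pos hθ,
    abs_of_pos (by positivity : (0:ℝ) < b1 / a1 * (b2 / a2) * (b3 / a3))]
  calc |(a2:ℝ) - a1| * |(a3:ℝ) - a1| * |(a3:ℝ) - a2| * θ * (b1 / a1 * (b2 / a2) * (b3 / a3))
      ≤ L * L * L * θ * (P / Q * (P / Q) * (P / Q)) := by gcongr
    _ = _ := by ring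

lemma curve (s N k q : ℕ) (hs : 1 ≤ s) (hq : q = s * (s+1)) (hk : 0 < k) (Y : Finset ℕ) (w : ℕ → ℝ)
    (hinj : Set.InjOn w Y) (p p' : ℝ) (hp' : 0 ≤ p') (hpp : p' < p)
    (h1 : ∀ y ∈ Y, ∃ m : ℕ, 0 < m ∧ p + w y = s / m)
    (h2 : ∀ y ∈ Y, ∃ m : ℕ, 0 < m ∧ p' + w y = s / m)
    (h3 : ∀ y ∈ Y, p + w y ≤ 16 * s * k / N)
    (h4 : ∀ y ∈ Y, 1 / (2 * (s + 1) * N) ≤ w y)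
    (h5 : N ≤ 64 * q * Y.card) (h6 : 512 * q ≤ N) :
    N ≤ (1024 * q^2)^3 * (32 * q * k)^3 * (16 * k) := by
  have hs' : (1:ℝ) ≤ s := by exact_mod_cast hs
  have hq0 : 0 < q := by rw [hq]; positivity
  have hN0 : 0 < N := by omega
  have hNr : (0:ℝ) < N := by exact_mod_cast hN0
  have hkr : (0:ℝ) < k := by exact_mod_cast hk
  have hqr : (q:ℝ) = s * (s+1) := by rw [hq]; push_cast; ring
  have H1 : ∀ y, ∃ m : ℕ, y ∈ Y → 0 < m ∧ p + w y = s / m := by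
    intro y
    by_cases hy : y ∈ Y
    · obtain ⟨m, hm⟩ := h1 y hy; exact ⟨m, fun _ => hm⟩
    · exact ⟨0, fun h => absurd h hy⟩
  have H2 : ∀ y, ∃ m : ℕ, y ∈ Y → 0 < m ∧ p' + w y = s / m := by
    intro y
    by_cases hy : y ∈ Y
    · obtain ⟨m, hm⟩ := h2 y hy; exact ⟨m, fun _ => hm⟩
    · exact ⟨0, fun h => absurd h hy⟩
  choose f hf using H1
  choose g hg using H2
  have hwpos : ∀ y ∈ Y, 0 < w y := fun y hy => lt_of_lt_of_le (by positivity) (h4 y hy)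
  have finj : Set.InjOn f Y := by
    intro y hy z hz hyz
    have a := (hf y hy).2
    have b := (hf z hz).2
    rw [hyz] at a
    exact hinj hy hz (by linarith)
  -- bounds
  have ub : ∀ v : ℝ, ∀ m : ℕ, 0 < m → v = s / m → 1 / (2 * (s + 1) * (N:ℝ)) ≤ v → (m:ℝ) ≤ 2 * q * N := by
    intro v m hm hv hle
    have hm' : (0:ℝ) < m := by exact_mod_cast hm
    rw [hv, div_le_div_iff₀ (by positivity) hm'] at hle
    rw [hqr]; linarith
  have fub : ∀ y ∈ Y, (f y : ℝ) ≤ 2 * q * N := fun y hy =>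
    ub _ _ (hf y hy).1 (hf y hy).2 (by have := h4 y hy; linarith)
  have gub : ∀ y ∈ Y, (g y : ℝ) ≤ 2 * q * N := fun y hy =>
    ub _ _ (hg y hy).1 (hg y hy).2 (by have := h4 y hy; linarith)
  have flb : ∀ y ∈ Y, (N:ℝ) / (16 * k) ≤ f y := by
    intro y hy
    have hm' : (0:ℝ) < f y := by exact_mod_cast (hf y hy).1
    have := h3 y hy
    rw [(hf y hy).2, div_le_div_iff₀ hm' hNr] at this
    rw [div_le_iff₀ (by positivity)]
    have h' : (s:ℝ) * N ≤ s * (f y * (16 * k)) := by linarith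
    exact le_of_mul_le_mul_left h' (by positivity)
  set L : ℕ := 1024 * q^2 with hL
  have hL0 : 0 < L := by positivity
  -- pigeonhole
  have hmaps : ∀ y ∈ Y, f y / L ∈ Finset.range (2 * q * N / L + 1) := by
    intro y hy
    rw [Finset.mem_range, Nat.lt_succ_iff]
    apply Nat.div_le_div_right
    exact_mod_cast fub y hy
  have hcard : (Finset.range (2 * q * N / L + 1)).card * 2 < Y.card := by
    rw [Finset.card_range]
    have e : 2 * q * N / L = N / (512 * q) := by
      rw [hL, show 1024 * q^2 = (2 * q) * (512 * q) by ring]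
      exact Nat.mul_div_mul_left _ _ (by positivity)
    rw [e]
    have h8 : 512 * q * (N / (512 * q)) ≤ N := Nat.mul_div_le _ _
    have h9 : 1 ≤ N / (512 * q) := (Nat.one_le_div_iff (by positivity)).2 h6
    set r := N / (512 * q)
    have h10 : 512 * q * r ≤ 64 * q * Y.card := h8.trans h5
    have h11 : 64 * q * (8 * r) ≤ 64 * q * Y.card := by linarith
    have := Nat.le_of_mul_le_mul_left h11 (by positivity)
    omega
  obtain ⟨b, -, hb⟩ := Finset.exists_lt_card_fiber_of_mul_lt_card_of_maps_to hmaps hcard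
  obtain ⟨y1, m1, y2, m2, y3, m3, n12, n13, n23⟩ := Finset.two_lt_card.1 hb
  obtain ⟨m1, c1⟩ := Finset.mem_filter.1 m1
  obtain ⟨m2, c2⟩ := Finset.mem_filter.1 m2
  obtain ⟨m3, c3⟩ := Finset.mem_filter.1 m3
  have close : ∀ y z, f y / L = b → f z / L = b → |(f z : ℝ) - f y| ≤ L := by
    intro y z hy hz
    have a1 := Nat.div_add_mod (f y) L
    have a2 := Nat.div_add_mod (f z) L
    have a3 := Nat.mod_lt (f y) hL0
    have a4 := Nat.mod_lt (f z) hL0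
    rw [hy] at a1; rw [hz] at a2
    rw [abs_le]
    constructor
    · have : f y ≤ f z + L := by omega
      have : (f y : ℝ) ≤ f z + L := by exact_mod_cast this
      linarith
    · have : f z ≤ f y + L := by omega
      have : (f z : ℝ) ≤ f y + L := by exact_mod_cast this
      linarith
  have hθ : ∀ y ∈ Y, (1:ℝ) / f y - 1 / g y = (p - p') / s := by
    intro y hy
    have a := (hf y hy).2
    have b := (hg y hy).2
    have hm' : (0:ℝ) < f y := by exact_mod_cast (hf y hy).1
    have hm'' : (0:ℝ) < g y := by exact_mod_cast (hg y hy).1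
    have e : p - p' = s / f y - s / g y := by linarith
    rw [e]; field_simp
  have hθ0 : 0 < (p - p') / s := by
    have : 0 < p - p' := by linarith
    positivity
  have fin := curve_arith (f y1) (f y2) (f y3) (g y1) (g y2) (g y3) L (2 * q * N) (N / (16 * k)) ((p - p') / s)
    hθ0 (by positivity) (hθ _ m1) (hθ _ m2) (hθ _ m3) (flb _ m1) (flb _ m2) (flb _ m3)
    (gub _ m1) (gub _ m2) (gub _ m3) (hg _ m1).1 (hg _ m2).1 (hg _ m3).1
    (fun h => n12 (finj m1 m2 h)) (fun h => n13 (finj m1 m3 h)) (fun h => n23 (finj m2 m3 h))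
    (close _ _ c1 c2) (close _ _ c1 c3) (close _ _ c2 c3)
  have hθ1 : (p - p') / s ≤ 16 * k / N := by
    rw [← hθ _ m1]
    have hm' : (0:ℝ) < f y1 := by exact_mod_cast (hf y1 m1).1
    have hm'' : (0:ℝ) < g y1 := by exact_mod_cast (hg y1 m1).1
    have a : (1:ℝ) / g y1 > 0 := by positivity
    have b := flb _ m1
    have : (1:ℝ) / f y1 ≤ 16 * k / N := by
      rw [div_le_iff₀ (by positivity)] at b
      rw [div_le_div_iff₀ hm' hNr]; linarith
    linarith
  have hPQ : (2 * q * N : ℝ) / (N / (16 * k)) = 32 * q * k := by field_simp; ring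
  rw [hPQ] at fin
  have fin2 : (1:ℝ) ≤ L^3 * (16 * k / N) * (32 * q * k)^3 := fin.trans (by gcongr)
  have fin3 : (N:ℝ) ≤ (L:ℝ)^3 * (32 * q * k)^3 * (16 * k) := by
    calc (N:ℝ) = 1 * N := by ring
      _ ≤ (L^3 * (16 * k / N) * (32 * q * k)^3) * N := by gcongr
      _ = _ := by field_simp
  exact_mod_cast fin3

lemma exists_U (E : Finset ℕ) (j : ℕ) (hj : 2 * (j+2) ≤ E.card) (H : Finset (Finset ℕ))
    (hbad : (E.powersetCard (j+2) \ H).card ≤ E.card.choose (j+1)) :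
    ∃ U ∈ E.powersetCard (j+2),
      ((U ×ˢ (E \ U)).filter (fun p => insert p.2 (U.erase p.1) ∉ H)).card ≤ 2 * (j+2)^2 := by
  by_contra hcon
  push Not at hcon
  set bp : Finset ℕ → Finset (ℕ × ℕ) := fun U =>
    (U ×ˢ (E \ U)).filter (fun p => insert p.2 (U.erase p.1) ∉ H) with hbp
  set N := E.card with hN
  have h1 : ((E.powersetCard (j+2)).sigma bp).card ≤
      ((E.powersetCard (j+2) \ H).sigma (fun V => V ×ˢ E)).card := by
    refine Finset.card_le_card_of_injOn
      (fun t => ⟨insert t.2.2 (t.1.erase t.2.1), (t.2.2, t.2.1)⟩) ?_ ?_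
    · rintro ⟨U, x, y⟩ ht
      have ht := Finset.mem_sigma.1 ht
      simp only [hbp, Finset.mem_filter, Finset.mem_product, Finset.mem_sdiff, Finset.mem_powersetCard] at ht
      obtain ⟨⟨hUE, hUc⟩, ⟨hx, hyE, hyU⟩, hnH⟩ := ht
      simp only [Finset.coe_sigma, Set.mem_sigma_iff, Finset.mem_coe, Finset.mem_product, Finset.mem_sdiff, Finset.mem_powersetCard]
      refine ⟨⟨⟨Finset.insert_subset hyE ((Finset.erase_subset _ _).trans hUE), ?_⟩, hnH⟩, Finset.mem_insert_self _ _, hUE hx⟩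
      rw [Finset.card_insert_of_notMem (fun h => hyU (Finset.mem_of_mem_erase h)), Finset.card_erase_of_mem hx, hUc]
      omega
    · rintro ⟨U, x, y⟩ ht ⟨U', x', y'⟩ ht' heq
      have ht := Finset.mem_sigma.1 ht
      have ht' := Finset.mem_sigma.1 ht'
      simp only [hbp, Finset.mem_filter, Finset.mem_product, Finset.mem_sdiff, Finset.mem_powersetCard] at ht ht'
      obtain ⟨⟨hUE, hUc⟩, ⟨hx, hyE, hyU⟩, hnH⟩ := ht
      obtain ⟨⟨hUE', hUc'⟩, ⟨hx', hyE', hyU'⟩, hnH'⟩ := ht'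
      simp only [Sigma.mk.injEq, heq_eq_eq, Prod.mk.injEq] at heq
      obtain ⟨hV, rfl, rfl⟩ := heq
      have e1 : U.erase x = U'.erase x := by
        rw [← Finset.erase_insert (fun h => hyU (Finset.mem_of_mem_erase h) : y ∉ U.erase x),
          ← Finset.erase_insert (fun h => hyU' (Finset.mem_of_mem_erase h) : y ∉ U'.erase x), hV]
      have e2 : U = U' := by
        rw [← Finset.insert_erase hx, ← Finset.insert_erase hx', e1]
      subst e2; rfl
  rw [Finset.card_sigma, Finset.card_sigma] at h1
  have h2 : ∑ V ∈ E.powersetCard (j+2) \ H, (V ×ˢ E).card = (E.powersetCard (j+2) \ H).card * ((j+2) * N) := by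
    rw [Finset.sum_const_nat]
    intro V hV
    rw [Finset.card_product, (Finset.mem_powersetCard.1 (Finset.mem_sdiff.1 hV).1).2]
  have h3 : N.choose (j+2) * (2 * (j+2)^2 + 1) ≤ ∑ U ∈ E.powersetCard (j+2), (bp U).card := by
    rw [hN, ← Finset.card_powersetCard (j+2) E, ← smul_eq_mul]
    exact Finset.card_nsmul_le_sum _ _ _ (fun U hU => hcon U hU)
  rw [h2] at h1
  have h4 : N.choose (j+2) * (2 * (j+2)^2 + 1) ≤ N.choose (j+1) * ((j+2) * N) :=
    h3.trans (h1.trans (Nat.mul_le_mul_right _ hbad))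
  have h5 := Nat.choose_succ_right_eq N (j+1)
  have h6 : N ≤ 2 * (N - (j+1)) := by omega
  have h7 : N.choose (j+1) * ((j+2) * N) ≤ N.choose (j+2) * (2 * (j+2)^2) := by
    calc N.choose (j+1) * ((j+2) * N) ≤ N.choose (j+1) * ((j+2) * (2 * (N - (j+1)))) := by gcongr
      _ = (N.choose (j+1) * (N - (j+1))) * (2 * (j+2)) := by ring
      _ = N.choose (j+2) * (2 * (j+2)^2) := by rw [← h5]; ring
  have h8 : 0 < N.choose (j+2) := Nat.choose_pos (by omega)
  nlinarith

lemma small_k_s1 (s q : ℕ) (hs : 1 ≤ s) (hq : q = s * (s+1)) (E : Finset ℕ) (w : ℕ → ℝ) (j : ℕ)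
    (hinj : Set.InjOn w E) (hpos : ∀ x ∈ E, 0 < w x)
    (hσ1 : 1 / ((s:ℝ) + 1) ≤ ∑ x ∈ E, w x)
    (hw : ∀ x ∈ E, w x ≤ 16 * (s:ℝ) / E.card)
    (hj : 2 * (j+2) ≤ E.card) (hq1 : 512 * q ≤ E.card)
    (hq2 : 64 * q * ((j+2) + 2 * (j+2)^2) ≤ E.card)
    (hq3 : (1024 * q^2)^3 * (32 * q * (j+2))^3 * (16 * (j+2)) < E.card)
    (G H : Finset (Finset ℕ)) (hG : G ⊆ E.powersetCard (j+1)) (hH : H ⊆ E.powersetCard (j+2))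
    (hHv : ∀ R ∈ H, ∃ m : ℕ, 0 < m ∧ ∑ x ∈ R, w x = s / m) :
    G.card + H.card < E.card.choose (j+2) := by
  by_contra hcon
  push Not at hcon
  have hs' : (1:ℝ) ≤ s := by exact_mod_cast hs
  have hq0 : 0 < q := by rw [hq]; positivity
  have hqr : (q:ℝ) = s * (s+1) := by rw [hq]; push_cast; ring
  have hGc := Finset.card_le_card hG
  rw [Finset.card_powersetCard] at hGc
  obtain ⟨U, hU, hUb⟩ := exists_U E j hj H (by
    rw [Finset.card_sdiff_of_subset hH, Finset.card_powersetCard]; omega)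
  obtain ⟨hUE, hUc⟩ := Finset.mem_powersetCard.1 hU
  set N := E.card with hN
  have hNr : (0:ℝ) < N := by exact_mod_cast (by omega : 0 < N)
  set bp := (U ×ˢ (E \ U)).filter (fun p => insert p.2 (U.erase p.1) ∉ H) with hbp
  set Y0 := E.filter (fun y => 1 / (2 * ((s:ℝ) + 1) * N) ≤ w y) with hY0
  set Y := (Y0 \ U) \ bp.image Prod.snd with hY
  have hY0c : N ≤ 32 * q * Y0.card := by
    have h := Finset.sum_filter_add_sum_filter_not E (fun y => 1 / (2 * ((s:ℝ) + 1) * N) ≤ w y) w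
    have a1 : ∑ y ∈ Y0, w y ≤ Y0.card * (16 * (s:ℝ) / N) := by
      rw [← nsmul_eq_mul]
      exact Finset.sum_le_card_nsmul _ _ _ (fun y hy => hw y (Finset.mem_filter.1 hy).1)
    have a2 : ∑ y ∈ E.filter (fun y => ¬ 1 / (2 * ((s:ℝ) + 1) * N) ≤ w y), w y ≤ N * (1 / (2 * ((s:ℝ) + 1) * N)) := by
      refine (Finset.sum_le_card_nsmul _ _ (1 / (2 * ((s:ℝ) + 1) * N)) (fun y hy => (not_le.1 (Finset.mem_filter.1 hy).2).le)).trans ?_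
      rw [nsmul_eq_mul]
      have : (E.filter (fun y => ¬ 1 / (2 * ((s:ℝ) + 1) * N) ≤ w y)).card ≤ N := Finset.card_le_card (Finset.filter_subset _ _)
      have : ((E.filter (fun y => ¬ 1 / (2 * ((s:ℝ) + 1) * N) ≤ w y)).card : ℝ) ≤ N := by exact_mod_cast this
      exact mul_le_mul_of_nonneg_right this (by positivity)
    have a3 : 1 / ((s:ℝ) + 1) ≤ Y0.card * (16 * (s:ℝ) / N) + N * (1 / (2 * ((s:ℝ) + 1) * N)) := by linarith
    have a4 : N * (1 / (2 * ((s:ℝ) + 1) * N)) = 1 / ((s:ℝ) + 1) / 2 := by field_simp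
    have a5 : 1 / ((s:ℝ) + 1) / 2 ≤ Y0.card * (16 * (s:ℝ) / N) := by linarith
    have a6 : (N:ℝ) ≤ 32 * q * Y0.card := by
      rw [hqr]
      have : 1 / ((s:ℝ) + 1) / 2 * (2 * (s+1) * N) ≤ Y0.card * (16 * (s:ℝ) / N) * (2 * (s+1) * N) := by gcongr
      have e1 : 1 / ((s:ℝ) + 1) / 2 * (2 * (s+1) * N) = N := by field_simp
      have e2 : Y0.card * (16 * (s:ℝ) / N) * (2 * (s+1) * N) = 32 * (s * (s+1)) * Y0.card := by field_simp; ring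
      linarith
    exact_mod_cast a6
  have hYc : N ≤ 64 * q * Y.card := by
    have a1 : Y0.card ≤ Y.card + ((j+2) + 2 * (j+2)^2) := by
      have b1 := Finset.le_card_sdiff U Y0
      have b2 := Finset.le_card_sdiff (bp.image Prod.snd) (Y0 \ U)
      have b3 : (bp.image Prod.snd).card ≤ bp.card := Finset.card_image_le
      rw [← hY] at b2
      omega
    have a2 : 64 * q * Y0.card ≤ 64 * q * Y.card + 64 * q * ((j+2) + 2 * (j+2)^2) := by
      rw [← mul_add]; exact Nat.mul_le_mul_left _ a1
    have a3 : 2 * N ≤ 64 * q * Y0.card := by linarith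
    omega
  have hYmem : ∀ y ∈ Y, y ∈ E ∧ 1 / (2 * ((s:ℝ) + 1) * N) ≤ w y ∧ y ∉ U ∧ ∀ x ∈ U, insert y (U.erase x) ∈ H := by
    intro y hy
    rw [hY, Finset.mem_sdiff, Finset.mem_sdiff] at hy
    obtain ⟨⟨y1, y2⟩, y3⟩ := hy
    obtain ⟨y4, y5⟩ := Finset.mem_filter.1 y1
    refine ⟨y4, y5, y2, fun x hx => ?_⟩
    by_contra hnot
    apply y3
    refine Finset.mem_image.2 ⟨(x, y), ?_, rfl⟩
    simp only [hbp, Finset.mem_filter, Finset.mem_product, Finset.mem_sdiff]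
    exact ⟨⟨hx, y4, y2⟩, hnot⟩
  have hex : ∃ x ∈ U, ∃ x' ∈ U, w x < w x' := by
    obtain ⟨x, hx, x', hx', hne⟩ := Finset.one_lt_card.1 (by omega : 1 < U.card)
    have hwne : w x ≠ w x' := fun h => hne (hinj (hUE hx) (hUE hx') h)
    rcases lt_or_gt_of_ne hwne with h | h
    · exact ⟨x, hx, x', hx', h⟩
    · exact ⟨x', hx', x, hx, h⟩
  obtain ⟨x, hx, x', hx', hxx⟩ := hex
  have hgood : ∀ x ∈ U, ∀ y ∈ Y, ∃ m : ℕ, 0 < m ∧ ∑ z ∈ U.erase x, w z + w y = s / m := by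
    intro x hx y hy
    obtain ⟨y1, y2, y3, y4⟩ := hYmem y hy
    obtain ⟨m, hm, hv⟩ := hHv _ (y4 x hx)
    refine ⟨m, hm, ?_⟩
    rw [← hv, Finset.sum_insert (fun h => y3 (Finset.mem_of_mem_erase h)), add_comm]
  have e1 := Finset.sum_erase_add U w hx
  have e2 := Finset.sum_erase_add U w hx'
  have := curve s N (j+2) q hs hq (by omega) Y w (hinj.mono (fun y hy => (hYmem y hy).1))
    (∑ z ∈ U.erase x, w z) (∑ z ∈ U.erase x', w z)
    (Finset.sum_nonneg (fun z hz => (hpos z (hUE (Finset.mem_of_mem_erase hz))).le)) (by linarith)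
    (hgood x hx) (hgood x' hx') (by
      intro y hy
      obtain ⟨y1, y2, y3, y4⟩ := hYmem y hy
      have h1 := Finset.sum_le_card_nsmul (U.erase x) w _ (fun z hz => hw z (hUE (Finset.mem_of_mem_erase hz)))
      rw [Finset.card_erase_of_mem hx, hUc, nsmul_eq_mul] at h1
      have h2 := hw y y1
      have e : ((j + 2 - 1 : ℕ) : ℝ) = j + 1 := by
        rw [show j + 2 - 1 = j + 1 by omega]; push_cast; ring
      rw [e] at h1
      have e' : 16 * (s:ℝ) * ((j+2 : ℕ) : ℝ) / N = (j+1) * (16 * (s:ℝ) / N) + 16 * (s:ℝ) / N := by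
        push_cast; ring
      rw [e']; linarith)
    (fun y hy => (hYmem y hy).2.1) hYc hq1
  omega

/-- Core statement: if the largest weight is at most `s/(s+1)`, there are too few good sets. -/
lemma core (s : ℕ) (hs : 1 ≤ s) : ∃ N0 : ℕ,
    ∀ (E : Finset ℕ) (w : ℕ → ℝ) (x0 : ℝ) (j : ℕ), Set.InjOn w E → (∀ x ∈ E, 0 < w x) →
    (∀ x ∈ E, w x < x0) → 0 < x0 → ∑ x ∈ E, w x + x0 = 1 → x0 ≤ (s:ℝ) / (s + 1) →
    j + 3 ≤ E.card → N0 ≤ E.card →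
    ∀ G H : Finset (Finset ℕ), G ⊆ E.powersetCard (j+1) → H ⊆ E.powersetCard (j+2) →
    (∀ R ∈ G, ∃ m : ℕ, 0 < m ∧ ∑ x ∈ R, w x + x0 = s / m) →
    (∀ R ∈ H, ∃ m : ℕ, 0 < m ∧ ∑ x ∈ R, w x = s / m) →
    G.card + H.card < E.card.choose (j+2) := by
  have hs' : (1:ℝ) ≤ s := by exact_mod_cast hs
  set q : ℕ := s * (s+1) with hq
  have hq0 : 2 ≤ q := by rw [hq]; nlinarith
  have hqr : (q:ℝ) = s * (s+1) := by rw [hq]; push_cast; ring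
  have hqr2 : (2:ℝ) ≤ q := by exact_mod_cast hq0
  obtain ⟨N1, hN1⟩ := regimeH s hs (1 / (256 * q)) (by positivity) (by
    rw [div_le_one (by positivity)]; linarith)
  set K : ℕ := 256 * q^2 with hK
  refine ⟨N1 + 512 * q + 1 + (2 * K + 64 * q * (K + 2 * K^2) + (1024 * q^2)^3 * (32 * q * K)^3 * (16 * K)), ?_⟩
  intro E w x0 j hinj hpos hlt hx0 hsum hx0s hj hN G H hG hH hGv hHv
  have hσ1 : 1 / ((s:ℝ) + 1) ≤ ∑ x ∈ E, w x := by
    have e5 : 1 / ((s:ℝ) + 1) = 1 - s / (s + 1) := by field_simp; ring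
    rw [e5]; linarith
  by_cases hreg : E.card ≤ 256 * q * (j + 2)
  · obtain ⟨i, rfl⟩ : ∃ i, j = i + 1 := by
      rcases j with _ | i
      · omega
      · exact ⟨i, rfl⟩
    have := hN1 E w x0 i hinj hpos hlt hx0 hsum hx0s (by omega) (by omega) (by
      rw [one_div, inv_mul_le_iff₀ (by positivity)]
      have : ((E.card : ℕ) : ℝ) ≤ ((256 * q * (i + 1 + 2) : ℕ) : ℝ) := by exact_mod_cast hreg
      push_cast at this
      linarith) G H hG hH hGv hHv
    exact_mod_cast this
  · push Not at hreg
    have h2 : 2 * (j+2) ≤ E.card := by nlinarith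
    by_cases hbig : ∃ y ∈ E, 16 * (s:ℝ) / E.card ≤ w y
    · obtain ⟨y, hy, hyb⟩ := hbig
      have := two_big s hs E w x0 j hinj hpos hlt h2 y hy hyb G H hG hH hGv hHv
      exact_mod_cast this
    · push Not at hbig
      have hw : ∀ x ∈ E, w x ≤ 16 * (s:ℝ) / E.card := fun x hx => (hbig x hx).le
      by_cases hk : K ≤ j + 2
      · have := mid_k s hs E w j hinj hσ1 (by
          have : ((256 * q * (j + 2) : ℕ) : ℝ) ≤ ((E.card : ℕ) : ℝ) := by exact_mod_cast hreg.le
          push_cast at this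
          rw [hqr] at this
          linarith) hw (by
          have : ((K : ℕ) : ℝ) ≤ ((j + 2 : ℕ) : ℝ) := by exact_mod_cast hk
          rw [hK] at this
          push_cast at this
          rw [hqr] at this
          linarith) G H hG hH hHv
        exact_mod_cast this
      · push Not at hk
        have a1 : 64 * q * ((j+2) + 2 * (j+2)^2) ≤ 64 * q * (K + 2 * K^2) := by gcongr
        have a2 : (1024 * q^2)^3 * (32 * q * (j+2))^3 * (16 * (j+2)) ≤ (1024 * q^2)^3 * (32 * q * K)^3 * (16 * K) := by
          gcongr
        refine small_k_s1 s q hs hq E w j hinj hpos hσ1 hw h2 (by omega) (by omega) ?_ G H hG hH hHv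
        generalize (1024 * q^2)^3 * (32 * q * (j+2))^3 * (16 * (j+2)) = u at *
        generalize (1024 * q^2)^3 * (32 * q * K)^3 * (16 * K) = v at *
        omega


end Helpers

theorem zbarsky_general_case (s : ℕ) (hs : 1 ≤ s) :
    {p : ℕ × ℕ | 1 < p.1 ∧ p.1 + 1 < p.2 ∧
      ∃ A : Finset ℕ, (∀ a ∈ A, 0 < a) ∧ A.card = p.2 ∧
        (p.2 - 1).choose p.1 ≤ dsk s p.1 A ∧ ¬ IsAntiPencil s p.1 A}.Finite := by
  obtain ⟨N0, hN0⟩ := core s hs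
  refine Set.Finite.subset ((Finset.range (N0 + 1) ×ˢ Finset.range (N0 + 1)).finite_toSet) ?_
  rintro ⟨k, n⟩ ⟨hk, hkn, A, hApos, hAc, hd, hnot⟩
  simp only at hk hkn hAc hd hnot
  simp only [Finset.coe_product, Set.mem_prod, Finset.mem_coe, Finset.mem_range]
  by_contra hlarge
  have hnN : N0 + 1 ≤ n := by omega
  clear hlarge
  apply hnot
  have hne : A.Nonempty := by rw [← Finset.card_pos]; omega
  refine ⟨hne, ?_⟩
  set z := A.max' hne with hz
  have hzA : z ∈ A := A.max'_mem hne
  set E := A.erase z with hE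
  have hEc : E.card = n - 1 := by rw [hE, Finset.card_erase_of_mem hzA, hAc]
  set F := (A.powersetCard k).filter (fun B => B.sum id ∣ s * A.sum id) with hF
  have hd' : (n-1).choose k ≤ F.card := hd
  set S : ℝ := ((A.sum id : ℕ) : ℝ) with hS
  have hSN : 0 < A.sum id := Finset.sum_pos (fun a ha => hApos a ha) hne
  have hSpos : 0 < S := by rw [hS]; exact_mod_cast hSN
  set w : ℕ → ℝ := fun a => a / S with hw
  have hwsum : ∀ B : Finset ℕ, ∑ x ∈ B, w x = ((B.sum id : ℕ) : ℝ) / S := by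
    intro B
    simp only [hw]
    rw [← Finset.sum_div]; push_cast; rfl
  have hinj : Set.InjOn w E := by
    intro a _ b _ hab
    simp only [hw] at hab
    rw [div_left_inj' hSpos.ne'] at hab
    exact_mod_cast hab
  have hpos : ∀ x ∈ A, 0 < w x := by
    intro x hx
    have : (0:ℝ) < x := by exact_mod_cast hApos x hx
    simp only [hw]; positivity
  have hlt : ∀ x ∈ E, w x < w z := by
    intro x hx
    have h1 := Finset.mem_erase.1 hx
    have h2 : x < z := lt_of_le_of_ne (A.le_max' x h1.2) h1.1
    have h3 : (x:ℝ) < z := by exact_mod_cast h2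
    simp only [hw]; gcongr
  have hgood : ∀ B ∈ F, ∃ m : ℕ, 0 < m ∧ ∑ x ∈ B, w x = s / m := by
    intro B hB
    obtain ⟨b1, m, hm⟩ := Finset.mem_filter.1 hB
    have hm0 : 0 < m := by
      rcases Nat.eq_zero_or_pos m with h | h
      · rw [h, mul_zero] at hm
        have : 0 < s * A.sum id := by positivity
        omega
      · exact h
    refine ⟨m, hm0, ?_⟩
    rw [hwsum]
    have hm' : (0:ℝ) < m := by exact_mod_cast hm0
    rw [div_eq_div_iff hSpos.ne' hm'.ne', hS]
    exact_mod_cast hm.symm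
  have hsumA : ∑ x ∈ A, w x = 1 := by rw [hwsum, ← hS]; exact div_self hSpos.ne'
  have hsum : ∑ x ∈ E, w x + w z = 1 := by
    rw [hE, Finset.sum_erase_add _ _ hzA, hsumA]
  have key : (s:ℝ) / (s + 1) < w z := by
    by_contra hcon
    push Not at hcon
    obtain ⟨j, rfl⟩ : ∃ j, k = j + 2 := ⟨k - 2, by omega⟩
    have hc := hN0 E w (w z) j hinj (fun x hx => hpos x (Finset.mem_of_mem_erase hx)) hlt (hpos z hzA) hsum hcon
      (by omega) (by omega) ((F.filter (fun B => z ∈ B)).image (fun B => B.erase z)) (F.filter (fun B => ¬ z ∈ B))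
      (by
        intro R hR
        obtain ⟨B, hB, rfl⟩ := Finset.mem_image.1 hR
        obtain ⟨b1, b2⟩ := Finset.mem_filter.1 hB
        have b3 := Finset.mem_powersetCard.1 (Finset.mem_filter.1 b1).1
        refine Finset.mem_powersetCard.2 ⟨Finset.erase_subset_erase _ b3.1, ?_⟩
        rw [Finset.card_erase_of_mem b2, b3.2]; rfl)
      (by
        intro B hB
        obtain ⟨b1, b2⟩ := Finset.mem_filter.1 hB
        have b3 := Finset.mem_powersetCard.1 (Finset.mem_filter.1 b1).1
        exact Finset.mem_powersetCard.2 ⟨Finset.subset_erase.2 ⟨b3.1, b2⟩, b3.2⟩)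
      (by
        intro R hR
        obtain ⟨B, hB, rfl⟩ := Finset.mem_image.1 hR
        obtain ⟨b1, b2⟩ := Finset.mem_filter.1 hB
        rw [Finset.sum_erase_add _ _ b2]
        exact hgood B b1)
      (fun B hB => hgood B (Finset.mem_filter.1 hB).1)
    rw [Finset.card_image_of_injOn, Finset.card_filter_add_card_filter_not, hEc] at hc
    · omega
    · intro B hB C hC hBC
      have hB := (Finset.mem_filter.1 hB).2
      have hC := (Finset.mem_filter.1 hC).2
      rw [← Finset.insert_erase hB, ← Finset.insert_erase hC]
      exact congrArg (insert z) hBC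
  refine Finset.eq_of_subset_of_card_le ?_ (by rw [Finset.card_powersetCard, hEc]; exact hd')
  intro B hB
  have b3 := Finset.mem_powersetCard.1 (Finset.mem_filter.1 hB).1
  refine Finset.mem_powersetCard.2 ⟨Finset.subset_erase.2 ⟨b3.1, fun hzB => ?_⟩, b3.2⟩
  obtain ⟨m, hm, hv⟩ := hgood B hB
  have h1 : ∑ x ∈ B, w x < 1 := by
    rw [← hsumA]
    obtain ⟨y, hyA, hyB⟩ := Finset.exists_of_ssubset (Finset.ssubset_iff_subset_ne.2 ⟨b3.1, fun h => by
      rw [h] at b3; omega⟩)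
    exact Finset.sum_lt_sum_of_subset b3.1 hyA hyB (hpos y hyA) (fun x hx _ => (hpos x hx).le)
  have h2 := frac_le s m hm _ hv h1
  have h3 := Finset.single_le_sum (f := w) (fun x hx => (hpos x (b3.1 hx)).le) hzB
  linarith
end

section
/- Fix a positive integer s ≥ 1. Then d^s(k,n) = C(n-1,k) for all but finitely many pairs of integers (k,n) with 1 < k < n-1 (the number of exceptional pairs depending on s). Formally: the set of pairs (k,n) with 1 < k < n-1 such that d^s(k,n) ≠ C(n-1,k) is finite. -/
/-- `d^s(k, n)`: the maximum of `d^s_k(A)` over all sets `A` of `n` positive integers. -/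
noncomputable def dsn (s k n : ℕ) : ℕ :=
  sSup {t : ℕ | ∃ A : Finset ℕ, (∀ a ∈ A, 0 < a) ∧ A.card = n ∧ dsk s k A = t}

lemma fib {α β : Type*} [DecidableEq β] (s : Finset α) (t : Finset β) (f : α → β) (c X : ℕ)
    (hf : ∀ a ∈ s, f a ∈ t) (h : ∀ b ∈ t, (s.filter (fun a => f a = b)).card * c ≤ X) :
    s.card * c ≤ t.card * X := by
  rw [Finset.card_eq_sum_card_fiberwise (f := f) (t := t) (fun a ha => hf a ha), Finset.sum_mul]
  simpa using Finset.sum_le_card_nsmul t _ X h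

lemma fixed_sum (A : Finset ℕ) (r v : ℕ) :
    ((A.powersetCard (r+1)).filter (fun R => ∑ x ∈ R, x = v)).card * (A.card - r)
      ≤ A.card.choose (r+1) := by
  have h1 : ((A.powersetCard (r+1)).filter (fun R => ∑ x ∈ R, x = v)).card * (r+1)
      ≤ (A.powersetCard r).card * 1 := by
    apply Finset.card_mul_le_card_mul (fun (R D : Finset ℕ) => D ⊆ R)
    · intro R hR
      simp only [Finset.mem_filter, Finset.mem_powersetCard] at hR
      have : (A.powersetCard r).bipartiteAbove (fun (R D : Finset ℕ) => D ⊆ R) R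
          = R.powersetCard r := by
        ext D
        simp only [Finset.mem_bipartiteAbove, Finset.mem_powersetCard]
        constructor
        · rintro ⟨⟨a, b⟩, c⟩; exact ⟨c, b⟩
        · rintro ⟨a, b⟩; exact ⟨⟨a.trans hR.1.1, b⟩, a⟩
      rw [this, Finset.card_powersetCard, hR.1.2, Nat.choose_succ_self_right]
    · intro D hD
      simp only [Finset.mem_powersetCard] at hD
      rw [Finset.card_le_one]
      intro R hR R' hR'
      simp only [Finset.mem_bipartiteBelow, Finset.mem_filter, Finset.mem_powersetCard] at hR hR'
      have key : ∀ R : Finset ℕ, D ⊆ R → R.card = r + 1 → ∑ x ∈ R, x = v →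
          R = insert (v - ∑ x ∈ D, x) D := by
        intro R h1 h2 h3
        obtain ⟨a, ha, rfl⟩ := Finset.exists_eq_insert_iff.2 ⟨h1, by rw [h2, hD.2]⟩
        rw [Finset.sum_insert ha] at h3
        congr 1; omega
      rw [key R hR.2 hR.1.1.2 hR.1.2, key R' hR'.2 hR'.1.1.2 hR'.1.2]
  rw [Finset.card_powersetCard, mul_one] at h1
  have h2 := Nat.choose_succ_right_eq A.card r
  have h3 := Nat.mul_le_mul_right (A.card - r) h1
  rw [← h2] at h3
  refine Nat.le_of_mul_le_mul_right (c := r+1) ?_ (Nat.succ_pos r)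
  calc _ = _ := by ring
    _ ≤ _ := h3

lemma star (A : Finset ℕ) (x : ℕ) (hx : x ∈ A) (k : ℕ) (p : Finset ℕ → Prop) [DecidablePred p] :
    ((A.powersetCard (k+1)).filter (fun B => x ∈ B ∧ p B)).card
      = (((A.erase x).powersetCard k).filter (fun R => p (insert x R))).card := by
  apply Finset.card_nbij' (fun B => B.erase x) (fun R => insert x R)
  · intro B hB
    simp only [Finset.coe_filter, Finset.mem_powersetCard, Set.mem_ofPred_eq] at hB ⊢
    rw [Finset.insert_erase hB.2.1, Finset.card_erase_of_mem hB.2.1]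
    exact ⟨⟨Finset.erase_subset_erase _ hB.1.1, by omega⟩, hB.2.2⟩
  · intro R hR
    simp only [Finset.coe_filter, Finset.mem_powersetCard, Set.mem_ofPred_eq] at hR ⊢
    have hxR : x ∉ R := fun h => by simpa using hR.1.1 h
    refine ⟨⟨?_, by rw [Finset.card_insert_of_notMem hxR, hR.1.2]⟩, by simp, hR.2⟩
    exact Finset.insert_subset hx (hR.1.1.trans (Finset.erase_subset _ _))
  · intro B hB
    simp only [Finset.coe_filter, Finset.mem_powersetCard, Set.mem_ofPred_eq] at hB
    exact Finset.insert_erase hB.2.1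
  · intro R hR
    simp only [Finset.coe_filter, Finset.mem_powersetCard, Set.mem_ofPred_eq] at hR
    have hxR : x ∉ R := fun h => by simpa using hR.1.1 h
    exact Finset.erase_insert hxR

lemma star_all (A : Finset ℕ) (x : ℕ) (hx : x ∈ A) (k : ℕ) :
    ((A.powersetCard (k+1)).filter (fun B => x ∈ B)).card = (A.card - 1).choose k := by
  have := star A x hx k (fun _ => True)
  simpa [Finset.card_erase_of_mem hx] using this

lemma star_two (A : Finset ℕ) (x y : ℕ) (hx : x ∈ A) (hy : y ∈ A) (hxy : x ≠ y) (k : ℕ) :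
    ((A.powersetCard (k+2)).filter (fun B => x ∈ B ∧ y ∈ B)).card = (A.card - 2).choose k := by
  have h1 := star A x hx (k+1) (fun B => y ∈ B)
  have h2 := star_all (A.erase x) y (by simp [hy, hxy.symm]) k
  rw [h1]
  rw [Finset.card_erase_of_mem hx] at h2
  simp only [Finset.mem_insert, hxy.symm, false_or]
  rw [h2]; congr 1

lemma star_fixed (A : Finset ℕ) (x : ℕ) (hx : x ∈ A) (k v : ℕ) :
    ((A.powersetCard (k+2)).filter (fun B => x ∈ B ∧ ∑ y ∈ B, y = v)).card * (A.card - 1 - k)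
      ≤ (A.card - 1).choose (k+1) := by
  rw [star A x hx (k+1) (fun B => ∑ y ∈ B, y = v)]
  have h := fixed_sum (A.erase x) k (v - x)
  rw [Finset.card_erase_of_mem hx] at h
  refine le_trans (Nat.mul_le_mul_right _ (Finset.card_le_card ?_)) h
  intro R hR
  simp only [Finset.mem_filter, Finset.mem_powersetCard] at hR ⊢
  have hxR : x ∉ R := fun h => by simpa using hR.1.1 h
  rw [Finset.sum_insert hxR] at hR
  exact ⟨hR.1, by omega⟩

lemma star_good (A : Finset ℕ) (W : ℕ) (hW : 0 < W) (x : ℕ) (hx : x ∈ A) (hx0 : 0 < x) (k : ℕ) :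
    ((A.powersetCard (k+2)).filter (fun B => x ∈ B ∧ ∑ y ∈ B, y ∣ W)).card * (A.card - 1 - k)
      ≤ (W / x) * (A.card - 1).choose (k+1) := by
  have := fib ((A.powersetCard (k+2)).filter (fun B => x ∈ B ∧ ∑ y ∈ B, y ∣ W))
    (Finset.Icc 1 (W / x)) (fun B => W / ∑ y ∈ B, y) (A.card - 1 - k) ((A.card - 1).choose (k+1))
    ?_ ?_
  · simpa using this
  · intro B hB
    simp only [Finset.mem_filter, Finset.mem_powersetCard] at hB
    have h1 : x ≤ ∑ y ∈ B, y := Finset.single_le_sum (f := fun y => y) (by simp) hB.2.1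
    have h2 := Nat.le_of_dvd hW hB.2.2
    simp only [Finset.mem_Icc]
    exact ⟨Nat.div_pos h2 (by omega), Nat.div_le_div_left h1 hx0⟩
  · intro m hm
    refine le_trans (Nat.mul_le_mul_right _ (Finset.card_le_card ?_)) (star_fixed A x hx k (W/m))
    intro B hB
    simp only [Finset.mem_filter, Finset.mem_powersetCard] at hB ⊢
    refine ⟨hB.1.1, hB.1.2.1, ?_⟩
    rw [← hB.2]
    exact (Nat.div_div_self hB.1.2.2 (by omega)).symm

lemma close (Y : Finset ℕ) (H : ℕ) (hY : ∀ y ∈ Y, y ≤ H) (h2 : 2 ≤ Y.card) :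
    ∃ x ∈ Y, ∃ x' ∈ Y, x < x' ∧ (x' - x) * (Y.card - 1) ≤ H := by
  set L := Y.card - 1 with hL
  have hL0 : 0 < L := by omega
  set d := H / L + 1 with hd
  have hlt : H < d * L := by
    have := Nat.lt_mul_div_succ H hL0
    rw [hd, mul_comm]; exact this
  have hd0 : 0 < d := Nat.succ_pos _
  have hc : (Finset.range L).card < Y.card := by simp; omega
  obtain ⟨x, hx, y, hy, hne, he⟩ := Finset.exists_ne_map_eq_of_card_lt_of_maps_to (f := fun y => y / d) hc
    (by
      intro y hy
      simp only [Finset.coe_range, Set.mem_Iio]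
      apply (Nat.div_lt_iff_lt_mul hd0).2
      have := hY y hy
      nlinarith)
  have key : ∀ x y : ℕ, x / d = y / d → x < y → (y - x) * L ≤ H := by
    intro x y h1 h2
    have e1 := Nat.div_add_mod x d
    have e2 := Nat.div_add_mod y d
    have e3 := Nat.mod_lt x hd0
    have e4 := Nat.mod_lt y hd0
    rw [h1] at e1
    have : y - x ≤ H / L := by omega
    calc _ ≤ H / L * L := Nat.mul_le_mul_right _ this
      _ ≤ H := Nat.div_mul_le_self _ _
  rcases lt_or_gt_of_ne hne with h | h
  · exact ⟨x, hx, y, hy, h, key x y he h⟩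
  · exact ⟨y, hy, x, hx, h, key y x he.symm h⟩

lemma pair_good (A : Finset ℕ) (W : ℕ) (hW : 0 < W) (x d D : ℕ) (hx : x ∈ A) (hx' : x + d ∈ A)
    (hx0 : 0 < x) (hd : 0 < d) (hD : d * W ≤ D * x ^ 2) (k : ℕ) :
    ((((A.erase x).erase (x+d)).powersetCard (k+1)).filter
      (fun R => x + ∑ y ∈ R, y ∣ W ∧ x + d + ∑ y ∈ R, y ∣ W)).card * (A.card - 2 - k)
      ≤ D * (A.card - 2).choose (k+1) := by
  have hc : ((A.erase x).erase (x+d)).card = A.card - 2 := by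
    rw [Finset.card_erase_of_mem (by simp [hx']; omega), Finset.card_erase_of_mem hx]; omega
  have key : ∀ t : ℕ, x + t ∣ W → x + d + t ∣ W →
      W * d = (W / (x + t) - W / (x + d + t)) * ((x + t) * (x + d + t)) := by
    intro t h1 h2
    obtain ⟨m, hm⟩ := h1
    obtain ⟨m', hm'⟩ := h2
    have e1 : W / (x + t) = m := by rw [hm]; exact Nat.mul_div_cancel_left _ (by omega)
    have e2 : W / (x + d + t) = m' := by rw [hm']; exact Nat.mul_div_cancel_left _ (by omega)
    rw [e1, e2]
    have hle : m' ≤ m := by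
      rw [← e1, ← e2]; exact Nat.div_le_div_left (by omega) (by omega)
    obtain ⟨e, rfl⟩ := Nat.exists_eq_add_of_le hle
    rw [Nat.add_sub_cancel_left]
    zify at *
    linear_combination (x + d + t : ℤ) * hm - (x + t : ℤ) * hm'
  have := fib ((((A.erase x).erase (x+d)).powersetCard (k+1)).filter
      (fun R => x + ∑ y ∈ R, y ∣ W ∧ x + d + ∑ y ∈ R, y ∣ W))
    (Finset.Icc 1 D) (fun R => W / (x + ∑ y ∈ R, y) - W / (x + d + ∑ y ∈ R, y))
    (A.card - 2 - k) ((A.card - 2).choose (k+1)) ?_ ?_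
  · simpa using this
  · intro R hR
    simp only [Finset.mem_filter] at hR
    have h := key _ hR.2.1 hR.2.2
    have hpos : 0 < W * d := by positivity
    simp only [Finset.mem_Icc]
    set e := W / (x + ∑ y ∈ R, y) - W / (x + d + ∑ y ∈ R, y)
    constructor
    · by_contra h0
      have : e = 0 := by omega
      rw [this] at h; omega
    · by_contra hlt
      push Not at hlt
      have h3 : x ^ 2 ≤ (x + ∑ y ∈ R, y) * (x + d + ∑ y ∈ R, y) := by
        rw [sq]; exact Nat.mul_le_mul (by omega) (by omega)
      have h4 : (D + 1) * x ^ 2 ≤ W * d := by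
        rw [h]; exact Nat.mul_le_mul hlt h3
      have : 0 < x ^ 2 := by positivity
      nlinarith
  · intro e he
    by_cases hne : ((((((A.erase x).erase (x+d)).powersetCard (k+1)).filter
      (fun R => x + ∑ y ∈ R, y ∣ W ∧ x + d + ∑ y ∈ R, y ∣ W)).filter
      (fun R => W / (x + ∑ y ∈ R, y) - W / (x + d + ∑ y ∈ R, y) = e))).Nonempty
    · obtain ⟨R0, hR0⟩ := hne
      have hf := fixed_sum ((A.erase x).erase (x+d)) k (∑ y ∈ R0, y)
      rw [hc] at hf
      refine le_trans (Nat.mul_le_mul_right _ (Finset.card_le_card ?_)) hf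
      intro R hR
      simp only [Finset.mem_filter] at hR hR0 ⊢
      refine ⟨hR.1.1, ?_⟩
      have h1 := key _ hR.1.2.1 hR.1.2.2
      have h2 := key _ hR0.1.2.1 hR0.1.2.2
      rw [hR.2] at h1
      rw [hR0.2] at h2
      have he1 : 0 < e := by simp at he; omega
      have h3 := Nat.eq_of_mul_eq_mul_left he1 (h1.symm.trans h2)
      rcases lt_trichotomy (∑ y ∈ R, y) (∑ y ∈ R0, y) with h | h | h
      · exact absurd h3 (Nat.mul_lt_mul'' (by omega) (by omega)).ne
      · exact h
      · exact absurd h3 (Nat.mul_lt_mul'' (by omega) (by omega)).ne'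
    · rw [Finset.not_nonempty_iff_eq_empty] at hne
      rw [hne]; simp


lemma finish_bad (A : Finset ℕ) (W k : ℕ) (hA : 0 < A.card) (U : Finset (Finset ℕ))
    (hU : ∀ B ∈ U, B ∈ A.powersetCard (k+2) ∧ ¬ (∑ y ∈ B, y ∣ W))
    (hc : (A.card - 1).choose (k+1) ≤ U.card) :
    ((A.powersetCard (k+2)).filter (fun B => ∑ y ∈ B, y ∣ W)).card ≤ (A.card - 1).choose (k+2) := by
  have h1 := Finset.card_filter_add_card_filter_not (s := A.powersetCard (k+2))
    (fun B => ∑ y ∈ B, y ∣ W)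
  have h2 : U.card ≤ ((A.powersetCard (k+2)).filter (fun B => ¬ (∑ y ∈ B, y ∣ W))).card :=
    Finset.card_le_card (fun B hB => by simpa [Finset.mem_filter] using hU B hB)
  rw [Finset.card_powersetCard] at h1
  have h3 := Nat.choose_succ_succ (A.card - 1) (k+1)
  rw [show (A.card - 1).succ = A.card by omega] at h3
  simp only [Nat.succ_eq_add_one] at h3
  have h4 : k + 1 + 1 = k + 2 := rfl
  rw [h4] at h3
  omega

lemma case_two_big (A : Finset ℕ) (W : ℕ) (hW : 0 < W) (hpos : ∀ a ∈ A, 0 < a) (k : ℕ)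
    (hk : 12 * (k + 2) ≤ A.card) (x y : ℕ) (hx : x ∈ A) (hy : y ∈ A) (hxy : x ≠ y)
    (hx8 : 8 * (W / x) ≤ A.card) (hy8 : 8 * (W / y) ≤ A.card) :
    ((A.powersetCard (k+2)).filter (fun B => ∑ y ∈ B, y ∣ W)).card ≤ (A.card - 1).choose (k+2) := by
  have key : ∀ x ∈ A, 8 * (W / x) ≤ A.card →
      3 * (A.card - 1).choose (k+1) ≤
        4 * ((A.powersetCard (k+2)).filter (fun B => x ∈ B ∧ ¬ (∑ y ∈ B, y ∣ W))).card := by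
    intro x hx hx8
    have h1 := star_good A W hW x hx (hpos x hx) k
    have h2 := star_all A x hx (k+1)
    have h3 := Finset.card_filter_add_card_filter_not
      (s := (A.powersetCard (k+2)).filter (fun B => x ∈ B)) (fun B => ∑ y ∈ B, y ∣ W)
    rw [Finset.filter_filter, Finset.filter_filter] at h3
    set G := ((A.powersetCard (k+2)).filter (fun B => x ∈ B ∧ ∑ y ∈ B, y ∣ W)).card
    set X := (A.card - 1).choose (k+1)
    have h4 : A.card ≤ 2 * (A.card - 1 - k) := by omega
    have h5 : 0 < A.card := by omega
    have h6 : 4 * G ≤ X := by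
      refine Nat.le_of_mul_le_mul_right (c := A.card) ?_ h5
      calc 4 * G * A.card ≤ 4 * G * (2 * (A.card - 1 - k)) := Nat.mul_le_mul_left _ h4
        _ = 8 * (G * (A.card - 1 - k)) := by ring
        _ ≤ 8 * (W / x * X) := Nat.mul_le_mul_left _ h1
        _ = 8 * (W / x) * X := by ring
        _ ≤ A.card * X := Nat.mul_le_mul_right _ hx8
        _ = X * A.card := by ring
    have h7 : k + 1 + 1 = k + 2 := rfl
    rw [h7] at h2
    omega
  have k1 := key x hx hx8
  have k2 := key y hy hy8
  set P := (A.powersetCard (k+2)).filter (fun B => x ∈ B ∧ ¬ (∑ y ∈ B, y ∣ W))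
  set Q := (A.powersetCard (k+2)).filter (fun B => y ∈ B ∧ ¬ (∑ y ∈ B, y ∣ W))
  have hPQ : (P ∩ Q).card ≤ (A.card - 2).choose k := by
    rw [← star_two A x y hx hy hxy k]
    apply Finset.card_le_card
    intro B hB
    simp only [P, Q, Finset.mem_inter, Finset.mem_filter] at hB ⊢
    exact ⟨hB.1.1, hB.1.2.1, hB.2.2.1⟩
  have hu := Finset.card_union_add_card_inter P Q
  have h8 := Nat.add_one_mul_choose_eq (A.card - 2) k
  rw [show A.card - 2 + 1 = A.card - 1 by omega] at h8
  have h9 : 4 * (A.card - 2).choose k ≤ (A.card - 1).choose (k+1) := by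
    refine Nat.le_of_mul_le_mul_right (c := A.card - 1) ?_ (by omega)
    calc 4 * (A.card - 2).choose k * (A.card - 1) = 4 * ((A.card - 1) * (A.card - 2).choose k) := by ring
      _ = (A.card - 1).choose (k+1) * (4 * (k + 1)) := by rw [h8]; ring
      _ ≤ _ := Nat.mul_le_mul_left _ (by omega)
  apply finish_bad A W k (by omega) (P ∪ Q)
  · intro B hB
    simp only [P, Q, Finset.mem_union, Finset.mem_filter] at hB
    tauto
  · omega

lemma pair_bad (A : Finset ℕ) (W : ℕ) (hW : 0 < W) (x d D : ℕ) (hx : x ∈ A) (hx' : x + d ∈ A)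
    (hx0 : 0 < x) (hd : 0 < d) (hD : d * W ≤ D * x ^ 2) (k : ℕ) (hk : 4 * D ≤ A.card - 2 - k)
    (hk' : k + 2 < A.card) :
    3 * (A.card - 2).choose (k+1) ≤ 4 * ((A.powersetCard (k+2)).filter
      (fun B => (x ∈ B ∨ x + d ∈ B) ∧ ¬ (∑ y ∈ B, y ∣ W))).card := by
  have h1 := pair_good A W hW x d D hx hx' hx0 hd hD k
  have hc : ((A.erase x).erase (x+d)).card = A.card - 2 := by
    rw [Finset.card_erase_of_mem (by simp [hx']; omega), Finset.card_erase_of_mem hx]; omega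
  have h2 := Finset.card_filter_add_card_filter_not
    (s := ((A.erase x).erase (x+d)).powersetCard (k+1))
    (fun R => x + ∑ y ∈ R, y ∣ W ∧ x + d + ∑ y ∈ R, y ∣ W)
  rw [Finset.card_powersetCard, hc] at h2
  have h3 : ((((A.erase x).erase (x+d)).powersetCard (k+1)).filter
      (fun R => ¬ (x + ∑ y ∈ R, y ∣ W ∧ x + d + ∑ y ∈ R, y ∣ W))).card ≤
      ((A.powersetCard (k+2)).filter
      (fun B => (x ∈ B ∨ x + d ∈ B) ∧ ¬ (∑ y ∈ B, y ∣ W))).card := by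
    have hmem : ∀ R ∈ ((A.erase x).erase (x+d)).powersetCard (k+1),
        R ⊆ A ∧ x ∉ R ∧ x + d ∉ R ∧ R.card = k + 1 := by
      intro R hR
      rw [Finset.mem_powersetCard] at hR
      refine ⟨fun a ha => ?_, fun h => ?_, fun h => ?_, hR.2⟩
      · have := hR.1 ha
        simp only [Finset.mem_erase] at this
        exact this.2.2
      · have := hR.1 h
        simp at this
      · have := hR.1 h
        simp at this
    apply Finset.card_le_card_of_injOn
      (fun R => if x + ∑ y ∈ R, y ∣ W then insert (x + d) R else insert x R)
    · intro R hR
      simp only [Finset.coe_filter, Set.mem_ofPred_eq] at hR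
      obtain ⟨m1, m2, m3, m4⟩ := hmem R hR.1
      simp only [Finset.coe_filter, Set.mem_ofPred_eq, Finset.mem_powersetCard]
      split_ifs with hdv
      · refine ⟨⟨Finset.insert_subset hx' m1, by rw [Finset.card_insert_of_notMem m3, m4]⟩, by simp, ?_⟩
        rw [Finset.sum_insert m3]
        tauto
      · refine ⟨⟨Finset.insert_subset hx m1, by rw [Finset.card_insert_of_notMem m2, m4]⟩, by simp, ?_⟩
        rw [Finset.sum_insert m2]
        exact hdv
    · have key : ∀ R ∈ ((A.erase x).erase (x+d)).powersetCard (k+1),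
          ((if x + ∑ y ∈ R, y ∣ W then insert (x + d) R else insert x R).erase x).erase (x+d) = R := by
        intro R hR
        obtain ⟨m1, m2, m3, m4⟩ := hmem R hR
        ext a
        simp only [Finset.mem_erase]
        split_ifs
        · simp only [Finset.mem_insert]
          constructor
          · tauto
          · intro h
            exact ⟨fun h' => m3 (h' ▸ h), fun h' => m2 (h' ▸ h), Or.inr h⟩
        · simp only [Finset.mem_insert]
          constructor
          · tauto
          · intro h
            exact ⟨fun h' => m3 (h' ▸ h), fun h' => m2 (h' ▸ h), Or.inr h⟩
      intro R hR R' hR' h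
      simp only [Finset.coe_filter, Set.mem_ofPred_eq] at hR hR'
      rw [← key R hR.1, ← key R' hR'.1]
      exact congrArg (fun T => (Finset.erase T x).erase (x+d)) h
  set G := ((((A.erase x).erase (x+d)).powersetCard (k+1)).filter
    (fun R => (x + ∑ y ∈ R, y ∣ W ∧ x + d + ∑ y ∈ R, y ∣ W))).card
  set X := (A.card - 2).choose (k+1)
  have h6 : 4 * G ≤ X := by
    refine Nat.le_of_mul_le_mul_right (c := A.card - 2 - k) ?_ (by omega)
    calc 4 * G * (A.card - 2 - k) = 4 * (G * (A.card - 2 - k)) := by ring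
      _ ≤ 4 * (D * X) := Nat.mul_le_mul_left _ h1
      _ = (4 * D) * X := by ring
      _ ≤ (A.card - 2 - k) * X := Nat.mul_le_mul_right _ hk
      _ = _ := by ring
  omega

lemma case_pairs (A : Finset ℕ) (W : ℕ) (hW : 0 < W) (hpos : ∀ a ∈ A, 0 < a) (k : ℕ)
    (hk : 12 * (k + 2) ≤ A.card) (x d y e D : ℕ) (hx : x ∈ A) (hx' : x + d ∈ A)
    (hy : y ∈ A) (hy' : y + e ∈ A) (hd : 0 < d) (he : 0 < e)
    (n1 : x ≠ y) (n2 : x ≠ y + e) (n3 : x + d ≠ y) (n4 : x + d ≠ y + e)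
    (hD : d * W ≤ D * x ^ 2) (hE : e * W ≤ D * y ^ 2) (hkD : 4 * D ≤ A.card - 2 - k) :
    ((A.powersetCard (k+2)).filter (fun B => ∑ y ∈ B, y ∣ W)).card ≤ (A.card - 1).choose (k+2) := by
  have k1 := pair_bad A W hW x d D hx hx' (hpos x hx) hd hD k hkD (by omega)
  have k2 := pair_bad A W hW y e D hy hy' (hpos y hy) he hE k hkD (by omega)
  set P := (A.powersetCard (k+2)).filter (fun B => (x ∈ B ∨ x + d ∈ B) ∧ ¬ (∑ y ∈ B, y ∣ W))
  set Q := (A.powersetCard (k+2)).filter (fun B => (y ∈ B ∨ y + e ∈ B) ∧ ¬ (∑ y ∈ B, y ∣ W))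
  have hPQ : (P ∩ Q).card ≤ 4 * (A.card - 2).choose k := by
    have s1 := star_two A x y hx hy n1 k
    have s2 := star_two A x (y+e) hx hy' n2 k
    have s3 := star_two A (x+d) y hx' hy n3 k
    have s4 := star_two A (x+d) (y+e) hx' hy' n4 k
    set S1 := (A.powersetCard (k+2)).filter (fun B => x ∈ B ∧ y ∈ B)
    set S2 := (A.powersetCard (k+2)).filter (fun B => x ∈ B ∧ y+e ∈ B)
    set S3 := (A.powersetCard (k+2)).filter (fun B => x+d ∈ B ∧ y ∈ B)
    set S4 := (A.powersetCard (k+2)).filter (fun B => x+d ∈ B ∧ y+e ∈ B)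
    have hsub : P ∩ Q ⊆ (S1 ∪ S2) ∪ (S3 ∪ S4) := by
      intro B hB
      simp only [P, Q, S1, S2, S3, S4, Finset.mem_inter, Finset.mem_union, Finset.mem_filter] at hB ⊢
      tauto
    have c1 := Finset.card_le_card hsub
    have c2 := Finset.card_union_le (S1 ∪ S2) (S3 ∪ S4)
    have c3 := Finset.card_union_le S1 S2
    have c4 := Finset.card_union_le S3 S4
    omega
  have hu := Finset.card_union_add_card_inter P Q
  have h8 := Nat.choose_succ_right_eq (A.card - 2) k
  have h9 : 10 * (A.card - 2).choose k ≤ (A.card - 2).choose (k+1) := by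
    refine Nat.le_of_mul_le_mul_right (c := k + 1) ?_ (by omega)
    rw [h8]
    calc 10 * (A.card - 2).choose k * (k + 1) = (A.card - 2).choose k * (10 * (k+1)) := by ring
      _ ≤ _ := Nat.mul_le_mul_left _ (by omega)
  have h10 := Nat.choose_succ_succ (A.card - 2) k
  rw [show (A.card - 2).succ = A.card - 1 by omega] at h10
  simp only [Nat.succ_eq_add_one] at h10
  apply finish_bad A W k (by omega) (P ∪ Q)
  · intro B hB
    simp only [P, Q, Finset.mem_union, Finset.mem_filter] at hB
    tauto
  · omega

lemma gap_bound (n q L W d x : ℕ) (hn : 0 < n) (h1 : n ≤ 16 * q * L) (h2 : L ≤ 2 * (L - 3))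
    (h3 : n * (d * (L - 3)) ≤ 8 * W) (h4 : W ≤ 2 * q * n * x) :
    d * W ≤ 1024 * q ^ 3 * x ^ 2 := by
  have a1 : n * d * L ≤ 16 * W := by
    calc n * d * L ≤ n * d * (2 * (L - 3)) := Nat.mul_le_mul_left _ h2
      _ = 2 * (n * (d * (L - 3))) := by ring
      _ ≤ 2 * (8 * W) := Nat.mul_le_mul_left _ h3
      _ = _ := by ring
  have a2 : n ^ 2 * d ≤ 256 * q * W := by
    calc n ^ 2 * d = n * d * n := by ring
      _ ≤ n * d * (16 * q * L) := Nat.mul_le_mul_left _ h1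
      _ = 16 * q * (n * d * L) := by ring
      _ ≤ 16 * q * (16 * W) := Nat.mul_le_mul_left _ a1
      _ = _ := by ring
  refine Nat.le_of_mul_le_mul_left (c := n ^ 2) ?_ (by positivity)
  calc n ^ 2 * (d * W) = n ^ 2 * d * W := by ring
    _ ≤ 256 * q * W * W := Nat.mul_le_mul_right _ a2
    _ = 256 * q * (W * W) := by ring
    _ ≤ 256 * q * ((2 * q * n * x) * (2 * q * n * x)) :=
        Nat.mul_le_mul_left _ (Nat.mul_le_mul h4 h4)
    _ = _ := by ring

lemma regime_small (s : ℕ) (hs : 1 ≤ s) (A : Finset ℕ) (hpos : ∀ a ∈ A, 0 < a) (k : ℕ)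
    (hk : 12 * (k + 2) ≤ A.card)
    (hmax : ∀ a ∈ A, a * (s + 1) ≤ s * ∑ x ∈ A, x)
    (hn : 10000 * (s * (s + 1)) ^ 3 ≤ A.card) :
    ((A.powersetCard (k+2)).filter (fun B => ∑ y ∈ B, y ∣ s * ∑ x ∈ A, x)).card
      ≤ (A.card - 1).choose (k+2) := by
  set S := ∑ x ∈ A, x with hS
  set n := A.card with hnn
  set q := s * (s + 1) with hq
  have hq1 : 1 ≤ q := Nat.mul_pos hs (by omega)
  have hq3 : q ≤ q ^ 3 := Nat.le_self_pow (by norm_num) q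
  have hAne : A.Nonempty := Finset.card_pos.1 (by omega)
  have hS0 : 0 < S := Finset.sum_pos hpos hAne
  have hW : 0 < s * S := Nat.mul_pos hs hS0
  set W := s * S with hWd
  set Big := A.filter (fun x => 8 * (W / x) ≤ n) with hBig
  by_cases hB : 1 < Big.card
  · obtain ⟨x, hx, y, hy, hxy⟩ := Finset.one_lt_card.1 hB
    simp only [hBig, Finset.mem_filter] at hx hy
    exact case_two_big A W hW hpos k hk x y hx.1 hy.1 hxy hx.2 hy.2
  · set T := A.filter (fun x => ¬ (8 * (W / x) ≤ n)) with hT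
    have hsum : ∑ x ∈ Big, x + ∑ x ∈ T, x = S := Finset.sum_filter_add_sum_filter_not A _ _
    have hBs : (∑ x ∈ Big, x) * (s + 1) ≤ W := by
      rcases Nat.lt_or_ge 0 Big.card with h | h
      · obtain ⟨a, ha⟩ := Finset.card_eq_one.1 (show Big.card = 1 by omega)
        rw [ha, Finset.sum_singleton]
        apply hmax
        have : a ∈ Big := by rw [ha]; simp
        exact (Finset.mem_filter.1 this).1
      · rw [Finset.card_eq_zero.1 (show Big.card = 0 by omega)]; simp
    have hTs : W ≤ q * ∑ x ∈ T, x := by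
      have : S ≤ (s + 1) * ∑ x ∈ T, x := by nlinarith
      calc W = s * S := rfl
        _ ≤ s * ((s + 1) * ∑ x ∈ T, x) := Nat.mul_le_mul_left _ this
        _ = _ := by rw [hq]; ring
    set Y := T.filter (fun x => W ≤ 2 * q * n * x) with hY
    set Z := T.filter (fun x => ¬ (W ≤ 2 * q * n * x)) with hZ
    have hsum2 : ∑ x ∈ Y, x + ∑ x ∈ Z, x = ∑ x ∈ T, x := Finset.sum_filter_add_sum_filter_not T _ _
    have hZs : 2 * q * ∑ x ∈ Z, x ≤ W := by
      refine Nat.le_of_mul_le_mul_left (c := n) ?_ (by omega)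
      have h1 : ∑ x ∈ Z, (2 * q * n * x) ≤ Z.card • W :=
        Finset.sum_le_card_nsmul _ _ _ (fun x hx => by
          have := (Finset.mem_filter.1 hx).2; omega)
      rw [← Finset.mul_sum, smul_eq_mul] at h1
      have h2 : Z.card ≤ n := Finset.card_le_card
        ((Finset.filter_subset _ _).trans (Finset.filter_subset _ _))
      calc n * (2 * q * ∑ x ∈ Z, x) = 2 * q * n * ∑ x ∈ Z, x := by ring
        _ ≤ Z.card * W := h1
        _ ≤ n * W := Nat.mul_le_mul_right _ h2
    have hYs : W ≤ 2 * q * ∑ x ∈ Y, x := by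
      rw [← hsum2] at hTs
      nlinarith
    have hYA : ∀ x ∈ Y, x ∈ A := fun x hx => (Finset.mem_filter.1 (Finset.mem_filter.1 hx).1).1
    have hYu : ∀ x ∈ Y, n * x ≤ 8 * W := by
      intro x hx
      have h1 := (Finset.mem_filter.1 (Finset.mem_filter.1 hx).1).2
      have h2 := Nat.div_mul_le_self W x
      push Not at h1
      calc n * x ≤ 8 * (W / x) * x := Nat.mul_le_mul_right _ h1.le
        _ = 8 * (W / x * x) := by ring
        _ ≤ _ := Nat.mul_le_mul_left _ h2
    have hYl : ∀ x ∈ Y, W ≤ 2 * q * n * x := fun x hx => (Finset.mem_filter.1 hx).2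
    have hYc : n ≤ 16 * q * Y.card := by
      have h1 : ∑ x ∈ Y, (n * x) ≤ Y.card • (8 * W) := Finset.sum_le_card_nsmul _ _ _ hYu
      rw [← Finset.mul_sum, smul_eq_mul] at h1
      refine Nat.le_of_mul_le_mul_right (c := W) ?_ hW
      calc n * W ≤ n * (2 * q * ∑ x ∈ Y, x) := Nat.mul_le_mul_left _ hYs
        _ = 2 * q * (n * ∑ x ∈ Y, x) := by ring
        _ ≤ 2 * q * (Y.card * (8 * W)) := Nat.mul_le_mul_left _ h1
        _ = _ := by ring
    have hY6 : 6 ≤ Y.card := by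
      by_contra h
      push Not at h
      have : 16 * q * Y.card ≤ 16 * q * 5 := Nat.mul_le_mul_left _ (by omega)
      omega
    have hn0 : 0 < n := by omega
    have hYH : ∀ y ∈ Y, y ≤ 8 * W / n := fun y hy => by
      rw [Nat.le_div_iff_mul_le hn0, mul_comm]; exact hYu y hy
    obtain ⟨x, hx, x', hx', hlt, hg⟩ := close Y (8 * W / n) hYH (by omega)
    set Y' := (Y.erase x).erase x' with hY'
    have hY'c : Y'.card = Y.card - 2 := by
      rw [hY', Finset.card_erase_of_mem (by simp [hx']; omega), Finset.card_erase_of_mem hx]; omega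
    have hY'm : ∀ y ∈ Y', y ∈ Y ∧ y ≠ x ∧ y ≠ x' := by
      intro y hy
      simp only [hY', Finset.mem_erase] at hy
      tauto
    obtain ⟨y, hy, y', hy', hlt', hg'⟩ := close Y' (8 * W / n) (fun y hy => hYH y (hY'm y hy).1) (by omega)
    obtain ⟨d, rfl⟩ := Nat.exists_eq_add_of_lt hlt
    obtain ⟨e, rfl⟩ := Nat.exists_eq_add_of_lt hlt'
    obtain ⟨a1, a2, a3⟩ := hY'm _ hy
    obtain ⟨b1, b2, b3⟩ := hY'm _ hy'
    have gb : ∀ d x, x ∈ Y → d * (Y.card - 3) ≤ 8 * W / n → d * W ≤ 1024 * q ^ 3 * x ^ 2 := by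
      intro d x hx h
      apply gap_bound n q Y.card W d x hn0 hYc (by omega) _ (hYl x hx)
      calc n * (d * (Y.card - 3)) ≤ n * (8 * W / n) := Nat.mul_le_mul_left _ h
        _ ≤ _ := Nat.mul_div_le _ _
    refine case_pairs A W hW hpos k hk x (d+1) y (e+1) (1024 * q ^ 3) (hYA _ hx) (hYA _ hx')
      (hYA _ a1) (hYA _ b1) (by omega) (by omega) a2.symm b2.symm a3.symm b3.symm ?_ ?_ (by omega)
    · apply gb _ _ hx
      refine le_trans (Nat.mul_le_mul ?_ ?_) hg <;> omega
    · apply gb _ _ a1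
      refine le_trans (Nat.mul_le_mul ?_ ?_) hg' <;> omega

lemma dcount (A : Finset ℕ) (F : Finset (Finset ℕ)) (hF : ∀ C ∈ F, C ⊆ A) :
    ∑ C ∈ F, ∑ x ∈ C, x = ∑ x ∈ A, x * (F.filter (fun C => x ∈ C)).card := by
  have h1 : ∀ C ∈ F, ∑ x ∈ C, x = ∑ x ∈ A, if x ∈ C then x else 0 := by
    intro C hC
    rw [← Finset.sum_filter]
    congr 1
    ext a
    simp only [Finset.mem_filter]
    exact ⟨fun h => ⟨hF C hC h, h⟩, fun h => h.2⟩
  rw [Finset.sum_congr rfl h1, Finset.sum_comm]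
  refine Finset.sum_congr rfl (fun x _ => ?_)
  rw [← Finset.sum_filter, Finset.sum_const, smul_eq_mul, mul_comm]

lemma value_bound (A : Finset ℕ) (s t v : ℕ) (hS : 0 < ∑ x ∈ A, x)
    (hv : ∑ x ∈ A, x ≤ v * (s + 1)) :
    ((A.powersetCard (t+2)).filter (fun C => ∑ y ∈ C, y = v)).card * (A.card - 1 - t)
      ≤ (s + 1) * (A.card - 1).choose (t+1) := by
  set F := (A.powersetCard (t+2)).filter (fun C => ∑ y ∈ C, y = v) with hF
  have h1 := dcount A F (fun C hC => (Finset.mem_powersetCard.1 (Finset.mem_filter.1 hC).1).1)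
  have h2 : ∑ C ∈ F, ∑ x ∈ C, x = F.card * v := by
    rw [Finset.sum_congr rfl (fun C hC => (Finset.mem_filter.1 hC).2), Finset.sum_const, smul_eq_mul]
  have h3 : (F.card * v) * (A.card - 1 - t) ≤ (∑ x ∈ A, x) * (A.card - 1).choose (t+1) := by
    rw [← h2, h1, Finset.sum_mul, Finset.sum_mul]
    apply Finset.sum_le_sum
    intro x hx
    rw [mul_assoc]
    apply Nat.mul_le_mul_left
    have := star_fixed A x hx t v
    refine le_trans (Nat.mul_le_mul_right _ (Finset.card_le_card ?_)) this
    intro C hC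
    simp only [hF, Finset.mem_filter] at hC ⊢
    tauto
  set S := ∑ x ∈ A, x
  set c := A.card - 1 - t
  set P := (A.card - 1).choose (t+1)
  refine Nat.le_of_mul_le_mul_left (c := S) ?_ hS
  calc S * (F.card * c) ≤ (v * (s + 1)) * (F.card * c) := Nat.mul_le_mul_right _ hv
    _ = (s + 1) * (F.card * v * c) := by ring
    _ ≤ (s + 1) * (S * P) := Nat.mul_le_mul_left _ h3
    _ = _ := by ring

lemma sum_all (A : Finset ℕ) (t : ℕ) :
    ∑ C ∈ A.powersetCard (t+1), ∑ x ∈ C, x = (∑ x ∈ A, x) * (A.card - 1).choose t := by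
  rw [dcount A _ (fun C hC => (Finset.mem_powersetCard.1 hC).1), Finset.sum_mul]
  exact Finset.sum_congr rfl (fun x hx => by rw [star_all A x hx t])

lemma heavy_bound (A : Finset ℕ) (s t : ℕ) (hS : 0 < ∑ x ∈ A, x)
    (hmax : ∀ a ∈ A, a * (s + 1) ≤ s * ∑ x ∈ A, x) :
    9801 * ((A.powersetCard (t+2)).filter (fun C => 100 * (s + 1) * ∑ x ∈ A, x ≤
      100 * (s + 1) * ∑ y ∈ C, y + ∑ x ∈ A, x)).card ≤ 10000 * (A.card - 2).choose t := by
  set S := ∑ x ∈ A, x with hSd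
  have hx : ∀ x ∈ A, 99 * ((A.powersetCard (t+2)).filter (fun C => x ∈ C ∧ 100 * (s + 1) * S ≤
      100 * (s + 1) * ∑ y ∈ C, y + S)).card ≤ 100 * (A.card - 2).choose t := by
    intro x hx
    rw [star A x hx (t+1)]
    have hsa := sum_all (A.erase x) t
    rw [Finset.card_erase_of_mem hx, show A.card - 1 - 1 = A.card - 2 by omega] at hsa
    have hse : x + ∑ y ∈ A.erase x, y = S := Finset.add_sum_erase A (fun y => y) hx
    set S' := ∑ y ∈ A.erase x, y
    have hm := hmax x hx
    have hS' : S ≤ (s + 1) * S' := by nlinarith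
    have hS'0 : 0 < S' := by
      rcases Nat.eq_zero_or_pos S' with h | h
      · rw [h] at hS'; omega
      · exact h
    set F := ((A.erase x).powersetCard (t+1)).filter (fun R => 100 * (s + 1) * S ≤
      100 * (s + 1) * ∑ y ∈ insert x R, y + S) with hF
    have h1 : F.card • (99 * S') ≤ ∑ R ∈ F, 100 * ∑ y ∈ R, y := by
      apply Finset.card_nsmul_le_sum
      intro R hR
      simp only [hF, Finset.mem_filter, Finset.mem_powersetCard] at hR
      have hxR : x ∉ R := fun h => by simpa using hR.1.1 h
      have h2 := hR.2
      rw [Finset.sum_insert hxR, ← hse] at h2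
      rw [← hse] at hS'
      refine Nat.le_of_mul_le_mul_left (c := s + 1) ?_ (Nat.succ_pos s)
      nlinarith
    have h2 : ∑ R ∈ F, 100 * ∑ y ∈ R, y ≤ 100 * (S' * (A.card - 2).choose t) := by
      rw [← hsa, ← Finset.mul_sum]
      exact Nat.mul_le_mul_left _ (Finset.sum_le_sum_of_subset (Finset.filter_subset _ _))
    rw [smul_eq_mul] at h1
    refine Nat.le_of_mul_le_mul_left (c := S') ?_ hS'0
    calc S' * (99 * F.card) = F.card * (99 * S') := by ring
      _ ≤ _ := h1.trans h2
      _ = _ := by ring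
  set F := (A.powersetCard (t+2)).filter (fun C => 100 * (s + 1) * S ≤
      100 * (s + 1) * ∑ y ∈ C, y + S) with hF
  have h1 := dcount A F (fun C hC => (Finset.mem_powersetCard.1 (Finset.mem_filter.1 hC).1).1)
  have h2 : F.card • (99 * S) ≤ ∑ C ∈ F, 100 * ∑ y ∈ C, y := by
    apply Finset.card_nsmul_le_sum
    intro C hC
    have := (Finset.mem_filter.1 hC).2
    refine Nat.le_of_mul_le_mul_left (c := s + 1) ?_ (Nat.succ_pos s)
    nlinarith
  rw [← Finset.mul_sum, h1, smul_eq_mul] at h2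
  have h3 : 99 * ∑ x ∈ A, x * (F.filter (fun C => x ∈ C)).card ≤ S * (100 * (A.card - 2).choose t) := by
    rw [hSd, Finset.sum_mul, Finset.mul_sum]
    apply Finset.sum_le_sum
    intro x hxA
    have h4 := hx x hxA
    have h5 : F.filter (fun C => x ∈ C) = (A.powersetCard (t+2)).filter (fun C => x ∈ C ∧
        100 * (s + 1) * S ≤ 100 * (s + 1) * ∑ y ∈ C, y + S) := by
      ext C
      simp only [hF, Finset.mem_filter]
      tauto
    rw [h5]
    calc _ = x * (99 * _) := by ring
      _ ≤ _ := Nat.mul_le_mul_left _ h4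
  refine Nat.le_of_mul_le_mul_left (c := S) ?_ hS
  calc S * (9801 * F.card) = 99 * (F.card * (99 * S)) := by ring
    _ ≤ 99 * (100 * ∑ x ∈ A, x * (F.filter (fun C => x ∈ C)).card) := Nat.mul_le_mul_left _ h2
    _ = 100 * (99 * ∑ x ∈ A, x * (F.filter (fun C => x ∈ C)).card) := by ring
    _ ≤ 100 * (S * (100 * (A.card - 2).choose t)) := Nat.mul_le_mul_left _ h3
    _ = _ := by ring

lemma light_bound (A : Finset ℕ) (s t : ℕ) (hs : 1 ≤ s) (hpos : ∀ a ∈ A, 0 < a)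
    (hS : 0 < ∑ x ∈ A, x) (M : ℕ) (hlt : t + 2 < A.card) :
    ((A.powersetCard (t+2)).filter (fun C => (∑ x ∈ A, x - ∑ y ∈ C, y) ∣ s * ∑ x ∈ A, x ∧
      s * ∑ x ∈ A, x ≤ M * (∑ x ∈ A, x - ∑ y ∈ C, y))).card * (A.card - 1 - t)
      ≤ M * ((s + 1) * (A.card - 1).choose (t+1)) := by
  set S := ∑ x ∈ A, x with hSd
  have hC : ∀ C ∈ A.powersetCard (t+2), 0 < ∑ y ∈ C, y ∧ ∑ y ∈ C, y < S := by
    intro C hC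
    rw [Finset.mem_powersetCard] at hC
    have hne : C.Nonempty := Finset.card_pos.1 (by omega)
    refine ⟨Finset.sum_pos (fun a ha => hpos a (hC.1 ha)) hne, ?_⟩
    obtain ⟨a, haA, haC⟩ := Finset.exists_mem_notMem_of_card_lt_card (show C.card < A.card by omega)
    exact Finset.sum_lt_sum_of_subset hC.1 haA haC (hpos a haA) (by simp)
  have := fib ((A.powersetCard (t+2)).filter (fun C => (S - ∑ y ∈ C, y) ∣ s * S ∧
      s * S ≤ M * (S - ∑ y ∈ C, y))) (Finset.Icc 1 M) (fun C => s * S / (S - ∑ y ∈ C, y))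
      (A.card - 1 - t) ((s + 1) * (A.card - 1).choose (t+1)) ?_ ?_
  · simpa using this
  · intro C hCm
    simp only [Finset.mem_filter] at hCm
    obtain ⟨h1, h2, h3⟩ := hCm
    obtain ⟨h4, h5⟩ := hC C h1
    have h6 : 0 < S - ∑ y ∈ C, y := by omega
    simp only [Finset.mem_Icc]
    refine ⟨Nat.div_pos (Nat.le_of_dvd (Nat.mul_pos hs hS) h2) h6, ?_⟩
    apply Nat.div_le_of_le_mul
    exact h3.trans (mul_comm _ _).le
  · intro m hm
    by_cases hne : (((A.powersetCard (t+2)).filter (fun C => (S - ∑ y ∈ C, y) ∣ s * S ∧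
      s * S ≤ M * (S - ∑ y ∈ C, y))).filter (fun C => s * S / (S - ∑ y ∈ C, y) = m)).Nonempty
    · obtain ⟨C0, hC0⟩ := hne
      simp only [Finset.mem_filter] at hC0
      obtain ⟨⟨h1, h2, h3⟩, h4⟩ := hC0
      obtain ⟨h5, h6⟩ := hC C0 h1
      have hWpos : s * S ≠ 0 := (Nat.mul_pos hs hS).ne'
      have hv : S ≤ (∑ y ∈ C0, y) * (s + 1) := by
        obtain ⟨u, hu⟩ := Nat.exists_eq_add_of_lt h6
        have e1 : S - ∑ y ∈ C0, y = u + 1 := by omega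
        rw [e1] at h2
        obtain ⟨c, hc⟩ := h2
        have hsc : s + 1 ≤ c := by
          by_contra h
          have : c ≤ s := by omega
          have h7 : (u + 1) * c ≤ (u + 1) * s := Nat.mul_le_mul_left _ this
          have h8 : (u + 1) * s < S * s := Nat.mul_lt_mul_of_pos_right (by omega) hs
          rw [mul_comm s S] at hc
          omega
        have h7 : (u + 1) * (s + 1) ≤ s * S := by
          rw [hc]; exact Nat.mul_le_mul_left _ hsc
        have h8 : S = ∑ y ∈ C0, y + (u + 1) := by omega
        nlinarith
      refine le_trans (Nat.mul_le_mul_right _ (Finset.card_le_card ?_))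
        (value_bound A s t (∑ y ∈ C0, y) hS hv)
      intro C hCm
      simp only [Finset.mem_filter] at hCm ⊢
      refine ⟨hCm.1.1, ?_⟩
      have h7 := (hC C hCm.1.1).2
      have e1 := Nat.div_div_self h2 hWpos
      have e2 := Nat.div_div_self hCm.1.2.1 hWpos
      rw [h4] at e1
      rw [hCm.2] at e2
      omega
    · rw [Finset.not_nonempty_iff_eq_empty] at hne
      rw [hne]; simp

lemma regime_large (s : ℕ) (hs : 1 ≤ s) (A : Finset ℕ) (hpos : ∀ a ∈ A, 0 < a) (k t : ℕ)
    (hkt : A.card = k + t + 2) (hk : A.card < 12 * k)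
    (hmax : ∀ a ∈ A, a * (s + 1) ≤ s * ∑ x ∈ A, x)
    (hn : 24000 * (s * (s + 1) * (s + 1)) ≤ A.card) :
    ((A.powersetCard k).filter (fun B => ∑ y ∈ B, y ∣ s * ∑ x ∈ A, x)).card
      ≤ (A.card - 1).choose k := by
  have hAne : A.Nonempty := Finset.card_pos.1 (by omega)
  have hS : 0 < ∑ x ∈ A, x := Finset.sum_pos hpos hAne
  have hH := heavy_bound A s t hS hmax
  have hL := light_bound A s t hs hpos hS (100 * (s * (s + 1))) (by omega)
  set S := ∑ x ∈ A, x with hSd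
  set Hv := (A.powersetCard (t+2)).filter (fun C => 100 * (s + 1) * S ≤
      100 * (s + 1) * ∑ y ∈ C, y + S)
  set Lt := (A.powersetCard (t+2)).filter (fun C => (S - ∑ y ∈ C, y) ∣ s * S ∧
      s * S ≤ 100 * (s * (s + 1)) * (S - ∑ y ∈ C, y))
  have hle : ((A.powersetCard k).filter (fun B => ∑ y ∈ B, y ∣ s * S)).card ≤ (Hv ∪ Lt).card := by
    apply Finset.card_le_card_of_injOn (fun B => A \ B)
    · intro B hB
      simp only [Finset.coe_filter, Set.mem_ofPred_eq, Finset.mem_powersetCard] at hB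
      have e1 : ∑ y ∈ A \ B, y + ∑ y ∈ B, y = S := Finset.sum_sdiff hB.1.1
      have e2 : S - ∑ y ∈ A \ B, y = ∑ y ∈ B, y := by omega
      have e3 : A \ B ∈ A.powersetCard (t+2) := by
        rw [Finset.mem_powersetCard]
        refine ⟨Finset.sdiff_subset, ?_⟩
        rw [Finset.card_sdiff_of_subset hB.1.1]; omega
      simp only [Finset.mem_coe, Finset.mem_union, Hv, Lt, Finset.mem_filter, e2]
      by_cases h : s * S ≤ 100 * (s * (s + 1)) * ∑ y ∈ B, y
      · exact Or.inr ⟨e3, hB.2, h⟩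
      · left
        refine ⟨e3, ?_⟩
        push Not at h
        refine Nat.le_of_mul_le_mul_left (c := s) ?_ hs
        have e4 : s * (100 * (s + 1) * S) = 100 * (s * (s + 1)) * ∑ y ∈ B, y
            + s * (100 * (s + 1) * ∑ y ∈ A \ B, y) := by rw [← e1]; ring
        rw [e4]
        nlinarith
    · intro B hB B' hB' h
      simp only [Finset.coe_filter, Set.mem_ofPred_eq, Finset.mem_powersetCard] at hB hB'
      have h' : A \ B = A \ B' := h
      rw [← Finset.sdiff_sdiff_eq_self hB.1.1, h', Finset.sdiff_sdiff_eq_self hB'.1.1]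
  have hu := Finset.card_union_le Hv Lt
  have hP : (A.card - 1).choose k = (A.card - 1).choose (t+1) := by
    apply Nat.choose_symm_of_eq_add; omega
  rw [hP]
  have h8 := Nat.add_one_mul_choose_eq (A.card - 2) t
  rw [show A.card - 2 + 1 = A.card - 1 by omega] at h8
  set P := (A.card - 1).choose (t+1)
  set P2 := (A.card - 2).choose t
  have hP2 : 12 * P2 ≤ 11 * P := by
    refine Nat.le_of_mul_le_mul_left (c := A.card - 1) ?_ (by omega)
    calc (A.card - 1) * (12 * P2) = 12 * ((A.card - 1) * P2) := by ring
      _ = P * (12 * (t + 1)) := by rw [h8]; ring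
      _ ≤ P * (11 * (A.card - 1)) := Nat.mul_le_mul_left _ (by omega)
      _ = _ := by ring
  have hLt : 20 * Lt.card ≤ P := by
    refine Nat.le_of_mul_le_mul_right (c := A.card - 1 - t) ?_ (by omega)
    calc 20 * Lt.card * (A.card - 1 - t) = 20 * (Lt.card * (A.card - 1 - t)) := by ring
      _ ≤ 20 * (100 * (s * (s + 1)) * ((s + 1) * P)) := Nat.mul_le_mul_left _ hL
      _ = P * (2000 * (s * (s + 1) * (s + 1))) := by ring
      _ ≤ P * (A.card - 1 - t) := Nat.mul_le_mul_left _ (by omega)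
  omega

lemma case_huge (s : ℕ) (hs : 1 ≤ s) (A : Finset ℕ) (hpos : ∀ a ∈ A, 0 < a) (k : ℕ)
    (hk : k + 2 < A.card) (a : ℕ) (ha : a ∈ A) (hbig : s * ∑ x ∈ A, x < a * (s + 1)) :
    ((A.powersetCard (k+2)).filter (fun B => ∑ y ∈ B, y ∣ s * ∑ x ∈ A, x)).card
      ≤ (A.card - 1).choose (k+2) := by
  apply finish_bad A _ k (by omega) ((A.powersetCard (k+2)).filter (fun B => a ∈ B))
  · intro B hB
    rw [Finset.mem_filter] at hB
    refine ⟨hB.1, ?_⟩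
    rintro ⟨c, hc⟩
    obtain ⟨hB1, hB2⟩ := Finset.mem_powersetCard.1 hB.1
    have h1 : a ≤ ∑ y ∈ B, y := Finset.single_le_sum (f := fun y => y) (by simp) hB.2
    obtain ⟨b, hbA, hbB⟩ := Finset.exists_mem_notMem_of_card_lt_card (show B.card < A.card by omega)
    have h2 : ∑ y ∈ B, y < ∑ y ∈ A, y :=
      Finset.sum_lt_sum_of_subset hB1 hbA hbB (hpos b hbA) (by simp)
    rcases Nat.lt_or_ge c (s + 1) with h | h
    · have : c ≤ s := by omega
      nlinarith
    · nlinarith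
  · exact (star_all A a ha (k+1)).ge

lemma upper (s : ℕ) (hs : 1 ≤ s) (A : Finset ℕ) (hpos : ∀ a ∈ A, 0 < a) (k : ℕ)
    (hk : 1 < k) (hk' : k + 1 < A.card) (hn : 24000 * (s * (s + 1)) ^ 3 ≤ A.card) :
    ((A.powersetCard k).filter (fun B => ∑ y ∈ B, y ∣ s * ∑ x ∈ A, x)).card
      ≤ (A.card - 1).choose k := by
  obtain ⟨k, rfl⟩ := Nat.exists_eq_add_of_le' hk
  by_cases hmax : ∀ a ∈ A, a * (s + 1) ≤ s * ∑ x ∈ A, x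
  · by_cases h12 : 12 * (k + 2) ≤ A.card
    · exact regime_small s hs A hpos k h12 hmax (by omega)
    · obtain ⟨t, ht⟩ := Nat.exists_eq_add_of_le (show k + 2 + 2 ≤ A.card by omega)
      refine regime_large s hs A hpos (k+2) t (by omega) (by omega) hmax ?_
      have : s * (s + 1) * (s + 1) ≤ (s * (s + 1)) ^ 3 := by
        calc s * (s + 1) * (s + 1) ≤ s * (s + 1) * (s * (s + 1)) :=
              Nat.mul_le_mul_left _ (Nat.le_mul_of_pos_left _ hs)
          _ = (s * (s + 1)) ^ 2 := by ring
          _ ≤ _ := Nat.pow_le_pow_right (Nat.mul_pos hs (by omega)) (by norm_num)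
      omega
  · push Not at hmax
    obtain ⟨a, ha, hb⟩ := hmax
    exact case_huge s hs A hpos k (by omega) a ha hb

lemma lower (s k n : ℕ) (hk : 1 < k) (hn : k + 1 < n) :
    ∃ A : Finset ℕ, (∀ a ∈ A, 0 < a) ∧ A.card = n ∧ (n - 1).choose k ≤
      ((A.powersetCard k).filter (fun B => ∑ y ∈ B, y ∣ s * ∑ x ∈ A, x)).card := by
  set A0 := Finset.Icc 1 (n - 1) with hA0
  set σ := ∑ x ∈ A0, x with hσ
  set f := (σ + n).factorial with hf
  have hf1 : σ + n ≤ f := Nat.self_le_factorial _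
  have hnot : f - σ ∉ A0 := by
    simp only [hA0, Finset.mem_Icc]; omega
  refine ⟨insert (f - σ) A0, ?_, ?_, ?_⟩
  · intro a ha
    simp only [hA0, Finset.mem_insert, Finset.mem_Icc] at ha
    omega
  · rw [Finset.card_insert_of_notMem hnot]; simp [hA0]; omega
  · have hc : (n - 1).choose k = (A0.powersetCard k).card := by
      rw [Finset.card_powersetCard]; simp [hA0]
    rw [hc]
    apply Finset.card_le_card
    intro B hB
    rw [Finset.mem_powersetCard] at hB
    rw [Finset.mem_filter, Finset.mem_powersetCard]
    refine ⟨⟨hB.1.trans (Finset.subset_insert _ _), hB.2⟩, ?_⟩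
    rw [Finset.sum_insert hnot, show f - σ + ∑ x ∈ A0, x = f by omega]
    apply Dvd.dvd.mul_left
    apply Nat.dvd_factorial
    · apply Finset.sum_pos
      · intro a ha
        have := hB.1 ha
        simp only [hA0, Finset.mem_Icc] at this
        omega
      · exact Finset.card_pos.1 (by omega)
    · have : ∑ y ∈ B, y ≤ σ := Finset.sum_le_sum_of_subset hB.1
      omega

/-- **Corollary 5.** Fix `s ≥ 1`. Then `d^s(k, n) = C(n-1, k)` for all but finitely many
pairs `(k, n)` with `1 < k < n - 1`. -/
theorem zbarsky_general_case_corollary (s : ℕ) (hs : 1 ≤ s) :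
    {p : ℕ × ℕ | 1 < p.1 ∧ p.1 + 1 < p.2 ∧
      dsn s p.1 p.2 ≠ (p.2 - 1).choose p.1}.Finite := by
  apply Set.Finite.subset (Set.finite_Iic
    ((24000 * (s * (s + 1)) ^ 3, 24000 * (s * (s + 1)) ^ 3) : ℕ × ℕ))
  rintro ⟨k, n⟩ ⟨h1, h2, h3⟩
  simp only at h1 h2 h3
  by_cases hn : 24000 * (s * (s + 1)) ^ 3 ≤ n
  · exfalso
    apply h3
    have hub : ∀ t ∈ {t : ℕ | ∃ A : Finset ℕ, (∀ a ∈ A, 0 < a) ∧ A.card = n ∧ dsk s k A = t},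
        t ≤ (n - 1).choose k := by
      rintro t ⟨A, hA, hc, rfl⟩
      have := upper s hs A hA k h1 (by omega) (by omega)
      rw [hc] at this
      exact this
    obtain ⟨A, hA, hc, hl⟩ := lower s k n h1 h2
    apply le_antisymm
    · exact csSup_le ⟨_, A, hA, hc, rfl⟩ hub
    · exact le_trans hl (le_csSup ⟨_, hub⟩ ⟨A, hA, hc, rfl⟩)
  · simp only [Set.mem_Iic, Prod.mk_le_mk]
    omega
end
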